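/- arXiv:math/9905083 — 3 statements merged into one kernel-verified Lean document; each statement's English description precedes it below -/
import Mathlib

section
/- For all nonnegative integers n and l, f^{UU}_{n,2l} = Σ_{m=0}^{n} (binom(n,m))² · f_{m,l} · f_{n−m,l}; that is, the number of permutations π of {1,…,2n} with π = ι∘π∘ι and longest increasing subsequence of length at most 2l equals the sum over m of the square of the binomial coefficient n choose m times the number of permutations of {1,…,m} with longest increasing subsequence at most l times the number of permutations of {1,…,n−m} with longest increasing subsequence at most l. -/
noncomputable section

/-- `lisLE π l` means the longest increasing subsequence of the permutation `π`
has length at most `l`. -/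
def lisLE {N : ℕ} (π : Equiv.Perm (Fin N)) (l : ℕ) : Prop :=
  ∀ (k : ℕ) (f : Fin k → Fin N), StrictMono f → StrictMono (fun i => π (f i)) → k ≤ l

/-- `f_{n,l}`: the number of permutations of `{1,…,n}` whose longest increasing
subsequence has length at most `l`. -/
def permCount (n l : ℕ) : ℕ :=
  Nat.card {π : Equiv.Perm (Fin n) // lisLE π l}

/-- `f^{UU}_{n,l}`: the number of permutations `π` of `{1,…,2n}` with `π = ι∘π∘ι`
(where `ι(x) = 2n+1-x`) whose longest increasing subsequence has length at most `l`. -/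
def fUUCount (n l : ℕ) : ℕ :=
  Nat.card {π : Equiv.Perm (Fin (2 * n)) //
    π = Fin.revPerm * π * Fin.revPerm ∧ lisLE π l}

/-! The permutations with longest increasing subsequence at most `l` form a basis of the image of
`ℂ[S_N]` in `End ((ℂ^l)^{⊗N})`. So the number of them fixed by conjugation by `g` is the trace of
that conjugation, namely `∑ χ(g) χ(g⁻¹)` over the irreducible characters `χ` occurring in
`(ℂ^l)^{⊗N}`. By the Cauchy identity and integrality of multiplicities, the content polynomials of
these characters times the Weyl denominator `a_δ` are, up to sign, distinct alternants. With
monomials orthonormal, the number is therefore `⟨a_δ p_g, a_δ p_g⟩ / l!`: the integral of `|p_g|²`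
over `U(l)`, by Weyl's formula.

Taking `g = 1` gives `f_{N,l}` as the squared norm of `p_1 ^ N`, and taking `g = ι` gives
`f^{UU}_{n,2l}` as the squared norm of `p_2 ^ n` in `2l` variables. Splitting the exponents by
parity turns the latter into the squared norm of `(p_1(x) + p_1(y)) ^ n` for two sets of `l`
variables (squares of eigenvalues in `U(2l)` are distributed as eigenvalues in `U(l) × U(l)`); the
terms of its binomial expansion are orthogonal, and each coefficient enters squared. -/

open Finset

section Wedderburn

variable {K G X : Type*} [Field K] [Group G] [Fintype X] [DecidableEq X]

/-- The product of the full matrix algebras of sizes `d i`: the shape of a split semisimple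
algebra. -/
abbrev MatrixProd (K : Type*) {I : Type*} (d : I → ℕ) : Type _ :=
  ∀ i, Matrix (Fin (d i)) (Fin (d i)) K

theorem span_range_algHom_of {B : Type*} [Ring B] [Algebra K B] {F : MonoidAlgebra K G →ₐ[K] B}
    (hF : Function.Surjective F) :
    Submodule.span K (Set.range fun g => F (MonoidAlgebra.of K G g)) = ⊤ := by
  have hspan : Submodule.span K (Set.range (MonoidAlgebra.of K G)) = ⊤ :=
    eq_top_iff.2 fun x _ => MonoidAlgebra.induction_on x
      (fun g => Submodule.subset_span ⟨g, rfl⟩) (fun _ _ => Submodule.add_mem _)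
      fun c _ => Submodule.smul_mem _ c
  have himage := Submodule.map_span F.toLinearMap (Set.range (MonoidAlgebra.of K G))
  rw [hspan, Submodule.map_top, LinearMap.range_eq_top.2 hF, ← Set.range_comp] at himage
  exact himage.symm

/-- Maschke's theorem combined with the Wedderburn–Artin theorem. -/
theorem exists_matrixProd_factorization [Finite G] [NeZero (Nat.card G : K)] [IsAlgClosed K]
    (ρ : G →* Matrix X X K) :
    ∃ (r : ℕ) (d : Fin r → ℕ) (φ : G →* MatrixProd K d) (j : MatrixProd K d →ₐ[K] Matrix X X K),
      (∀ i, NeZero (d i)) ∧ Submodule.span K (Set.range φ) = ⊤ ∧ Function.Injective j ∧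
        ∀ g, j (φ g) = ρ g := by
  let F : MonoidAlgebra K G →ₐ[K] Matrix X X K := MonoidAlgebra.lift K (Matrix X X K) G ρ
  have : IsSemisimpleRing F.range :=
    RingHom.isSemisimpleRing_of_surjective (F.rangeRestrict : MonoidAlgebra K G →+* F.range)
      F.rangeRestrict_surjective
  obtain ⟨r, d, hd, ⟨e⟩⟩ :=
    IsSemisimpleRing.exists_algEquiv_pi_matrix_of_isAlgClosed K F.range
  let E : MonoidAlgebra K G →ₐ[K] MatrixProd K d := e.toAlgHom.comp F.rangeRestrict
  refine ⟨r, d, (E : MonoidAlgebra K G →* MatrixProd K d).comp (MonoidAlgebra.of K G),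
    F.range.val.comp e.symm.toAlgHom, hd, ?_, ?_, fun g => ?_⟩
  · exact span_range_algHom_of (F := E) (e.surjective.comp F.rangeRestrict_surjective)
  · exact Subtype.val_injective.comp e.symm.injective
  · simp [E, F]

end Wedderburn

section Characters

variable {K G I : Type*} [Field K] [Group G] {d : I → ℕ} (φ : G →* MatrixProd K d)

/-- The representation of `G` on the column vectors of the `i`-th block of `φ`. -/
def blockRepresentation (i : I) : Representation K G (Fin (d i) → K) :=
  (Matrix.toLinAlgEquiv' : Matrix (Fin (d i)) (Fin (d i)) K ≃ₐ[K] _).toMonoidHom.comp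
    ((Pi.evalMonoidHom (fun i => Matrix (Fin (d i)) (Fin (d i)) K) i).comp φ)

theorem character_blockRepresentation (i : I) (g : G) :
    (blockRepresentation φ i).character g = (φ g i).trace :=
  Matrix.trace_toLin'_eq _

variable {φ} (hφ : Submodule.span K (Set.range φ) = ⊤)
include hφ

theorem mulVec_mem_of_span_eq_top {i : I} (U : Subrepresentation (blockRepresentation φ i))
    (b : MatrixProd K d) {v : Fin (d i) → K} (hv : v ∈ U.toSubmodule) :
    (b i).mulVec v ∈ U.toSubmodule := by
  have hb : b ∈ Submodule.span K (Set.range φ) := hφ ▸ Submodule.mem_top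
  induction hb using Submodule.span_induction with
  | mem b hb =>
    obtain ⟨g, rfl⟩ := hb
    exact U.apply_mem_toSubmodule g hv
  | zero => simp
  | add a b _ _ ha hb => simpa only [Pi.add_apply, Matrix.add_mulVec] using add_mem ha hb
  | smul c b _ hb =>
    simpa only [Pi.smul_apply, Matrix.smul_mulVec] using Submodule.smul_mem _ c hb

theorem isIrreducible_blockRepresentation (i : I) [NeZero (d i)] :
    (blockRepresentation φ i).IsIrreducible where
  exists_pair_ne := ⟨⊥, ⊤, fun h => bot_ne_top (congrArg Subrepresentation.toSubmodule h)⟩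
  eq_bot_or_eq_top U := by
    classical
    refine or_iff_not_imp_left.2 fun hU => ?_
    obtain ⟨v, hvU, hv⟩ : ∃ v ∈ U.toSubmodule, v ≠ 0 :=
      Submodule.exists_mem_ne_zero_of_ne_bot fun h =>
        hU (Subrepresentation.toSubmodule_injective h)
    obtain ⟨q, hq⟩ := Function.ne_iff.1 hv
    refine Subrepresentation.toSubmodule_injective (eq_top_iff.2 fun w _ => ?_)
    let M : Matrix (Fin (d i)) (Fin (d i)) K := Matrix.vecMulVec w (Pi.single q (v q)⁻¹)
    have hM : M.mulVec v = w := by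
      simp only [M, Matrix.vecMulVec_mulVec, single_dotProduct, inv_mul_cancel₀ hq,
        MulOpposite.op_one, one_smul]
    simpa only [Pi.single_eq_same, hM] using mulVec_mem_of_span_eq_top hφ U (Pi.single i M) hvU

theorem intertwiningMap_mulVec {i j : I}
    (T : (blockRepresentation φ i).IntertwiningMap (blockRepresentation φ j))
    (b : MatrixProd K d) (v : Fin (d i) → K) :
    T ((b i).mulVec v) = (b j).mulVec (T v) := by
  have hb : b ∈ Submodule.span K (Set.range φ) := hφ ▸ Submodule.mem_top
  induction hb using Submodule.span_induction with
  | mem b hb =>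
    obtain ⟨g, rfl⟩ := hb
    exact Representation.IntertwiningMap.isIntertwining _ _ T g v
  | zero => simp
  | add a b _ _ ha hb => simp only [Pi.add_apply, Matrix.add_mulVec, map_add, ha, hb]
  | smul c b _ hb => simp only [Pi.smul_apply, Matrix.smul_mulVec, map_smul, hb]

theorem nonempty_equiv_blockRepresentation_iff {i j : I} [NeZero (d i)] :
    Nonempty ((blockRepresentation φ i).Equiv (blockRepresentation φ j)) ↔ i = j := by
  classical
  refine ⟨fun ⟨T⟩ => ?_, fun h => h ▸ ⟨.refl _⟩⟩
  by_contra hij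
  have hT (v : Fin (d i) → K) : T v = 0 := by
    have h := intertwiningMap_mulVec hφ T.toIntertwiningMap (Pi.single i 1) v
    rw [Pi.single_eq_same, Pi.single_eq_of_ne (Ne.symm hij), Matrix.one_mulVec,
      Matrix.zero_mulVec] at h
    exact h
  exact one_ne_zero (T.injective ((hT 1).trans (hT 0).symm))

theorem sum_trace_mul_trace_inv [DecidableEq I] [Fintype G] [NeZero (Nat.card G : K)]
    [IsAlgClosed K] [∀ i, NeZero (d i)] (i j : I) :
    ∑ g, (φ g i).trace * (φ g⁻¹ j).trace = if i = j then (Nat.card G : K) else 0 := by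
  have := invertibleOfNonzero (NeZero.ne (Nat.card G : K))
  have := isIrreducible_blockRepresentation hφ i
  have := isIrreducible_blockRepresentation hφ j
  have horth := Representation.char_orthonormal (blockRepresentation φ i) (blockRepresentation φ j)
  simp only [character_blockRepresentation, nonempty_equiv_blockRepresentation_iff hφ,
    inv_mul_eq_iff_eq_mul₀ (NeZero.ne (Nat.card G : K))] at horth
  rw [horth]
  simp [eq_comm]

end Characters

section Traces

variable {K I : Type*} [Field K] [DecidableEq I] {d : I → ℕ}

theorem apply_eq_mul_trace_of_apply_mul_comm {n : Type*} [Fintype n] [DecidableEq n]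
    (t : Matrix n n K →ₗ[K] K) (ht : ∀ a b, t (a * b) = t (b * a)) (p : n) (A : Matrix n n K) :
    t A = t (Matrix.single p p 1) * A.trace := by
  suffices t = t (Matrix.single p p 1) • Matrix.traceLinearMap n K K from
    congrArg (fun s => s A) this
  refine Matrix.ext_linearMap K fun a b => LinearMap.ext_ring ?_
  have h : (Matrix.single a b 1 : Matrix n n K) = Matrix.single a p 1 * Matrix.single p b 1 := by
    simp
  by_cases hab : a = b
  · subst hab
    simp only [LinearMap.comp_apply, Matrix.singleLinearMap_apply]
    rw [h, ht]
    simp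
  · simp only [LinearMap.comp_apply, Matrix.singleLinearMap_apply]
    rw [h, ht, Matrix.single_mul_single_of_ne _ _ _ _ (Ne.symm hab)]
    simp [hab]

/-- The minimal idempotent of the `i`-th block supported on its first diagonal entry. -/
def blockIdempotent (K) [Field K] (d : I → ℕ) [∀ i, NeZero (d i)] (i : I) : MatrixProd K d :=
  Pi.single i (Matrix.single 0 0 1)

theorem isIdempotentElem_blockIdempotent [∀ i, NeZero (d i)] (i : I) :
    IsIdempotentElem (blockIdempotent K d i) := by
  simp [IsIdempotentElem, blockIdempotent, ← Pi.single_mul]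

theorem blockIdempotent_ne_zero [∀ i, NeZero (d i)] (i : I) : blockIdempotent K d i ≠ 0 := by
  intro h
  simpa [blockIdempotent] using congrFun (congrFun (congrFun h i) 0) 0

theorem exists_natCast_trace_of_isIdempotentElem {X : Type*} [Fintype X] {P : Matrix X X K}
    (hP : IsIdempotentElem P) : ∃ m : ℕ, P.trace = m := by
  classical
  have hlin : IsIdempotentElem (Matrix.toLin' P) := hP.map Matrix.toLinAlgEquiv'
  rw [← Matrix.trace_toLin'_eq, (LinearMap.IsIdempotentElem.isProj_range _ hlin).trace]
  exact ⟨_, rfl⟩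

theorem trace_ne_zero_of_isIdempotentElem [CharZero K] {X : Type*} [Fintype X] {P : Matrix X X K}
    (hP : IsIdempotentElem P) (hP0 : P ≠ 0) : P.trace ≠ 0 := by
  classical
  have hlin : IsIdempotentElem (Matrix.toLin' P) := hP.map Matrix.toLinAlgEquiv'
  rw [← Matrix.trace_toLin'_eq, Ne,
    LinearMap.IsIdempotentElem.trace_eq_zero_iff hlin]
  simpa using hP0

theorem exists_natCast_trace_mul_map_blockIdempotent [∀ i, NeZero (d i)] {X : Type*} [Fintype X]
    [DecidableEq X] (j : MatrixProd K d →ₐ[K] Matrix X X K) {D : Matrix X X K}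
    (hD : ∀ b, Commute D (j b)) (hDD : IsIdempotentElem D) (i : I) :
    ∃ m : ℕ, (D * j (blockIdempotent K d i)).trace = m :=
  exists_natCast_trace_of_isIdempotentElem
    (hDD.mul_of_commute (hD _) ((isIdempotentElem_blockIdempotent i).map j))

variable [Fintype I]

theorem apply_eq_sum_mul_trace_of_apply_mul_comm [∀ i, NeZero (d i)]
    (t : MatrixProd K d →ₗ[K] K) (ht : ∀ a b, t (a * b) = t (b * a)) (b : MatrixProd K d) :
    t b = ∑ i, t (blockIdempotent K d i) * (b i).trace := by
  have hblock (i : I) : t (Pi.single i (b i)) = t (blockIdempotent K d i) * (b i).trace :=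
    apply_eq_mul_trace_of_apply_mul_comm
      (t ∘ₗ LinearMap.single K (fun i => Matrix (Fin (d i)) (Fin (d i)) K) i)
      (fun x y => by simpa [Pi.single_mul] using ht (Pi.single i x) (Pi.single i y)) 0 (b i)
  rw [← Finset.sum_congr rfl fun i _ => hblock i, ← map_sum, Finset.univ_sum_single]

theorem trace_mul_map_eq_sum [∀ i, NeZero (d i)] {X : Type*} [Fintype X] [DecidableEq X]
    (j : MatrixProd K d →ₐ[K] Matrix X X K) {D : Matrix X X K} (hD : ∀ b, Commute D (j b))
    (b : MatrixProd K d) :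
    (D * j b).trace = ∑ i, (D * j (blockIdempotent K d i)).trace * (b i).trace :=
  apply_eq_sum_mul_trace_of_apply_mul_comm
    (Matrix.traceLinearMap X K K ∘ₗ LinearMap.mulLeft K D ∘ₗ j.toLinearMap)
    (fun a b => by
      simp only [LinearMap.comp_apply, AlgHom.toLinearMap_apply, map_mul,
        LinearMap.mulLeft_apply, Matrix.traceLinearMap_apply]
      rw [← mul_assoc, (hD a).eq, mul_assoc, Matrix.trace_mul_comm, mul_assoc]) b

end Traces

section ConjugationFixedPoints

variable {K G I : Type*} [Field K] [Group G] [Fintype I] {d : I → ℕ}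

theorem trace_mulLeft_comp_mulRight (x y : MatrixProd K d) :
    LinearMap.trace K (MatrixProd K d) (LinearMap.mulLeft K x ∘ₗ LinearMap.mulRight K y) =
      ∑ i, (x i).trace * (y i).trace := by
  classical
  rw [LinearMap.trace_eq_matrix_trace K
      (Pi.basis fun i => Matrix.stdBasis K (Fin (d i)) (Fin (d i))),
    Matrix.trace, Fintype.sum_sigma]
  refine Finset.sum_congr rfl fun i _ => ?_
  rw [Matrix.trace, Matrix.trace, Finset.sum_mul_sum, Fintype.sum_prod_type]
  refine Finset.sum_congr rfl fun p _ => Finset.sum_congr rfl fun q _ => ?_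
  have hrepr (M : Matrix (Fin (d i)) (Fin (d i)) K) :
      (Matrix.stdBasis K (Fin (d i)) (Fin (d i))).repr M (p, q) = M p q := by
    simp [Matrix.stdBasis]
  rw [Matrix.diag_apply, LinearMap.toMatrix_apply, Pi.basis_apply, Matrix.stdBasis_eq_single,
    LinearMap.comp_apply, LinearMap.mulLeft_apply, LinearMap.mulRight_apply, Pi.basis_repr, hrepr]
  simp [Matrix.mul_apply, Matrix.single_apply, ite_and]

theorem card_conj_fixed_eq_sum_trace [DecidableEq G] (φ : G →* MatrixProd K d) {S : Finset G}
    (hli : LinearIndependent K fun s : S => φ s)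
    (hspan : ⊤ ≤ Submodule.span K (Set.range fun s : S => φ s)) {g : G}
    (hS : ∀ s ∈ S, g * s * g⁻¹ ∈ S) :
    (#{s ∈ S | g * s * g⁻¹ = s} : K) = ∑ i, (φ g i).trace * (φ g⁻¹ i).trace := by
  let b := Module.Basis.mk hli hspan
  have hconj (s : S) : (LinearMap.mulLeft K (φ g) ∘ₗ LinearMap.mulRight K (φ g⁻¹)) (b s) =
      b ⟨g * s * g⁻¹, hS s s.2⟩ := by
    simp [b, mul_assoc]
  rw [← trace_mulLeft_comp_mulRight, LinearMap.trace_eq_matrix_trace K b, Matrix.trace,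
    Finset.card_filter, Nat.cast_sum, ← Finset.sum_coe_sort S]
  refine Finset.sum_congr rfl fun s _ => ?_
  rw [Matrix.diag_apply, LinearMap.toMatrix_apply, hconj, b.repr_self, Finsupp.single_apply]
  simp [Subtype.ext_iff]

end ConjugationFixedPoints

section PermutationRepresentation

variable (K : Type*) {X G C : Type*} [Field K] [Group G] [Fintype X] [DecidableEq X]
  [MulAction G X] [DecidableEq C] {wt : X → C}

variable (X) in
/-- The permutation matrices of a group acting on a finite set: the linearised action. -/
def actionMatrix : G →* Matrix X X K where
  toFun g := Matrix.of fun x y => if x = g • y then 1 else 0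
  map_one' := by ext x y; simp [Matrix.one_apply]
  map_mul' g h := by ext x y; simp [Matrix.mul_apply, mul_smul]

theorem actionMatrix_apply (g : G) (x y : X) :
    actionMatrix K X g x y = if x = g • y then 1 else 0 := rfl

/-- The diagonal projection onto the points of weight `c`. -/
def weightProjection (wt : X → C) (c : C) : Matrix X X K :=
  Matrix.diagonal fun x => if wt x = c then 1 else 0

theorem isIdempotentElem_weightProjection (c : C) :
    IsIdempotentElem (weightProjection K wt c) := by
  simp [IsIdempotentElem, weightProjection]

theorem commute_weightProjection_actionMatrix (hwt : ∀ (g : G) x, wt (g • x) = wt x) (c : C)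
    (g : G) : Commute (weightProjection K wt c) (actionMatrix K X g) := by
  ext x y
  simp only [weightProjection, Matrix.diagonal_mul, Matrix.mul_diagonal, actionMatrix_apply]
  by_cases h : x = g • y
  · simp [h, hwt]
  · simp [h]

theorem trace_weightProjection_mul_actionMatrix (c : C) (g : G) :
    (weightProjection K wt c * actionMatrix K X g).trace = #{x | g • x = x ∧ wt x = c} := by
  simp [weightProjection, Matrix.trace, Matrix.diagonal_mul, actionMatrix_apply,
    Finset.card_filter, ite_and, @eq_comm _ (g • _)]

theorem sum_weightProjection : ∑ c ∈ univ.image wt, weightProjection K wt c = 1 := by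
  ext x y
  simp [weightProjection, Matrix.sum_apply, Matrix.diagonal_apply, Matrix.one_apply]

/-- The irreducible characters `χ i` occurring in a permutation representation, the
multiplicity `m i c` of `χ i` in the span of the points of weight `c`, and the trace of a
conjugation on the image of the group algebra. -/
theorem exists_character_decomposition [Fintype G] [DecidableEq G] [CharZero K] [IsAlgClosed K]
    (hwt : ∀ (g : G) x, wt (g • x) = wt x) :
    ∃ (r : ℕ) (χ : Fin r → G → K) (m : Fin r → C → ℕ),
      (∀ g c, (#{x | g • x = x ∧ wt x = c} : K) = ∑ i, m i c * χ i g) ∧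
      (∀ i j, ∑ g, χ i g * χ j g⁻¹ = if i = j then (Nat.card G : K) else 0) ∧
      (∀ i, ∃ x, m i (wt x) ≠ 0) ∧
      ∀ (S : Finset G) (g : G),
        LinearIndependent K (fun s : S => actionMatrix K X (s : G)) →
        (∀ h : G, actionMatrix K X h ∈
          Submodule.span K (Set.range fun s : S => actionMatrix K X (s : G))) →
        (∀ s ∈ S, g * s * g⁻¹ ∈ S) →
        (#{s ∈ S | g * s * g⁻¹ = s} : K) = ∑ i, χ i g * χ i g⁻¹ := by
  have : NeZero (Nat.card G : K) := ⟨Nat.cast_ne_zero.2 Nat.card_pos.ne'⟩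
  obtain ⟨r, d, φ, j, hd, hφ, hj, hjφ⟩ :=
    exists_matrixProd_factorization (actionMatrix K (G := G) X)
  have hcomm (c : C) (b : MatrixProd K d) : Commute (weightProjection K wt c) (j b) := by
    have hb : b ∈ Submodule.span K (Set.range φ) := hφ ▸ Submodule.mem_top
    induction hb using Submodule.span_induction with
    | mem b hb =>
      obtain ⟨g, rfl⟩ := hb
      exact hjφ g ▸ commute_weightProjection_actionMatrix K hwt c g
    | zero => simp
    | add a b _ _ ha hb => simpa only [map_add] using ha.add_right hb
    | smul a b _ hb => simpa only [map_smul] using hb.smul_right a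
  choose m hm using fun i c => exists_natCast_trace_mul_map_blockIdempotent j (hcomm c)
    (isIdempotentElem_weightProjection K c) i
  refine ⟨r, fun i g => (φ g i).trace, m, fun g c => ?_, sum_trace_mul_trace_inv hφ, fun i => ?_,
    fun S g hli hspan hS => card_conj_fixed_eq_sum_trace φ ?_ ?_ hS⟩
  · rw [← trace_weightProjection_mul_actionMatrix, ← hjφ, trace_mul_map_eq_sum j (hcomm c)]
    simp only [hm]
  · by_contra! hzero
    refine trace_ne_zero_of_isIdempotentElem ((isIdempotentElem_blockIdempotent i).map j)
      ((map_ne_zero_iff j hj).2 (blockIdempotent_ne_zero i)) ?_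
    rw [← one_mul (j _), ← sum_weightProjection K (wt := wt), Finset.sum_mul, Matrix.trace_sum]
    refine Finset.sum_eq_zero fun c hc => ?_
    obtain ⟨x, -, rfl⟩ := Finset.mem_image.1 hc
    rw [hm, hzero, Nat.cast_zero]
  · exact .of_comp j.toLinearMap (by simpa only [Function.comp_def, AlgHom.toLinearMap_apply, hjφ])
  · have himage : (Set.range fun s : S => actionMatrix K X (s : G)) =
        j.toLinearMap '' Set.range fun s : S => φ s := by
      simp only [← Set.range_comp, Function.comp_def, AlgHom.toLinearMap_apply, hjφ]
    rw [← hφ, Submodule.span_le]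
    rintro _ ⟨h, rfl⟩
    have hmem := hspan h
    rw [himage, ← Submodule.map_span, ← hjφ] at hmem
    exact (Function.Injective.mem_set_image hj).1 hmem

end PermutationRepresentation

open scoped Nat

section OrbitCounting

variable {G X : Type*} [Group G] [Fintype G] [DecidableEq X] [MulAction G X]

theorem sum_card_fixed_of_forall_mem_iff_mem_orbit {s : Finset X} {x₀ : X}
    (hs : ∀ x, x ∈ s ↔ x ∈ MulAction.orbit G x₀) :
    ∑ x ∈ s, #{g : G | g • x = x} = Fintype.card G := by
  have hcoset (x) (hx : x ∈ s) : #{g : G | g • x = x} = #{g : G | g • x₀ = x} := by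
    obtain ⟨h, rfl⟩ := (hs x).1 hx
    exact Finset.card_equiv (Equiv.mulRight h) (by simp [mul_smul])
  rw [Finset.sum_congr rfl hcoset, ← Finset.card_eq_sum_card_fiberwise, Finset.card_univ]
  exact fun g _ => (hs _).2 ⟨g, rfl⟩

end OrbitCounting

section CompleteSeries

variable {κ R : Type*} [Fintype κ] [CommSemiring R]

/-- The generating function `∏ 1 / (1 - w k * t)` of the complete homogeneous symmetric
functions of the family `w`. -/
def completeSeries (w : κ → R) : PowerSeries R := ∏ k, PowerSeries.mk (w k ^ ·)

theorem coeff_completeSeries [DecidableEq κ] (w : κ → R) (N : ℕ) :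
    PowerSeries.coeff N (completeSeries w) =
      ∑ c ∈ univ.finsuppAntidiag N, ∏ k, w k ^ (c k) := by
  simp [completeSeries, PowerSeries.coeff_prod]

end CompleteSeries

section Words

attribute [local instance] arrowAction

variable {ι κ κ' R S : Type*} [CommSemiring R] [CommSemiring S]

theorem perm_smul_word_eq_iff {g : Equiv.Perm ι} {u : ι → κ} : g • u = u ↔ u ∘ g = u := by
  rw [← Equiv.eq_comp_symm, eq_comm]
  rfl

variable [Fintype ι]

/-- The number of occurrences of each letter in a word. -/
def content (u : ι → κ) : κ →₀ ℕ := ∑ i, Finsupp.single (u i) 1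

theorem content_smul (g : Equiv.Perm ι) (u : ι → κ) : content (g • u) = content u :=
  Equiv.sum_comp g⁻¹ fun i => Finsupp.single (u i) 1

theorem degree_content (u : ι → κ) : (content u).degree = Fintype.card ι := by
  simp [content]

theorem content_apply [DecidableEq κ] (u : ι → κ) (k : κ) : content u k = #{i | u i = k} := by
  simp [content, Finsupp.single_apply]

theorem mem_orbit_iff_content_eq {u v : ι → κ} :
    u ∈ MulAction.orbit (Equiv.Perm ι) v ↔ content u = content v := by
  have := Classical.decEq κ
  refine ⟨fun ⟨g, hg⟩ => hg ▸ content_smul g v, fun h => ?_⟩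
  have hfiber (k : κ) : {i // v i = k} ≃ {i // u i = k} := Fintype.equivOfCardEq <| by
    rw [Fintype.card_subtype, Fintype.card_subtype, ← content_apply, ← content_apply, h]
  refine ⟨Equiv.ofFiberEquiv hfiber, funext fun i => ?_⟩
  obtain ⟨i, rfl⟩ := (Equiv.ofFiberEquiv hfiber).surjective i
  rw [Equiv.ofFiberEquiv_map hfiber]
  exact congrArg v (Equiv.symm_apply_apply (Equiv.ofFiberEquiv hfiber) i)

theorem exists_content_eq [Finite κ] {c : κ →₀ ℕ} (hc : c.degree = Fintype.card ι) :
    ∃ u : ι → κ, content u = c := by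
  classical
  have := Fintype.ofFinite κ
  have hcard : Fintype.card ι = Fintype.card (Σ k, Fin (c k)) := by
    simp [← hc, Finsupp.degree_eq_sum]
  let e := Fintype.equivOfCardEq hcard
  refine ⟨fun i => (e i).1, Finsupp.ext fun k => ?_⟩
  rw [content_apply, ← Fintype.card_subtype]
  exact (Fintype.card_congr ((e.subtypeEquiv fun i => Iff.rfl).trans
    (Equiv.sigmaSubtype k))).trans (Fintype.card_fin _)

variable [Fintype κ]

theorem prod_word_eq_prod_pow_content (w : κ → R) (u : ι → κ) :
    ∏ i, w (u i) = ∏ k, w k ^ content u k := by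
  classical
  simp_rw [content_apply, ← Finset.prod_const, Finset.prod_filter]
  rw [Finset.prod_comm]
  simp

variable [DecidableEq κ] [DecidableEq ι]

/-- The power sum of the cycle type of `g`, as a sum over the words that are constant on the
cycles of `g`; `p_g = ∏ p_λᵢ` for `g` of cycle type `λ`. -/
def cyclePowerSum (w : κ → R) (g : Equiv.Perm ι) : R :=
  ∑ u : ι → κ with u ∘ g = u, ∏ i, w (u i)

theorem cyclePowerSum_one (w : κ → R) :
    cyclePowerSum w (1 : Equiv.Perm ι) = (∑ k, w k) ^ Fintype.card ι := by
  simp [cyclePowerSum, Finset.prod_univ_sum, ← Finset.card_univ, ← Finset.prod_const]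

theorem cyclePowerSum_inv (w : κ → R) (g : Equiv.Perm ι) :
    cyclePowerSum w g⁻¹ = cyclePowerSum w g := by
  refine Finset.sum_congr (Finset.filter_congr fun u _ => ?_) fun _ _ => rfl
  rw [← perm_smul_word_eq_iff, ← perm_smul_word_eq_iff, inv_smul_eq_iff, eq_comm]

theorem map_cyclePowerSum (f : R →+* S) (w : κ → R) (g : Equiv.Perm ι) :
    f (cyclePowerSum w g) = cyclePowerSum (f ∘ w) g := by
  simp [cyclePowerSum]

theorem cyclePowerSum_mul_cyclePowerSum [Fintype κ'] [DecidableEq κ'] (w : κ → R) (w' : κ' → R)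
    (g : Equiv.Perm ι) :
    cyclePowerSum w g * cyclePowerSum w' g =
      cyclePowerSum (fun k : κ × κ' => w k.1 * w' k.2) g := by
  rw [cyclePowerSum, cyclePowerSum, cyclePowerSum, Finset.sum_mul_sum, ← Finset.sum_product']
  refine Finset.sum_equiv (Equiv.arrowProdEquivProdArrow ι (fun _ => κ) fun _ => κ').symm
    (fun u => ?_) fun u _ => ?_
  · simp [funext_iff, Prod.ext_iff, forall_and]
  · simp [Finset.prod_mul_distrib]

theorem sum_cyclePowerSum (w : κ → R) :
    ∑ g : Equiv.Perm ι, cyclePowerSum w g =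
      (Fintype.card ι)! * PowerSeries.coeff (Fintype.card ι) (completeSeries w) := by
  have hmaps (u : ι → κ) (_ : u ∈ univ) :
      content u ∈ (univ : Finset κ).finsuppAntidiag (Fintype.card ι) := by
    simp [← degree_content u, Finsupp.degree_eq_sum]
  have hcount (c) (hc : c ∈ (univ : Finset κ).finsuppAntidiag (Fintype.card ι)) :
      ∑ u : ι → κ with content u = c, #{g : Equiv.Perm ι | g • u = u} = (Fintype.card ι)! := by
    obtain ⟨u₀, rfl⟩ := exists_content_eq (ι := ι) (c := c) (by
      simpa [Finsupp.degree_eq_sum] using hc)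
    rw [sum_card_fixed_of_forall_mem_iff_mem_orbit (x₀ := u₀) (by simp [mem_orbit_iff_content_eq]),
      Fintype.card_perm]
  calc ∑ g : Equiv.Perm ι, cyclePowerSum w g
      = ∑ u : ι → κ, (#{g : Equiv.Perm ι | g • u = u} : R) * ∏ k, w k ^ content u k := by
        simp only [cyclePowerSum, Finset.sum_filter, ← perm_smul_word_eq_iff,
          prod_word_eq_prod_pow_content, Finset.card_filter, Nat.cast_sum, Finset.sum_mul]
        rw [Finset.sum_comm]
        simp
    _ = ∑ c ∈ univ.finsuppAntidiag (Fintype.card ι), ∑ u : ι → κ with content u = c,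
          (#{g : Equiv.Perm ι | g • u = u} : R) * ∏ k, w k ^ c k := by
        rw [← Finset.sum_fiberwise_of_maps_to hmaps]
        refine Finset.sum_congr rfl fun c _ => Finset.sum_congr rfl fun u hu => ?_
        rw [(Finset.mem_filter.1 hu).2]
    _ = _ := by
        rw [coeff_completeSeries, Finset.mul_sum]
        refine Finset.sum_congr rfl fun c hc => ?_
        rw [← Finset.sum_mul, ← Nat.cast_sum, hcount c hc]

end Words

section CompleteHomogeneous

open PowerSeries

variable {κ R : Type*} [Fintype κ] [CommRing R]

theorem constantCoeff_completeSeries (w : κ → R) : constantCoeff (completeSeries w) = 1 := by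
  simp [completeSeries, ← coeff_zero_eq_constantCoeff_apply]

theorem one_sub_C_mul_X_mul_mk_pow (r : R) :
    (1 - C r * X) * PowerSeries.mk (r ^ ·) = 1 := by
  have h := congrArg (rescale r) (mk_one_mul_one_sub_eq_one R)
  simpa [rescale_mk, rescale_X, mul_comm] using h

end CompleteHomogeneous

section JacobiTrudi

open Polynomial

variable {R : Type*} [CommRing R] {l : ℕ} (y : Fin l → R)

/-- The polynomial `∏ (1 - y p * t)` over the variables other than `y j`: up to signs its
coefficients are the elementary symmetric functions of those variables. -/
def elementaryOmit (j : Fin l) : R[X] := ∏ p ∈ univ.erase j, (1 - C (y p) * X)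

theorem natDegree_elementaryOmit_lt (j : Fin l) : (elementaryOmit y j).natDegree < l := by
  have h : (elementaryOmit y j).natDegree ≤ ∑ p ∈ univ.erase j, 1 :=
    (natDegree_prod_le _ _).trans (Finset.sum_le_sum fun p _ => by compute_degree)
  rw [Finset.sum_const, smul_eq_mul, mul_one, Finset.card_erase_of_mem (mem_univ j),
    Finset.card_univ, Fintype.card_fin] at h
  have := j.pos
  omega

theorem elementaryOmit_mul_completeSeries (j : Fin l) :
    (elementaryOmit y j : PowerSeries R) * completeSeries y = PowerSeries.mk (y j ^ ·) := by
  have hcoe : (elementaryOmit y j : PowerSeries R) =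
      ∏ p ∈ univ.erase j, (1 - PowerSeries.C (y p) * PowerSeries.X) := by
    rw [elementaryOmit, ← coeToPowerSeries.ringHom_apply, map_prod]
    simp
  rw [hcoe, completeSeries, ← Finset.mul_prod_erase univ _ (mem_univ j), mul_left_comm,
    ← Finset.prod_mul_distrib]
  simp [one_sub_C_mul_X_mul_mk_pow]

theorem pow_eq_sum_coeff_completeSeries (j : Fin l) (n : ℕ) :
    y j ^ n = ∑ k : Fin l, PowerSeries.coeff n (PowerSeries.X ^ (k : ℕ) * completeSeries y) *
      (elementaryOmit y j).coeff k := by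
  have hsum : (elementaryOmit y j : PowerSeries R) =
      ∑ k : Fin l, PowerSeries.C ((elementaryOmit y j).coeff k) * PowerSeries.X ^ (k : ℕ) := by
    conv_lhs => rw [as_sum_range_C_mul_X_pow' _ (natDegree_elementaryOmit_lt y j)]
    rw [Finset.sum_range]
    rw [← coeToPowerSeries.ringHom_apply, map_sum]
    simp
  have h := congrArg (PowerSeries.coeff n) (elementaryOmit_mul_completeSeries y j)
  rw [PowerSeries.coeff_mk, hsum, Finset.sum_mul, map_sum] at h
  rw [← h]
  refine Finset.sum_congr rfl fun k _ => ?_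
  rw [mul_assoc, PowerSeries.coeff_C_mul, mul_comm]

theorem det_coeff_X_pow_mul_completeSeries :
    (Matrix.of fun i k : Fin l =>
      PowerSeries.coeff (i : ℕ) (PowerSeries.X ^ (k : ℕ) * completeSeries y)).det = 1 := by
  rw [Matrix.det_of_isLowerTriangular]
  · simp [PowerSeries.coeff_X_pow_mul', constantCoeff_completeSeries]
  · intro i k hik
    rw [Matrix.of_apply, PowerSeries.coeff_X_pow_mul', if_neg]
    exact not_le.2 hik

/-- The Jacobi–Trudi identity, for the Schur polynomials as quotients of alternants. -/
theorem det_pow_eq_det_completeSeries_mul (a : Fin l → ℕ) :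
    (Matrix.of fun i j => y j ^ a i).det =
      (Matrix.of fun i k : Fin l =>
        PowerSeries.coeff (a i) (PowerSeries.X ^ (k : ℕ) * completeSeries y)).det *
        (Matrix.of fun i j : Fin l => y j ^ (i : ℕ)).det := by
  have hfactor (b : Fin l → ℕ) : (Matrix.of fun i j => y j ^ b i) =
      (Matrix.of fun i k : Fin l =>
        PowerSeries.coeff (b i) (PowerSeries.X ^ (k : ℕ) * completeSeries y)) *
        Matrix.of fun k j : Fin l => (elementaryOmit y j).coeff k := by
    ext i j
    exact pow_eq_sum_coeff_completeSeries y j (b i)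
  rw [hfactor a, hfactor fun i => i, Matrix.det_mul, Matrix.det_mul,
    det_coeff_X_pow_mul_completeSeries, one_mul]

end JacobiTrudi

section Alternants

open MvPolynomial

variable {R S κ κ' : Type*} [CommRing R] [CommRing S] [Fintype κ] [Fintype κ'] {l : ℕ}

theorem prod_X_pow_eq_monomial_equivFunOnFinite (a : κ → ℕ) :
    ∏ i, (X i : MvPolynomial κ R) ^ a i = monomial (Finsupp.equivFunOnFinite.symm a) 1 := by
  simp [monomial_eq, Finsupp.prod_fintype]

variable [DecidableEq κ] [DecidableEq κ']

/-- The alternant `a_α = det (X j ^ α i)`, the antisymmetrization of the monomial `X ^ α`. -/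
def alternant (R : Type*) [CommRing R] (a : κ → ℕ) : MvPolynomial κ R :=
  (Matrix.of fun i j => X j ^ a i).det

/-- The alternant of the staircase exponent `δ = (0, 1, …, l - 1)`: the Vandermonde determinant
by which Weyl's integration formula weights symmetric polynomials. -/
def weylDenominator (R : Type*) [CommRing R] (l : ℕ) : MvPolynomial (Fin l) R :=
  alternant R fun i => (i : ℕ)

theorem alternant_eq_sum_prod (a : κ → ℕ) :
    alternant R a = ∑ σ : Equiv.Perm κ,
      Equiv.Perm.sign σ • ∏ i, (X i : MvPolynomial κ R) ^ a (σ i) :=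
  Matrix.det_apply _

theorem isHomogeneous_alternant (a : κ → ℕ) : (alternant R a).IsHomogeneous (∑ i, a i) := by
  rw [alternant_eq_sum_prod]
  refine IsHomogeneous.sum _ _ _ fun σ _ => ?_
  rw [Units.smul_def, ← Int.cast_smul_eq_zsmul R, smul_eq_C_mul, ← Equiv.sum_comp σ a]
  exact (IsHomogeneous.prod _ _ _ fun i _ => isHomogeneous_X_pow i _).C_mul _

theorem map_alternant (f : R →+* S) (a : κ → ℕ) :
    MvPolynomial.map f (alternant R a) = alternant S a := by
  rw [alternant, RingHom.map_det, alternant]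
  congr 1
  ext i j
  simp

theorem map_weylDenominator (f : R →+* S) :
    MvPolynomial.map f (weylDenominator R l) = weylDenominator S l :=
  map_alternant f _

theorem rename_alternant (e : κ ≃ κ') (a : κ → ℕ) :
    rename e (alternant R a) = alternant R (a ∘ e.symm) := by
  rw [alternant, AlgHom.map_det, alternant, ← Matrix.det_submatrix_equiv_self e]
  congr 1
  ext i j
  simp

theorem rename_perm_alternant (σ : Equiv.Perm κ) (a : κ → ℕ) :
    rename σ (alternant R a) = Equiv.Perm.sign σ • alternant R a := by
  rw [alternant, AlgHom.map_det, Units.smul_def, zsmul_eq_mul, ← Matrix.det_permute']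
  congr 1
  ext i j
  simp

theorem coeff_alternant_self_of_injective {a : κ →₀ ℕ} (ha : Function.Injective a) :
    coeff a (alternant R a) = 1 := by
  have hσ (σ : Equiv.Perm κ) : Finsupp.equivFunOnFinite.symm (fun i => a (σ i)) = a ↔ σ = 1 := by
    rw [Equiv.symm_apply_eq, Equiv.ext_iff]
    exact funext_iff.trans (forall_congr' fun i => ha.eq_iff)
  simp only [alternant_eq_sum_prod, prod_X_pow_eq_monomial_equivFunOnFinite, coeff_sum, coeff_smul,
    coeff_monomial, hσ]
  simp

theorem alternant_eq_zero_of_not_injective {a : κ → ℕ} (ha : ¬ Function.Injective a) :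
    alternant R a = 0 := by
  obtain ⟨i, j, hij, hne⟩ := Function.not_injective_iff.1 ha
  exact Matrix.det_zero_of_row_eq hne (by ext; simp [hij])

theorem weylDenominator_ne_zero [IsDomain R] : weylDenominator R l ≠ 0 := by
  have h : weylDenominator R l = (Matrix.vandermonde (X : Fin l → MvPolynomial (Fin l) R)).det := by
    rw [weylDenominator, alternant, ← Matrix.det_transpose]
    rfl
  rw [h, Matrix.det_vandermonde_ne_zero_iff]
  exact X_injective

end Alternants

section Cauchy

open MvPolynomial

variable {R κ : Type*} [CommRing R] [Fintype κ] {l : ℕ}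

/-- The Cauchy kernel `∏ (1 - X i * w k * t)⁻¹`, as a power series in the degree variable `t`. -/
def cauchyKernel (l : ℕ) (w : κ → R) : PowerSeries (MvPolynomial (Fin l) R) :=
  completeSeries fun p : Fin l × κ => X p.1 * C (w p.2)

theorem cauchyKernel_eq_prod (w : κ → R) :
    cauchyKernel l w =
      ∏ i, PowerSeries.mk fun n => X i ^ n * C (PowerSeries.coeff n (completeSeries w)) := by
  rw [cauchyKernel, completeSeries, Fintype.prod_prod_type]
  refine Finset.prod_congr rfl fun i _ => ?_
  have hrescale : (PowerSeries.mk fun n => X i ^ n * C (PowerSeries.coeff n (completeSeries w))) =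
      PowerSeries.rescale (X i : MvPolynomial (Fin l) R)
        (PowerSeries.map (C (σ := Fin l)) (completeSeries w)) := by
    ext1 n
    simp
  rw [hrescale, completeSeries, map_prod, map_prod]
  refine Finset.prod_congr rfl fun k _ => ?_
  ext1 n
  simp [mul_pow]

theorem coeff_coeff_cauchyKernel (w : κ → R) (N : ℕ) (β : Fin l →₀ ℕ) :
    coeff β (PowerSeries.coeff N (cauchyKernel l w)) =
      if β.degree = N then ∏ i, PowerSeries.coeff (β i) (completeSeries w) else 0 := by
  have hmonomial (c : Fin l →₀ ℕ) :
      ∏ i, (X i ^ c i * C (PowerSeries.coeff (c i) (completeSeries w)) : MvPolynomial (Fin l) R) =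
        monomial c (∏ i, PowerSeries.coeff (c i) (completeSeries w)) := by
    rw [Finset.prod_mul_distrib, ← map_prod, mul_comm, monomial_eq, Finsupp.prod_fintype]
    simp
  simp only [cauchyKernel_eq_prod, PowerSeries.coeff_prod, PowerSeries.coeff_mk, hmonomial,
    coeff_sum, coeff_monomial]
  rw [Finset.sum_ite_eq']
  simp [Finset.mem_finsuppAntidiag, Finsupp.degree_eq_sum]

theorem coeff_monomial_mul_coeff_cauchyKernel (w : κ → R) (N : ℕ) (a b : Fin l →₀ ℕ) :
    coeff a (monomial b 1 * PowerSeries.coeff N (cauchyKernel l w)) =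
      if a.degree = N + b.degree then
        ∏ i, PowerSeries.coeff (a i) (PowerSeries.X ^ b i * completeSeries w) else 0 := by
  simp only [PowerSeries.coeff_X_pow_mul', coeff_monomial_mul', one_mul, coeff_coeff_cauchyKernel]
  by_cases hle : b ≤ a
  · have hdeg : (a - b).degree + b.degree = a.degree := by
      rw [← map_add, tsub_add_cancel_of_le hle]
    rw [if_pos hle]
    simp only [hle _, if_true]
    exact if_congr (by omega) rfl rfl
  · obtain ⟨i, hi⟩ : ∃ i, ¬ b i ≤ a i := by
      simpa [Finsupp.le_def] using hle
    rw [if_neg hle, Finset.prod_eq_zero (mem_univ i) (if_neg hi), ite_self]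

theorem coeff_alternant_mul_coeff_cauchyKernel (w : κ → R) (N : ℕ) (a : Fin l →₀ ℕ)
    (b : Fin l → ℕ) :
    coeff a (alternant R b * PowerSeries.coeff N (cauchyKernel l w)) =
      if a.degree = N + ∑ i, b i then
        (Matrix.of fun i k =>
          PowerSeries.coeff (a i) (PowerSeries.X ^ b k * completeSeries w)).det
      else 0 := by
  have hdeg (σ : Equiv.Perm (Fin l)) :
      (Finsupp.equivFunOnFinite.symm fun i => b (σ i)).degree = ∑ i, b i := by
    simpa [Finsupp.degree_eq_sum] using Equiv.sum_comp σ b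
  simp only [alternant_eq_sum_prod, prod_X_pow_eq_monomial_equivFunOnFinite, Finset.sum_mul,
    coeff_sum, smul_mul_assoc, coeff_smul, coeff_monomial_mul_coeff_cauchyKernel, hdeg]
  split_ifs
  · rw [← Matrix.det_transpose, Matrix.det_apply]
    rfl
  · simp

/-- The Cauchy identity, in the form of Frobenius' character formula: the power sums weighted by
the Weyl denominator are a reproducing system for the alternants of the right degree. -/
theorem sum_coeff_smul_weylDenominator_mul_cyclePowerSum {ι : Type*} [Fintype ι] [DecidableEq ι]
    (a : Fin l →₀ ℕ) :
    ∑ g : Equiv.Perm ι,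
        coeff a (weylDenominator R l * cyclePowerSum X g) •
          (weylDenominator R l * cyclePowerSum X g) =
      if a.degree = Fintype.card ι + ∑ i : Fin l, (i : ℕ) then
        ((Fintype.card ι)! : R) • alternant R a else 0 := by
  let x : Fin l → MvPolynomial (Fin l) R := X
  have hkernel : ∑ g : Equiv.Perm ι, MvPolynomial.map (C (σ := Fin l)) (cyclePowerSum X g) *
      C (cyclePowerSum x g) =
      (Fintype.card ι)! * PowerSeries.coeff (Fintype.card ι) (cauchyKernel l x) := by
    rw [cauchyKernel, ← sum_cyclePowerSum]
    refine Finset.sum_congr rfl fun g _ => ?_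
    rw [map_cyclePowerSum, map_cyclePowerSum, cyclePowerSum_mul_cyclePowerSum]
    simp [x]
  have hterm (g : Equiv.Perm ι) :
      coeff a (weylDenominator R l * cyclePowerSum X g) •
          (weylDenominator R l * cyclePowerSum X g) =
        coeff a (weylDenominator (MvPolynomial (Fin l) R) l *
          (MvPolynomial.map C (cyclePowerSum X g) * C (cyclePowerSum x g))) *
            weylDenominator R l := by
    rw [← mul_assoc, ← map_weylDenominator C, ← map_mul, mul_comm _ (C _), coeff_C_mul, coeff_map,
      smul_eq_C_mul]
    ring
  simp only [hterm, ← Finset.sum_mul, ← coeff_sum, ← Finset.mul_sum, hkernel]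
  rw [mul_left_comm, ← map_natCast C, coeff_C_mul, weylDenominator,
    coeff_alternant_mul_coeff_cauchyKernel]
  split_ifs
  · rw [mul_assoc, weylDenominator, alternant, ← det_pow_eq_det_completeSeries_mul,
      smul_eq_C_mul, map_natCast, alternant]
  · simp

end Cauchy

section CoeffPairing

open MvPolynomial

variable {R S σ τ : Type*} [CommRing R] [CommRing S]

/-- The symmetric bilinear form on polynomials for which the monomials are orthonormal. It stands
in for the constant-term (torus integral) inner product of Weyl's integration formula. -/
def coeffPairing : MvPolynomial σ R →ₗ[R] MvPolynomial σ R →ₗ[R] R :=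
  (basisMonomials σ R).constr R fun a => lcoeff R a

theorem coeffPairing_monomial_left (a : σ →₀ ℕ) (r : R) (f : MvPolynomial σ R) :
    coeffPairing (monomial a r) f = r * coeff a f := by
  have h : monomial a r = r • basisMonomials σ R a := by simp [smul_monomial]
  rw [h, map_smul, coeffPairing, Module.Basis.constr_basis]
  rfl

theorem coeffPairing_eq_sum (f g : MvPolynomial σ R) :
    coeffPairing f g = ∑ a ∈ f.support, coeff a f * coeff a g := by
  conv_lhs => rw [f.as_sum, map_sum, LinearMap.sum_apply]
  simp only [coeffPairing_monomial_left]

theorem map_coeffPairing (T : R →+* S) (f g : MvPolynomial σ R) :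
    coeffPairing (MvPolynomial.map T f) (MvPolynomial.map T g) = T (coeffPairing f g) := by
  induction f using MvPolynomial.induction_on' with
  | monomial a r => simp [coeffPairing_monomial_left, coeff_map]
  | add p q hp hq => simp [hp, hq]

theorem coeffPairing_map_of_monomial_injective {θ : (σ →₀ ℕ) → τ →₀ ℕ} (hθ : Function.Injective θ)
    (T : MvPolynomial σ R →ₗ[R] MvPolynomial τ R) (hT : ∀ a, T (monomial a 1) = monomial (θ a) 1)
    (f g : MvPolynomial σ R) :
    coeffPairing (T f) (T g) = coeffPairing f g := by
  classical
  have h : (coeffPairing.compl₁₂ T T : MvPolynomial σ R →ₗ[R] MvPolynomial σ R →ₗ[R] R) =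
      coeffPairing := by
    refine LinearMap.ext_basis (basisMonomials σ R) (basisMonomials σ R) fun a b => ?_
    simp [hT, coeffPairing_monomial_left, coeff_monomial, hθ.eq_iff]
  exact LinearMap.congr_fun₂ h f g

theorem coeffPairing_rename {e : σ → τ} (he : Function.Injective e) (f g : MvPolynomial σ R) :
    coeffPairing (rename e f) (rename e g) = coeffPairing f g :=
  coeffPairing_map_of_monomial_injective (Finsupp.mapDomain_injective he) (rename e).toLinearMap
    (fun a => by simp [rename_monomial]) f g

theorem coeffPairing_monomial_mul_expand {p : ℕ} (hp : p ≠ 0) (e : σ →₀ ℕ)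
    (f g : MvPolynomial σ R) :
    coeffPairing (monomial e 1 * expand p f) (monomial e 1 * expand p g) = coeffPairing f g := by
  refine coeffPairing_map_of_monomial_injective (θ := fun a => e + p • a) (fun a b h => ?_)
    (LinearMap.mulLeft R (monomial e 1) ∘ₗ (expand p).toLinearMap) (fun a => ?_) f g
  · exact smul_right_injective _ hp (add_left_cancel h)
  · simp [expand_monomial, monomial_mul]

theorem coeffPairing_monomial_mul_expand_eq_zero {p : ℕ} {a b : σ →₀ ℕ} {k : σ}
    (hk : ¬ a k ≡ b k [MOD p]) (f g : MvPolynomial σ R) :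
    coeffPairing (monomial a 1 * expand p f) (monomial b 1 * expand p g) = 0 := by
  classical
  have h : (coeffPairing.compl₁₂
      (LinearMap.mulLeft R (monomial a 1) ∘ₗ (expand p).toLinearMap)
      (LinearMap.mulLeft R (monomial b 1) ∘ₗ (expand p).toLinearMap) :
        MvPolynomial σ R →ₗ[R] MvPolynomial σ R →ₗ[R] R) = 0 := by
    refine LinearMap.ext_basis (basisMonomials σ R) (basisMonomials σ R) fun c d => ?_
    have hne : b + p • d ≠ a + p • c := fun h => hk <| by
      have := congrArg (· % p) (DFunLike.congr_fun h k)
      simpa [Nat.ModEq] using this.symm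
    simp [expand_monomial, monomial_mul, coeffPairing_monomial_left, coeff_monomial, hne]
  exact LinearMap.congr_fun₂ h f g

theorem coeffPairing_eq_zero_of_isHomogeneous {f g : MvPolynomial σ R} {m n : ℕ}
    (hf : f.IsHomogeneous m) (hg : g.IsHomogeneous n) (hmn : m ≠ n) : coeffPairing f g = 0 := by
  rw [coeffPairing_eq_sum]
  refine Finset.sum_eq_zero fun a ha => ?_
  rw [hg.coeff_eq_zero, mul_zero]
  have hdeg : a.degree = m := by
    rw [Finsupp.degree_eq_weight_one]
    exact hf (mem_support_iff.1 ha)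
  rwa [hdeg]

theorem coeffPairing_rename_inl_mul_rename_inr (f₁ g₁ : MvPolynomial σ R)
    (f₂ g₂ : MvPolynomial τ R) :
    coeffPairing (rename Sum.inl f₁ * rename Sum.inr f₂) (rename Sum.inl g₁ * rename Sum.inr g₂) =
      coeffPairing f₁ g₁ * coeffPairing f₂ g₂ := by
  classical
  have hinj (a a' : σ →₀ ℕ) (b b' : τ →₀ ℕ) :
      Finsupp.mapDomain Sum.inl a + Finsupp.mapDomain Sum.inr b =
        Finsupp.mapDomain Sum.inl a' + Finsupp.mapDomain Sum.inr b' ↔ a = a' ∧ b = b' := by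
    refine ⟨fun h => ⟨Finsupp.ext fun x => ?_, Finsupp.ext fun x => ?_⟩, fun h => by rw [h.1, h.2]⟩
    · simpa [Finsupp.mapDomain_apply Sum.inl_injective, Finsupp.mapDomain_of_notMem_range] using
        DFunLike.congr_fun h (Sum.inl x)
    · simpa [Finsupp.mapDomain_apply Sum.inr_injective, Finsupp.mapDomain_of_notMem_range] using
        DFunLike.congr_fun h (Sum.inr x)
  induction f₁ using MvPolynomial.induction_on' with
  | add p q hp hq => simp only [map_add, add_mul, LinearMap.add_apply, hp, hq]
  | monomial a r =>
  induction f₂ using MvPolynomial.induction_on' with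
  | add p q hp hq => simp only [map_add, mul_add, LinearMap.add_apply, hp, hq]
  | monomial b s =>
  induction g₁ using MvPolynomial.induction_on' with
  | add p q hp hq => simp only [map_add, add_mul, hp, hq]
  | monomial a' r' =>
  induction g₂ using MvPolynomial.induction_on' with
  | add p q hp hq => simp only [map_add, mul_add, hp, hq]
  | monomial b' s' =>
    simp only [rename_monomial, monomial_mul, coeffPairing_monomial_left, coeff_monomial, hinj]
    split_ifs <;> grind

end CoeffPairing

section Alternating

open MvPolynomial

variable {R κ : Type*} [CommRing R] [Fintype κ] [DecidableEq κ]

/-- An antisymmetric polynomial: permuting the variables multiplies it by the sign. -/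
def IsAlternating (f : MvPolynomial κ R) : Prop :=
  ∀ σ : Equiv.Perm κ, rename σ f = Equiv.Perm.sign σ • f

theorem isAlternating_alternant (a : κ → ℕ) : IsAlternating (alternant R a) :=
  fun σ => rename_perm_alternant σ a

theorem IsAlternating.mul_isSymmetric {f p : MvPolynomial κ R} (hf : IsAlternating f)
    (hp : p.IsSymmetric) : IsAlternating (f * p) :=
  fun σ => by rw [map_mul, hf σ, hp σ, smul_mul_assoc]

theorem IsAlternating.coeffPairing_alternant_mul {f p : MvPolynomial κ R} (hf : IsAlternating f)
    (hp : p.IsSymmetric) (a : κ → ℕ) :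
    coeffPairing (alternant R a * p) f =
      (Fintype.card κ)! * coeffPairing ((∏ i, X i ^ a i) * p) f := by
  have hterm (σ : Equiv.Perm κ) :
      coeffPairing (Equiv.Perm.sign σ • (∏ i, X i ^ a (σ i)) * p) f =
        coeffPairing ((∏ i, X i ^ a i) * p) f := by
    have hrename : (∏ i, X i ^ a (σ i)) * p = rename ⇑σ⁻¹ ((∏ i, X i ^ a i) * p) := by
      rw [map_mul, hp, map_prod, ← Equiv.prod_comp σ fun i => rename _ _]
      simp
    have hf' : f = Equiv.Perm.sign σ • rename ⇑σ⁻¹ f := by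
      rw [hf, Equiv.Perm.sign_inv, smul_smul, Int.units_mul_self, one_smul]
    conv_lhs => rw [smul_mul_assoc, hrename, hf']
    rw [Units.smul_def, Units.smul_def, map_zsmul, map_zsmul, LinearMap.smul_apply, smul_smul,
      ← Units.val_mul, Int.units_mul_self, Units.val_one, one_smul,
      coeffPairing_rename (Equiv.injective _)]
  rw [alternant_eq_sum_prod, Finset.sum_mul, map_sum, LinearMap.sum_apply]
  simp only [hterm]
  rw [Finset.sum_const, Finset.card_univ, Fintype.card_perm, nsmul_eq_mul]

theorem IsAlternating.coeffPairing_alternant {f : MvPolynomial κ R} (hf : IsAlternating f)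
    (a : κ →₀ ℕ) : coeffPairing (alternant R a) f = (Fintype.card κ)! * coeff a f := by
  have h := hf.coeffPairing_alternant_mul IsSymmetric.one a
  rwa [mul_one, mul_one, prod_X_pow_eq_monomial_equivFunOnFinite, coeffPairing_monomial_left,
    one_mul, Finsupp.equivFunOnFinite_symm_coe] at h

end Alternating

section Reproducing

open MvPolynomial

variable {ι κ : Type*} [Fintype ι] [Fintype κ] [DecidableEq κ]
  {S : ι → MvPolynomial κ ℤ}

theorem coeff_alternant_self_le_one (a : κ →₀ ℕ) : coeff a (alternant ℤ a) ≤ 1 := by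
  by_cases ha : Function.Injective a
  · rw [coeff_alternant_self_of_injective ha]
  · rw [alternant_eq_zero_of_not_injective ha, coeff_zero]
    exact zero_le_one

/-- Integrality makes a reproducing system of the alternants consist of alternants up to sign: the
squares of the coefficients of `X ^ a` sum to at most one. -/
theorem exists_eq_smul_alternant_of_reproducing
    (hS : ∀ a : κ →₀ ℕ, ∑ i, coeff a (S i) • S i = alternant ℤ a ∨ ∑ i, coeff a (S i) • S i = 0)
    {j : ι} (hj : S j ≠ 0) :
    ∃ (a : κ →₀ ℕ) (ε : ℤˣ), Function.Injective a ∧ S j = ε • alternant ℤ a ∧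
      ∀ i ≠ j, coeff a (S i) = 0 := by
  classical
  obtain ⟨a, ha⟩ := ne_zero_iff.1 hj
  have hsq : ∑ i, coeff a (S i) ^ 2 ≤ 1 := by
    have hcoeff : ∑ i, coeff a (S i) ^ 2 = coeff a (∑ i, coeff a (S i) • S i) := by
      simp only [coeff_sum, coeff_smul, smul_eq_mul, sq]
    rw [hcoeff]
    rcases hS a with h | h <;> rw [h]
    · exact coeff_alternant_self_le_one a
    · simp
  rw [← Finset.add_sum_erase _ _ (mem_univ j)] at hsq
  have hrest_nonneg : 0 ≤ ∑ i ∈ univ.erase j, coeff a (S i) ^ 2 :=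
    Finset.sum_nonneg fun i _ => sq_nonneg _
  have hpos : 0 < coeff a (S j) ^ 2 := by positivity
  have hrest : ∀ i ≠ j, coeff a (S i) = 0 := fun i hi => by
    have := (Finset.sum_eq_zero_iff_of_nonneg fun i _ => sq_nonneg (coeff a (S i))).1
      (show ∑ i ∈ univ.erase j, coeff a (S i) ^ 2 = 0 by omega) i (by simp [hi])
    exact pow_eq_zero_iff two_ne_zero |>.1 this
  obtain ⟨ε, hε⟩ : IsUnit (coeff a (S j)) :=
    IsUnit.of_mul_eq_one (coeff a (S j)) (by rw [← sq]; omega)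
  have hsum : ∑ i, coeff a (S i) • S i = ε • S j := by
    rw [Finset.sum_eq_single j (fun i _ hi => by rw [hrest i hi, zero_smul]) (by simp),
      ← hε, Units.smul_def]
  have hne : ε • S j ≠ 0 := (smul_ne_zero_iff_ne ε).2 hj
  have halt : ε • S j = alternant ℤ a := by
    rcases hS a with h | h <;> rw [hsum] at h
    exacts [h, absurd h hne]
  refine ⟨a, ε, ?_, ?_, hrest⟩
  · by_contra hinj
    exact hne (halt.trans (alternant_eq_zero_of_not_injective hinj))
  · rw [← halt, smul_smul, Int.units_mul_self, one_smul]

theorem coeffPairing_eq_ite_of_reproducing [DecidableEq ι]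
    (hS : ∀ a : κ →₀ ℕ, ∑ i, coeff a (S i) • S i = alternant ℤ a ∨ ∑ i, coeff a (S i) • S i = 0)
    (hne : ∀ i, S i ≠ 0) (i j : ι) :
    coeffPairing (S i) (S j) = if i = j then ((Fintype.card κ)! : ℤ) else 0 := by
  obtain ⟨a, ε, ha, hi, hcoeff⟩ := exists_eq_smul_alternant_of_reproducing hS (hne i)
  obtain ⟨b, η, -, hj, -⟩ := exists_eq_smul_alternant_of_reproducing hS (hne j)
  have halt : IsAlternating (S j) := fun σ => by
    rw [hj, Units.smul_def η, map_zsmul, isAlternating_alternant, smul_comm]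
  rw [hi, Units.smul_def, map_zsmul, LinearMap.smul_apply, halt.coeffPairing_alternant, smul_eq_mul]
  split_ifs with hij
  · subst hij
    rw [hi, Units.smul_def, coeff_smul, coeff_alternant_self_of_injective ha, smul_eq_mul, mul_one,
      mul_left_comm, ← Units.val_mul, Int.units_mul_self, Units.val_one, mul_one]
  · rw [hcoeff j (Ne.symm hij), mul_zero, mul_zero]

end Reproducing

section StandardBasis

attribute [local instance] arrowAction

variable {N l : ℕ}

open Classical in
/-- The permutations of `Fin N` without increasing subsequences longer than `l`. -/
def boundedLIS (N l : ℕ) : Finset (Equiv.Perm (Fin N)) := {π | lisLE π l}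

theorem mem_boundedLIS {π : Equiv.Perm (Fin N)} : π ∈ boundedLIS N l ↔ lisLE π l := by
  simp [boundedLIS]

/-- Greedy colouring: colour `i` by the length of the longest increasing subsequence that starts
at `i`. -/
theorem exists_antitone_coloring_of_lisLE {π : Equiv.Perm (Fin N)} (hπ : lisLE π l) :
    ∃ w : Fin N → Fin l, ∀ i j, i < j → w i = w j → π j < π i := by
  classical
  let StartsChain (i : Fin N) (k : ℕ) : Prop :=
    ∃ f : Fin (k + 1) → Fin N, StrictMono f ∧ StrictMono (π ∘ f) ∧ f 0 = i
  have chain_zero (i) : StartsChain i 0 :=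
    ⟨fun _ => i, fun a b hab => by omega, fun a b hab => by omega, rfl⟩
  have chain_lt {i k} : StartsChain i k → k < l := by
    rintro ⟨f, hf, hπf, -⟩
    exact hπ _ f hf hπf
  have chain_cons {i j k} (hij : i < j) (hπij : π i < π j) :
      StartsChain j k → StartsChain i (k + 1) := by
    rintro ⟨f, hf, hπf, rfl⟩
    refine ⟨Matrix.vecCons i f, strictMono_vecCons.2 ⟨hij, hf⟩, ?_, rfl⟩
    have hcons : π ∘ Matrix.vecCons i f = Matrix.vecCons (π i) (π ∘ f) := Fin.comp_cons _ _ _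
    exact hcons ▸ strictMono_vecCons.2 ⟨hπij, hπf⟩
  let height (i : Fin N) : ℕ := Nat.findGreatest (StartsChain i) l
  have chain_height (i) : StartsChain i (height i) :=
    Nat.findGreatest_spec (Nat.zero_le l) (chain_zero i)
  refine ⟨fun i => ⟨height i, chain_lt (chain_height i)⟩, fun i j hij hw => ?_⟩
  by_contra! hle
  have hchain := chain_cons hij (hle.lt_of_ne (π.injective.ne hij.ne)) (chain_height j)
  have hheight : height j + 1 ≤ height i := Nat.le_findGreatest (chain_lt hchain).le hchain
  exact hheight.not_gt (Nat.lt_succ_of_le (Fin.mk.inj hw).le)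

theorem exists_fixed_below_lt_apply {τ : Equiv.Perm (Fin N)} (hτ : τ ≠ 1) :
    ∃ k, (∀ i < k, τ i = i) ∧ k < τ k := by
  obtain ⟨k, hk, hmin⟩ := wellFounded_lt.has_min {i | τ i ≠ i}
    (by simpa [Set.Nonempty, Equiv.ext_iff] using hτ)
  have hfix (i) (hi : i < k) : τ i = i := by_contra fun h => hmin i h hi
  exact ⟨k, hfix, (Ne.lt_or_gt hk).resolve_left fun h => hk (τ.injective (hfix _ h))⟩

theorem toLex_lt_of_smul_eq {s t : Equiv.Perm (Fin N)} {w : Fin N → Fin l}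
    (hw : ∀ i j, i < j → w i = w j → s j < s i) (hst : s • w = t • w) (hne : s ≠ t) :
    toLex (⇑t) < toLex ⇑s := by
  obtain ⟨k, hfix, hlt⟩ := exists_fixed_below_lt_apply (τ := s⁻¹ * t) (by rwa [Ne, inv_mul_eq_one])
  have hwk : w ∘ (s⁻¹ * t) = w := by
    rw [← perm_smul_word_eq_iff, mul_smul, ← hst, inv_smul_smul]
  refine ⟨k, fun i hi => ?_, ?_⟩
  · exact (Equiv.Perm.inv_eq_iff_eq.1 (hfix i hi))
  · simpa using hw _ _ hlt (congrFun hwk k).symm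

theorem linearIndependent_actionMatrix_boundedLIS (K : Type*) [Field K] :
    LinearIndependent K fun s : boundedLIS N l =>
      actionMatrix K (Fin N → Fin l) (s : Equiv.Perm (Fin N)) := by
  rw [Fintype.linearIndependent_iff]
  intro c hc s
  have hwf : WellFounded fun s t : boundedLIS N l => toLex ⇑s.1 < toLex ⇑t.1 :=
    InvImage.wf _ wellFounded_lt
  induction s using hwf.induction with
  | _ s ih =>
  obtain ⟨w, hw⟩ := exists_antitone_coloring_of_lisLE (mem_boundedLIS.1 s.2)
  have hentry := congrFun₂ hc (s.1 • w) w
  rw [Matrix.sum_apply, Finset.sum_eq_single s] at hentry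
  · simpa [actionMatrix_apply] using hentry
  · intro t _ hts
    by_cases hst : s.1 • w = t.1 • w
    · rw [ih t (toLex_lt_of_smul_eq hw hst fun h => hts (Subtype.ext h.symm)), zero_smul,
        Matrix.zero_apply]
    · simp [actionMatrix_apply, hst]
  · simp

theorem viaEmbedding_swap_smul_of_apply_eq {k : ℕ} (f : Fin k ↪ Fin N) {i j : Fin k}
    {u : Fin N → Fin l} (hu : u (f i) = u (f j)) :
    (Equiv.swap i j).viaEmbedding f • u = u := by
  rw [perm_smul_word_eq_iff]
  funext p
  by_cases hp : p ∈ Set.range f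
  · obtain ⟨q, rfl⟩ := hp
    rw [Function.comp_apply, Equiv.Perm.viaEmbedding_apply, Equiv.swap_apply_def]
    split_ifs with hqi hqj
    · rw [hqi, hu]
    · rw [hqj, hu]
    · rfl
  · rw [Function.comp_apply, Equiv.Perm.viaEmbedding_apply_of_notMem _ _ _ hp]

/-- Antisymmetrizing more than `l` positions of a word kills it, as two of them carry the same
letter. -/
theorem sum_sign_smul_actionMatrix_viaEmbedding (K : Type*) [Field K]
    (π : Equiv.Perm (Fin N)) {k : ℕ} (f : Fin k ↪ Fin N) (hk : l < k) :
    ∑ τ : Equiv.Perm (Fin k),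
      Equiv.Perm.sign τ • actionMatrix K (Fin N → Fin l) (π * τ.viaEmbedding f) = 0 := by
  ext u v
  obtain ⟨i, j, hij, hv⟩ := Fintype.exists_ne_map_eq_of_card_lt (v ∘ f) (by simpa)
  rw [Matrix.sum_apply, Matrix.zero_apply]
  refine Finset.sum_involution (fun τ _ => τ * Equiv.swap i j) (fun τ _ => ?_) (fun τ _ _ => ?_)
    (fun _ _ => mem_univ _) fun τ _ => ?_
  · have hmul : (τ * Equiv.swap i j).viaEmbedding f =
        τ.viaEmbedding f * (Equiv.swap i j).viaEmbedding f :=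
      map_mul (Equiv.Perm.viaEmbeddingHom f) τ (Equiv.swap i j)
    rw [hmul, Matrix.smul_apply, Matrix.smul_apply, actionMatrix_apply, actionMatrix_apply,
      ← mul_assoc, mul_smul (π * _), viaEmbedding_swap_smul_of_apply_eq f hv]
    rw [Equiv.Perm.sign_mul, Equiv.Perm.sign_swap hij, mul_neg_one, Units.neg_smul,
      add_neg_cancel]
  · simpa using hij
  · simp [mul_assoc]

theorem toLex_lt_mul_viaEmbedding {π : Equiv.Perm (Fin N)} {k : ℕ} {f : Fin k → Fin N}
    (hf : StrictMono f) (hπf : StrictMono fun p => π (f p)) {τ : Equiv.Perm (Fin k)} (hτ : τ ≠ 1) :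
    toLex ⇑π < toLex ⇑(π * τ.viaEmbedding ⟨f, hf.injective⟩) := by
  obtain ⟨p, hfix, hlt⟩ := exists_fixed_below_lt_apply hτ
  have hτf (q) : τ.viaEmbedding ⟨f, hf.injective⟩ (f q) = f (τ q) :=
    Equiv.Perm.viaEmbedding_apply τ ⟨f, hf.injective⟩ q
  refine ⟨f p, fun i hi => congrArg π ?_, ?_⟩
  · by_cases hrange : i ∈ Set.range f
    · obtain ⟨q, rfl⟩ := hrange
      exact ((hτf q).trans (congrArg f (hfix q (hf.lt_iff_lt.1 hi)))).symm
    · exact (Equiv.Perm.viaEmbedding_apply_of_notMem τ ⟨f, hf.injective⟩ i hrange).symm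
  · exact (hπf hlt).trans_eq (congrArg π (hτf p).symm)

theorem actionMatrix_mem_span_boundedLIS (K : Type*) [Field K]
    (π : Equiv.Perm (Fin N)) :
    actionMatrix K (Fin N → Fin l) π ∈
      Submodule.span K (Set.range fun s : boundedLIS N l =>
        actionMatrix K (Fin N → Fin l) (s : Equiv.Perm (Fin N))) := by
  have hwf : WellFounded fun s t : Equiv.Perm (Fin N) => toLex ⇑t < toLex ⇑s :=
    InvImage.wf _ wellFounded_gt
  induction π using hwf.induction with
  | _ π ih =>
  by_cases hπ : lisLE π l
  · exact Submodule.subset_span ⟨⟨π, mem_boundedLIS.2 hπ⟩, rfl⟩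
  · simp only [lisLE, not_forall, not_le] at hπ
    obtain ⟨k, f, hf, hπf, hk⟩ := hπ
    have hsum := sum_sign_smul_actionMatrix_viaEmbedding K π ⟨f, hf.injective⟩ hk
    have hone : (1 : Equiv.Perm (Fin k)).viaEmbedding ⟨f, hf.injective⟩ = 1 :=
      map_one (Equiv.Perm.viaEmbeddingHom ⟨f, hf.injective⟩)
    rw [← Finset.add_sum_erase _ _ (mem_univ 1), hone, Equiv.Perm.sign_one, mul_one,
      one_smul] at hsum
    rw [eq_neg_of_add_eq_zero_left hsum]
    refine neg_mem (sum_mem fun τ hτ => ?_)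
    rw [Units.smul_def]
    exact zsmul_mem (ih _ (toLex_lt_mul_viaEmbedding hf hπf (Finset.ne_of_mem_erase hτ))) _

end StandardBasis

section WeylFormula

open MvPolynomial

attribute [local instance] arrowAction

variable {ι κ I : Type*} [Fintype ι] [DecidableEq ι] [Fintype κ] [DecidableEq κ] [Fintype I]

/-- The generating polynomial of multiplicities of contents of words. For the multiplicities of an
irreducible character of the symmetric group it is a Schur polynomial. -/
def contentPolynomial (ι : Type*) [Fintype ι] [DecidableEq ι] (m : (κ →₀ ℕ) → ℕ) :
    MvPolynomial κ ℤ :=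
  ∑ c ∈ univ.image (content : (ι → κ) → κ →₀ ℕ), monomial c (m c : ℤ)

theorem coeff_contentPolynomial (m : (κ →₀ ℕ) → ℕ) (u : ι → κ) :
    coeff (content u) (contentPolynomial ι m) = m (content u) := by
  simp [contentPolynomial, coeff_sum, coeff_monomial]

theorem cyclePowerSum_X_eq_sum_contentPolynomial {K : Type*} [CommRing K] {m : I → (κ →₀ ℕ) → ℕ}
    {g : Equiv.Perm ι} {z : I → K}
    (hm : ∀ c, (#{u : ι → κ | g • u = u ∧ content u = c} : K) = ∑ i, m i c * z i) :
    cyclePowerSum X g =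
      ∑ i, z i • MvPolynomial.map (Int.castRingHom K) (contentPolynomial ι (m i)) := by
  have hprod (u : ι → κ) : ∏ i, (X (u i) : MvPolynomial κ K) = monomial (content u) 1 := by
    rw [content, monomial_sum_one]
    rfl
  calc cyclePowerSum X g
      = ∑ c ∈ univ.image (content : (ι → κ) → κ →₀ ℕ),
          ∑ u : ι → κ with g • u = u ∧ content u = c, (monomial c 1 : MvPolynomial κ K) := by
        rw [cyclePowerSum, ← Finset.sum_fiberwise_of_maps_to
          fun u _ => Finset.mem_image_of_mem content (mem_univ u)]
        simp only [← perm_smul_word_eq_iff, Finset.filter_filter, hprod]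
        refine Finset.sum_congr rfl fun c _ => Finset.sum_congr rfl fun u hu => ?_
        rw [(Finset.mem_filter.1 hu).2.2]
    _ = ∑ c ∈ univ.image (content : (ι → κ) → κ →₀ ℕ), monomial c (∑ i, m i c * z i) := by
        simp only [Finset.sum_const, ← hm, nsmul_eq_mul, ← map_natCast (C (σ := κ) (R := K)),
          C_mul_monomial, mul_one]
    _ = _ := by
        simp only [contentPolynomial, map_sum, map_monomial, Finset.smul_sum]
        rw [Finset.sum_comm]
        simp [smul_monomial, mul_comm]

variable {K : Type*} [CommRing K] [IsDomain K] [CharZero K] {l : ℕ} {χ : I → Equiv.Perm ι → K}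
  {S : I → MvPolynomial (Fin l) ℤ}

theorem sum_coeff_smul_eq_alternant_or_eq_zero [DecidableEq I]
    (hχ : ∀ i j, ∑ g, χ i g * χ j g⁻¹ = if i = j then ((Fintype.card ι)! : K) else 0)
    (hS : ∀ g, weylDenominator K l * cyclePowerSum X g =
      ∑ i, χ i g • MvPolynomial.map (Int.castRingHom K) (S i)) (a : Fin l →₀ ℕ) :
    ∑ i, coeff a (S i) • S i = alternant ℤ a ∨ ∑ i, coeff a (S i) • S i = 0 := by
  let T (i : I) := MvPolynomial.map (Int.castRingHom K) (S i)
  have hreproduce : ((Fintype.card ι)! : K) • ∑ i, coeff a (T i) • T i =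
      if a.degree = Fintype.card ι + ∑ i : Fin l, (i : ℕ) then
        ((Fintype.card ι)! : K) • alternant K a else 0 := by
    rw [← sum_coeff_smul_weylDenominator_mul_cyclePowerSum]
    calc _ = ∑ i, ∑ j, ∑ g, (χ i g * χ j g⁻¹) • coeff a (T i) • T j := by
          simp only [← Finset.sum_smul, hχ, ite_smul, zero_smul, Finset.sum_ite_eq, mem_univ,
            if_true, Finset.smul_sum]
      _ = ∑ g, ∑ i, ∑ j, (χ i g * χ j g⁻¹) • coeff a (T i) • T j := Finset.sum_comm_cycle
      _ = ∑ g : Equiv.Perm ι, coeff a (weylDenominator K l * cyclePowerSum X g) •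
            (weylDenominator K l * cyclePowerSum X g⁻¹) := by
          simp only [hS, T, coeff_sum, coeff_smul, Finset.sum_smul_sum, smul_smul, smul_eq_mul,
            mul_right_comm]
      _ = _ := by simp only [cyclePowerSum_inv]
  have hcast : MvPolynomial.map (Int.castRingHom K) (∑ i, coeff a (S i) • S i) =
      ∑ i, coeff a (T i) • T i := by
    simp only [T, smul_eq_C_mul, map_sum, map_mul, map_C, coeff_map]
  have hinj := map_injective (σ := Fin l) (Int.castRingHom K) Int.cast_injective
  have hfact : ((Fintype.card ι)! : K) ≠ 0 := Nat.cast_ne_zero.2 (Nat.factorial_ne_zero _)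
  split_ifs at hreproduce
  · exact .inl <| hinj <| by rw [hcast, map_alternant, smul_right_injective _ hfact hreproduce]
  · exact .inr <| hinj <| by rw [hcast, map_zero, (smul_eq_zero_iff_right hfact).1 hreproduce]

theorem factorial_mul_sum_mul_inv_eq_coeffPairing [DecidableEq I]
    (hχ : ∀ i j, ∑ g, χ i g * χ j g⁻¹ = if i = j then ((Fintype.card ι)! : K) else 0)
    (hS : ∀ g, weylDenominator K l * cyclePowerSum X g =
      ∑ i, χ i g • MvPolynomial.map (Int.castRingHom K) (S i)) (hne : ∀ i, S i ≠ 0)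
    (g : Equiv.Perm ι) :
    (l ! : K) * ∑ i, χ i g * χ i g⁻¹ =
      coeffPairing (weylDenominator K l * cyclePowerSum X g)
        (weylDenominator K l * cyclePowerSum X g) := by
  have hortho := coeffPairing_eq_ite_of_reproducing
    (sum_coeff_smul_eq_alternant_or_eq_zero hχ hS) hne
  calc (l ! : K) * ∑ i, χ i g * χ i g⁻¹
      = coeffPairing (weylDenominator K l * cyclePowerSum X g)
          (weylDenominator K l * cyclePowerSum X g⁻¹) := by
        simp [hS, map_coeffPairing, hortho, Finset.mul_sum, mul_assoc, mul_comm,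
          mul_left_comm]
    _ = _ := by rw [cyclePowerSum_inv]

end WeylFormula

section Counting

open MvPolynomial

attribute [local instance] arrowAction

variable {N l : ℕ}

theorem isSymmetric_cyclePowerSum_X {ι κ R : Type*} [Fintype ι] [DecidableEq ι] [Fintype κ]
    [DecidableEq κ] [CommSemiring R] (g : Equiv.Perm ι) :
    (cyclePowerSum (X : κ → MvPolynomial κ R) g).IsSymmetric := by
  intro σ
  rw [← AlgHom.coe_toRingHom, map_cyclePowerSum]
  refine Finset.sum_equiv ((Equiv.refl ι).arrowCongr σ) (fun u => ?_) fun u _ => ?_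
  · simp [funext_iff]
  · simp

/-- For symmetric `f` this is the squared `L²` norm of `f` on the unitary group `U(l)`, viewed as a
class function of the eigenvalues. Weyl's integration formula has a factor `1 / l!`, which is absent
here because one of the two Weyl denominators is replaced by its leading term. -/
def weylNormSq {R : Type*} [CommRing R] (f : MvPolynomial (Fin l) R) : R :=
  coeffPairing ((∏ i : Fin l, X i ^ (i : ℕ)) * f) (weylDenominator R l * f)

theorem card_conj_fixed_boundedLIS {g : Equiv.Perm (Fin N)}
    (hg : ∀ π ∈ boundedLIS N l, g * π * g⁻¹ ∈ boundedLIS N l) :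
    (#{π ∈ boundedLIS N l | g * π * g⁻¹ = π} : ℤ) =
      weylNormSq (cyclePowerSum (X : Fin l → MvPolynomial (Fin l) ℤ) g) := by
  obtain ⟨r, χ, m, hm, hχ, hne, hcount⟩ := exists_character_decomposition ℂ
    (G := Equiv.Perm (Fin N)) (X := Fin N → Fin l) (wt := content) content_smul
  rw [Nat.card_eq_fintype_card, Fintype.card_perm] at hχ
  let S (i : Fin r) := weylDenominator ℤ l * contentPolynomial (Fin N) (m i)
  have hS (g) : weylDenominator ℂ l * cyclePowerSum X g =
      ∑ i, χ i g • MvPolynomial.map (Int.castRingHom ℂ) (S i) := by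
    simp only [cyclePowerSum_X_eq_sum_contentPolynomial (hm g), Finset.mul_sum, mul_smul_comm, S,
      map_mul, map_weylDenominator]
  have hS_ne (i) : S i ≠ 0 := by
    obtain ⟨u, hu⟩ := hne i
    refine mul_ne_zero weylDenominator_ne_zero (ne_zero_iff.2 ⟨content u, ?_⟩)
    rwa [coeff_contentPolynomial, Nat.cast_ne_zero]
  have hweyl : (l ! : ℤ) * #{π ∈ boundedLIS N l | g * π * g⁻¹ = π} =
      coeffPairing (weylDenominator ℤ l * cyclePowerSum X g)
        (weylDenominator ℤ l * cyclePowerSum X g) := by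
    have hmap : MvPolynomial.map (Int.castRingHom ℂ) (weylDenominator ℤ l * cyclePowerSum X g) =
        weylDenominator ℂ l * cyclePowerSum X g := by
      rw [map_mul, map_weylDenominator, map_cyclePowerSum]
      simp [Function.comp_def]
    have h := factorial_mul_sum_mul_inv_eq_coeffPairing hχ hS hS_ne g
    rw [← hcount _ g (linearIndependent_actionMatrix_boundedLIS ℂ)
      (actionMatrix_mem_span_boundedLIS ℂ) hg] at h
    rw [← hmap, map_coeffPairing, eq_intCast] at h
    exact_mod_cast h
  have hsymm := isSymmetric_cyclePowerSum_X (κ := Fin l) (R := ℤ) g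
  have halt := (isAlternating_alternant fun i : Fin l => (i : ℕ)).mul_isSymmetric hsymm
  refine mul_left_cancel₀ (Nat.cast_ne_zero.2 (Nat.factorial_ne_zero l)) (hweyl.trans ?_)
  rw [weylNormSq, weylDenominator, halt.coeffPairing_alternant_mul hsymm, Fintype.card_fin]

theorem permCount_eq_weylNormSq (n l : ℕ) :
    (permCount n l : ℤ) = weylNormSq (psum (Fin l) ℤ 1 ^ n) := by
  have h := card_conj_fixed_boundedLIS (N := n) (l := l) (g := 1) (by simp)
  rw [cyclePowerSum_one, Fintype.card_fin] at h
  simp only [one_mul, inv_one, mul_one, Finset.filter_true] at h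
  rw [permCount, psum_one, ← h, Nat.subtype_card _ fun _ => mem_boundedLIS]

end Counting

section Reversal

open MvPolynomial

variable {ι ι' κ R : Type*} [Fintype ι] [DecidableEq ι] [Fintype ι'] [DecidableEq ι'] [Fintype κ]
  [DecidableEq κ] [CommSemiring R]

theorem cyclePowerSum_permCongr (e : ι ≃ ι') (w : κ → R) (g : Equiv.Perm ι) :
    cyclePowerSum w (e.permCongr g) = cyclePowerSum w g := by
  refine (Finset.sum_equiv (e.arrowCongr (Equiv.refl κ)) (fun u => ?_) fun u _ => ?_).symm
  · simp [funext_iff, e.symm.forall_congr_left]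
  · simpa using (e.symm.prod_comp fun i => w (u i)).symm

theorem cyclePowerSum_sumComm (w : κ → R) :
    cyclePowerSum w (Equiv.sumComm ι ι) = (∑ k, w k ^ 2) ^ Fintype.card ι := by
  rw [← Finset.card_univ, ← Finset.prod_const, Finset.prod_univ_sum, Fintype.piFinset_univ,
    cyclePowerSum]
  have hswap (u : ι ⊕ ι → κ) : u ∘ Equiv.sumComm ι ι = u ↔ u ∘ Sum.inl = u ∘ Sum.inr := by
    simp only [funext_iff, Sum.forall, Function.comp_apply, Equiv.sumComm_apply, Sum.swap_inl,
      Sum.swap_inr]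
    exact ⟨fun h => h.2, fun h => ⟨fun i => (h i).symm, h⟩⟩
  refine Finset.sum_bij' (fun u _ => u ∘ Sum.inl) (fun v _ => Sum.elim v v) (by simp)
    (by simp) (fun u hu => ?_) (by simp) fun u hu => ?_
  all_goals have h := (hswap u).1 (Finset.mem_filter.1 hu).2
  · conv_lhs => enter [2]; rw [h]
    exact Sum.elim_comp_inl_inr u
  · rw [Fintype.prod_sum_type]
    simp only [sq, Finset.prod_mul_distrib]
    congr 1
    exact Finset.prod_congr rfl fun i _ => congrArg w (congrFun h i).symm

/-- The pairing of the first half of `Fin (2 * n)` with the mirror image of the second half. -/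
def mirrorEquiv (n : ℕ) : Fin n ⊕ Fin n ≃ Fin (2 * n) :=
  ((Equiv.refl _).sumCongr Fin.revPerm).trans (finSumFinEquiv.trans (finCongr (two_mul n).symm))

theorem mirrorEquiv_swap {n : ℕ} (x : Fin n ⊕ Fin n) :
    mirrorEquiv n x.swap = (mirrorEquiv n x).rev := by
  rcases x with i | i <;>
    simp [mirrorEquiv, Fin.ext_iff, Fin.val_rev] <;> omega

theorem permCongr_mirrorEquiv_sumComm (n : ℕ) :
    (mirrorEquiv n).permCongr (Equiv.sumComm _ _) = Fin.revPerm := by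
  refine Equiv.ext fun p => ?_
  obtain ⟨x, rfl⟩ := (mirrorEquiv n).surjective p
  rw [Equiv.permCongr_apply, Equiv.symm_apply_apply, Equiv.sumComm_apply, mirrorEquiv_swap,
    Fin.revPerm_apply]

theorem lisLE_rev_conj {N l : ℕ} {π : Equiv.Perm (Fin N)} (hπ : lisLE π l) :
    lisLE (Fin.revPerm * π * Fin.revPerm⁻¹) l := fun k f hf hπf =>
  hπ k (fun i => (f i.rev).rev) (fun _ _ hij => Fin.rev_lt_rev.2 (hf (Fin.rev_lt_rev.2 hij)))
    fun _ _ hij => Fin.rev_lt_rev.1 (hπf (Fin.rev_lt_rev.2 hij))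

theorem fUUCount_eq_weylNormSq (n l : ℕ) :
    (fUUCount n l : ℤ) = weylNormSq (psum (Fin l) ℤ 2 ^ n) := by
  have hrev : (Fin.revPerm : Equiv.Perm (Fin (2 * n)))⁻¹ = Fin.revPerm := rfl
  have h := card_conj_fixed_boundedLIS (l := l) (g := (Fin.revPerm : Equiv.Perm (Fin (2 * n))))
    fun π hπ => mem_boundedLIS.2 (lisLE_rev_conj (mem_boundedLIS.1 hπ))
  rw [← permCongr_mirrorEquiv_sumComm, cyclePowerSum_permCongr, cyclePowerSum_sumComm,
    permCongr_mirrorEquiv_sumComm, Fintype.card_fin, ← psum] at h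
  rw [fUUCount, ← h, Nat.subtype_card _ fun π => ?_]
  rw [Finset.mem_filter, mem_boundedLIS, hrev, eq_comm, and_comm]

end Reversal

section ParitySplitting

open MvPolynomial

variable {R κ κ' : Type*} [CommRing R] [Fintype κ] [DecidableEq κ] [Fintype κ'] [DecidableEq κ']

theorem rename_inl_alternant_mul_rename_inr_alternant (a : κ → ℕ) (b : κ' → ℕ) :
    rename Sum.inl (alternant R a) * rename Sum.inr (alternant R b) =
      ∑ σ : Equiv.Perm (κ ⊕ κ'), Equiv.Perm.sign σ •
        if ∀ x, (σ x).isLeft = x.isLeft then ∏ x, X x ^ Sum.elim a b (σ x) else 0 := by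
  let D : Matrix (κ ⊕ κ') (κ ⊕ κ') (MvPolynomial (κ ⊕ κ') R) :=
    .of fun x y => if x.isLeft = y.isLeft then X y ^ Sum.elim a b x else 0
  have hD : D = .fromBlocks ((rename Sum.inl).mapMatrix (.of fun i j => X j ^ a i)) 0 0
      ((rename Sum.inr).mapMatrix (.of fun i j => X j ^ b i)) := by
    ext (i | i) (j | j) <;> simp [D]
  rw [alternant, alternant, AlgHom.map_det, AlgHom.map_det, ← Matrix.det_fromBlocks_zero₂₁ _ 0,
    ← hD, Matrix.det_apply]
  simp only [D, Matrix.of_apply, Finset.prod_ite_zero, mem_univ, true_implies]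

/-- Under the pairing, the products of even polynomials with two monomials are orthogonal unless
the exponents of the monomials have the same parities. Hence only those terms of the alternant of
the even exponents `2 * a i` and the odd exponents `2 * b j + 1` count whose permutation preserves
parity. -/
theorem coeffPairing_mul_expand_two_alternant (a : κ → ℕ) (b : κ' → ℕ)
    (f g : MvPolynomial (κ ⊕ κ') R) :
    coeffPairing
        ((∏ x, X x ^ Sum.elim (fun i => 2 * a i) (fun j => 2 * b j + 1) x) * expand 2 f)
        (alternant R (Sum.elim (fun i => 2 * a i) fun j => 2 * b j + 1) * expand 2 g) =
      coeffPairing ((∏ x, X x ^ Sum.elim a b x) * f)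
        (rename Sum.inl (alternant R a) * rename Sum.inr (alternant R b) * g) := by
  set d : κ ⊕ κ' → ℕ := Sum.elim (fun i => 2 * a i) fun j => 2 * b j + 1
  let parity : κ ⊕ κ' → ℕ := fun x => if x.isLeft then 0 else 1
  have hd (x) : d x = parity x + Sum.elim a b x * 2 := by
    rcases x with i | j <;> simp [d, parity] <;> ring
  have hparity {x y} (h : ¬ y.isLeft = x.isLeft) : ¬ d x ≡ d y [MOD 2] := by
    rcases x with i | i <;> rcases y with j | j <;> simp [d, Nat.ModEq] at h ⊢
  have hprod (σ : Equiv.Perm (κ ⊕ κ')) (hσ : ∀ x, (σ x).isLeft = x.isLeft) :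
      ∏ x, (X x : MvPolynomial _ R) ^ d (σ x) =
        monomial (Finsupp.equivFunOnFinite.symm parity) 1 *
          expand 2 (∏ x, X x ^ Sum.elim a b (σ x)) := by
    rw [← prod_X_pow_eq_monomial_equivFunOnFinite, map_prod, ← Finset.prod_mul_distrib]
    refine Finset.prod_congr rfl fun x _ => ?_
    rw [hd, map_pow, expand_X, pow_add, pow_mul', show parity (σ x) = parity x by
      simp only [parity, hσ]]
  rw [alternant_eq_sum_prod, rename_inl_alternant_mul_rename_inr_alternant, Finset.sum_mul,
    Finset.sum_mul, map_sum, map_sum]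
  refine Finset.sum_congr rfl fun σ _ => ?_
  simp only [Units.smul_def, smul_mul_assoc, map_zsmul]
  congr 1
  split_ifs with hσ
  · have hone := hprod 1 fun _ => rfl
    simp only [Equiv.Perm.one_apply] at hone
    rw [hprod σ hσ, hone, mul_assoc, mul_assoc, ← map_mul, ← map_mul,
      coeffPairing_monomial_mul_expand two_ne_zero]
  · obtain ⟨x, hx⟩ := not_forall.1 hσ
    rw [prod_X_pow_eq_monomial_equivFunOnFinite,
      prod_X_pow_eq_monomial_equivFunOnFinite (fun x => d (σ x)),
      coeffPairing_monomial_mul_expand_eq_zero (hparity hx), zero_mul, map_zero]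

/-- The even and the odd elements of `Fin (2 * l)`. -/
def parityEquiv (l : ℕ) : Fin l ⊕ Fin l ≃ Fin (2 * l) :=
  (Equiv.boolProdEquivSum _).symm.trans <| (finTwoEquiv.symm.prodCongr (Equiv.refl _)).trans <|
    (Equiv.prodComm _ _).trans <| finProdFinEquiv.trans <| finCongr (mul_comm l 2)

theorem val_parityEquiv {l : ℕ} (x : Fin l ⊕ Fin l) :
    (parityEquiv l x : ℕ) =
      Sum.elim (fun i : Fin l => 2 * (i : ℕ)) (fun i : Fin l => 2 * (i : ℕ) + 1) x := by
  rcases x with i | i <;> simp [parityEquiv, finTwoEquiv, add_comm]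

theorem weylNormSq_expand_two_rename_parityEquiv {l : ℕ} (f : MvPolynomial (Fin l ⊕ Fin l) R) :
    weylNormSq (expand 2 (rename (parityEquiv l) f)) =
      coeffPairing
        (rename Sum.inl (∏ i : Fin l, X i ^ (i : ℕ)) * rename Sum.inr (∏ i : Fin l, X i ^ (i : ℕ)) *
          f)
        (rename Sum.inl (weylDenominator R l) * rename Sum.inr (weylDenominator R l) * f) := by
  have hprod : (∏ i : Fin (2 * l), X i ^ (i : ℕ) : MvPolynomial _ R) =
      rename (parityEquiv l) (∏ x, X x ^ (parityEquiv l x : ℕ)) := by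
    simp [← (parityEquiv l).prod_comp fun i => (X i : MvPolynomial _ R) ^ (i : ℕ)]
  have halt : weylDenominator R (2 * l) =
      rename (parityEquiv l) (alternant R fun x => (parityEquiv l x : ℕ)) := by
    simp [rename_alternant, weylDenominator, Function.comp_def]
  rw [weylNormSq, hprod, halt, ← rename_expand, ← map_mul, ← map_mul,
    coeffPairing_rename (parityEquiv l).injective]
  simp only [val_parityEquiv]
  simpa [weylDenominator] using coeffPairing_mul_expand_two_alternant (fun i : Fin l => (i : ℕ))
    (fun i : Fin l => (i : ℕ)) f f

theorem isHomogeneous_psum {σ : Type*} [Fintype σ] (n : ℕ) : (psum σ R n).IsHomogeneous n :=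
  IsHomogeneous.sum _ _ _ fun i _ => isHomogeneous_X_pow i n

theorem psum_one_pow_eq_sum_rename_mul_rename {σ τ : Type*} [Fintype σ] [Fintype τ] (n : ℕ) :
    psum (σ ⊕ τ) R 1 ^ n = ∑ m ∈ range (n + 1), n.choose m •
      (rename Sum.inl (psum σ R 1 ^ m) * rename Sum.inr (psum τ R 1 ^ (n - m))) := by
  simp [psum, add_pow, mul_comm]

theorem coeffPairing_pow_weylDenominator_mul_pow {l d : ℕ} {f : MvPolynomial (Fin l) R}
    (hf : f.IsHomogeneous d) (hd : d ≠ 0) (m k : ℕ) :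
    coeffPairing ((∏ i : Fin l, X i ^ (i : ℕ)) * f ^ m) (weylDenominator R l * f ^ k) =
      if m = k then weylNormSq (f ^ m) else 0 := by
  split_ifs with hmk
  · rw [weylNormSq, hmk]
  · refine coeffPairing_eq_zero_of_isHomogeneous
      ((IsHomogeneous.prod _ _ _ fun i _ => isHomogeneous_X_pow i _).mul (hf.pow m))
      ((isHomogeneous_alternant _).mul (hf.pow k)) ?_
    simpa [hd] using hmk

theorem weylNormSq_psum_two_pow (n l : ℕ) :
    weylNormSq (psum (Fin (2 * l)) R 2 ^ n) = ∑ m ∈ range (n + 1),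
      (n.choose m : R) ^ 2 * weylNormSq (psum (Fin l) R 1 ^ m) *
        weylNormSq (psum (Fin l) R 1 ^ (n - m)) := by
  have hexpand : psum (Fin (2 * l)) R 2 ^ n =
      expand 2 (rename (parityEquiv l) (psum (Fin l ⊕ Fin l) R 1 ^ n)) := by
    rw [map_pow, rename_psum, map_pow]
    simp [psum]
  have hterm (m k : ℕ) : coeffPairing
      (rename Sum.inl (∏ i : Fin l, X i ^ (i : ℕ)) * rename Sum.inr (∏ i : Fin l, X i ^ (i : ℕ)) *
        (rename Sum.inl (psum (Fin l) R 1 ^ m) * rename Sum.inr (psum (Fin l) R 1 ^ (n - m))))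
      (rename Sum.inl (weylDenominator R l) * rename Sum.inr (weylDenominator R l) *
        (rename Sum.inl (psum (Fin l) R 1 ^ k) * rename Sum.inr (psum (Fin l) R 1 ^ (n - k)))) =
      if m = k then weylNormSq (psum (Fin l) R 1 ^ m) * weylNormSq (psum (Fin l) R 1 ^ (n - m))
        else 0 := by
    rw [mul_mul_mul_comm, mul_mul_mul_comm (rename Sum.inl (weylDenominator R l)), ← map_mul,
      ← map_mul, ← map_mul, ← map_mul, coeffPairing_rename_inl_mul_rename_inr,
      coeffPairing_pow_weylDenominator_mul_pow (isHomogeneous_psum 1) one_ne_zero,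
      coeffPairing_pow_weylDenominator_mul_pow (isHomogeneous_psum 1) one_ne_zero]
    split_ifs with hmk hnmk <;> simp_all
  rw [hexpand, weylNormSq_expand_two_rename_parityEquiv, psum_one_pow_eq_sum_rename_mul_rename]
  simp only [Finset.mul_sum, map_sum, LinearMap.sum_apply, mul_smul_comm, map_nsmul,
    LinearMap.smul_apply, hterm]
  refine Finset.sum_congr rfl fun m hm => ?_
  simp only [smul_ite, smul_zero, Finset.sum_ite_eq', hm, if_true, nsmul_eq_mul]
  ring

end ParitySplitting

/-- `f^{UU}_{n,2l} = Σ_{m=0}^{n} (binom(n,m))² · f_{m,l} · f_{n−m,l}`. -/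
theorem fUUCount_eq_sum_binomial_sq (n l : ℕ) :
    fUUCount n (2 * l) =
      ∑ m ∈ Finset.range (n + 1),
        (n.choose m) ^ 2 * permCount m l * permCount (n - m) l := by
  zify
  rw [fUUCount_eq_weylNormSq, weylNormSq_psum_two_pow]
  simp only [permCount_eq_weylNormSq]
end
end

section
/- Let n and l be nonnegative integers, let J be the 2l×2l matrix with block form [[0, −I_l],[I_l, 0]], and let Sp(2l) = { U ∈ U(2l) : Uᵀ J U = J } be the compact symplectic group. For each fixed-point-free involution τ of {1,…,2n} let w_τ ∈ (ℂ^{2l})^{⊗2n} be the tensor w_τ = Σ_i ( ∏_{j : j < τ(j)} J_{i(j), i(τ(j))} ) · e_{i(1)}⊗⋯⊗e_{i(2n)}, the sum over all functions i : {1,…,2n} → {1,…,2l}. Then the family { w_τ : τ a fixed-point-free involution of {1,…,2n} with L⁻(τ) ≤ 2l } is a basis of the subspace F_{2n}(Sp(2l)) = { v ∈ (ℂ^{2l})^{⊗2n} : U^{⊗2n} v = v for every U ∈ Sp(2l) }. -/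
open scoped TensorProduct
open Matrix

noncomputable section

/-- `decLE π l` means the longest strictly decreasing subsequence of the permutation `π`
has length at most `l`. -/
def decLE {N : ℕ} (π : Equiv.Perm (Fin N)) (l : ℕ) : Prop :=
  ∀ (k : ℕ) (f : Fin k → Fin N), StrictMono f → StrictAnti (fun i => π (f i)) → k ≤ l

/-- The symplectic form matrix `J = [[0, −I_l],[I_l, 0]]` of size `2l × 2l`. -/
def Jmat (l : ℕ) : Matrix (Fin (2 * l)) (Fin (2 * l)) ℂ :=
  Matrix.of fun i j =>
    if (i : ℕ) + l = (j : ℕ) then -1 else if (j : ℕ) + l = (i : ℕ) then 1 else 0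

/-- The endomorphism `M^{⊗n}` of `(ℂ^d)^{⊗n}` induced by a matrix `M`, acting as `M`
on each tensor factor. -/
def tpow (n d : ℕ) (M : Matrix (Fin d) (Fin d) ℂ) :
    Module.End ℂ (⨂[ℂ] _ : Fin n, (Fin d → ℂ)) :=
  PiTensorProduct.map (fun _ : Fin n => Matrix.toLin' M)

/-- The basic symplectic invariant
`w_τ = Σ_i (∏_{j < τ(j)} J_{i(j),i(τ(j))}) · e_{i(1)}⊗⋯⊗e_{i(2n)}`,
summed over all functions `i : {1,…,2n} → {1,…,2l}`. -/
def wTau (n l : ℕ) (τ : Equiv.Perm (Fin (2 * n))) :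
    ⨂[ℂ] _ : Fin (2 * n), (Fin (2 * l) → ℂ) :=
  ∑ i : Fin (2 * n) → Fin (2 * l),
    (∏ j ∈ Finset.univ.filter (fun j : Fin (2 * n) => j < τ j),
        Jmat l (i j) (i (τ j))) •
      PiTensorProduct.tprod ℂ (fun j => Pi.single (i j) (1 : ℂ))

/-!
By Weyl's unitary trick, a tensor fixed by `Sp(2l)` is killed by the derivations `D(X)` that the
complex symplectic Lie algebra induces. Contracting two positions of such a tensor with `J` gives
an invariant with two positions less, so by induction an invariant orthogonal to all `w_τ` has
vanishing contractions. On an invariant with vanishing contractions, the positive semidefinite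
operator `∑ D(E_ab)ᴴ D(E_ab)` is a negative scalar, so the invariant is zero. Hence the `w_τ` of
all perfect matchings `τ` span the invariants.

If `τ` decreases along a set of more than `2l` positions, such a set can be chosen stable under `τ`.
Antisymmetrising `w_τ` over it gives zero, because two of these positions carry the same letter, and
this expresses `w_τ` by the `w_τ'` with `τ'` lexicographically smaller.

Otherwise the arcs of `τ` can be coloured with `l` colours such that arcs of equal colour are not
nested. Labelling the two ends of an arc of colour `a` by the dual basis vectors `a` and `a + l`
gives a word at which `w_τ` has coefficient `±1`, while among the others only the `w_τ'` with `τ'`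
lexicographically larger can have a nonzero coefficient there. So these `w_τ` are linearly
independent.
-/

/-! ### Contractions and derivations of tensors -/

section PositionOperators

open Finset Function

variable {ι κ R : Type*} [DecidableEq ι] [Fintype κ]

lemma sum_sum_update [Fintype ι] {A : Type*} [AddCommMonoid A] (F : (ι → κ) → κ → A) (x : ι) :
    ∑ k, ∑ p, F (update k x p) (k x) = ∑ k, ∑ p, F k p := by
  rw [← Fintype.sum_prod_type', ← Fintype.sum_prod_type']
  have hinv : Involutive fun q : (ι → κ) × κ ↦ (update q.1 x q.2, q.1 x) := fun q ↦ by simp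
  exact Fintype.sum_bijective _ hinv.bijective _ _ fun _ ↦ rfl

lemma sum_update [Fintype ι] {A : Type*} [AddCommMonoid A] (F : (ι → κ) → A) (x : ι) :
    ∑ k, ∑ p, F (update k x p) = Fintype.card κ • ∑ k, F k := by
  rw [sum_sum_update (fun k _ ↦ F k) x]
  simp [sum_nsmul]

variable [CommRing R]

/-- The operator on coefficient families `(ι → κ) → R` of tensors that applies a matrix to the
tensor factor at the position `x`. -/
def actAt (x : ι) : Matrix κ κ R →ₗ[R] Module.End R ((ι → κ) → R) :=
  LinearMap.mk₂ R (fun M c k ↦ ∑ p, M (k x) p * c (update k x p))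
    (fun M N c ↦ by ext k; simp [add_mul, sum_add_distrib])
    (fun a M c ↦ by ext k; simp [mul_sum, mul_assoc])
    (fun M c d ↦ by ext k; simp [mul_add, sum_add_distrib])
    (fun a M c ↦ by ext k; simp [mul_sum, mul_left_comm])

lemma actAt_apply (x : ι) (M : Matrix κ κ R) (c : (ι → κ) → R) (k : ι → κ) :
    actAt x M c k = ∑ p, M (k x) p * c (update k x p) :=
  rfl

lemma actAt_actAt (x : ι) (M N : Matrix κ κ R) (c : (ι → κ) → R) :
    actAt x M (actAt x N c) = actAt x (M * N) c := by
  ext k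
  simp only [actAt_apply, update_self, update_idem, mul_sum, Matrix.mul_apply, sum_mul, mul_assoc]
  exact sum_comm

lemma actAt_one [DecidableEq κ] (x : ι) (c : (ι → κ) → R) : actAt x 1 c = c := by
  ext k
  simp [actAt_apply, Matrix.one_apply]

lemma star_actAt_dotProduct [Fintype ι] [StarRing R] (x : ι) (M : Matrix κ κ R)
    (c d : (ι → κ) → R) : star (actAt x M c) ⬝ᵥ d = star c ⬝ᵥ actAt x Mᴴ d := by
  simp only [dotProduct, actAt_apply, Pi.star_apply, star_sum, star_mul', sum_mul, mul_sum]
  rw [← sum_sum_update _ x]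
  refine sum_congr rfl fun k _ ↦ sum_congr rfl fun p _ ↦ ?_
  simp only [update_self, update_idem, update_eq_self, conjTranspose_apply]
  ring

/-- The derivation `∑ x ∈ S, 1 ⊗ ⋯ ⊗ M ⊗ ⋯ ⊗ 1` of coefficient families induced by a matrix `M`,
the sum over the positions `x ∈ S` of the factor `M`. -/
def derivAct (S : Finset ι) : Matrix κ κ R →ₗ[R] Module.End R ((ι → κ) → R) :=
  ∑ x ∈ S, actAt x

lemma derivAct_apply (S : Finset ι) (M : Matrix κ κ R) (c : (ι → κ) → R) :
    derivAct S M c = ∑ x ∈ S, actAt x M c := by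
  simp [derivAct]

lemma star_derivAct_dotProduct [Fintype ι] [StarRing R] (S : Finset ι) (M : Matrix κ κ R)
    (c d : (ι → κ) → R) : star (derivAct S M c) ⬝ᵥ d = star c ⬝ᵥ derivAct S Mᴴ d := by
  simp only [derivAct_apply, star_sum, sum_dotProduct, dotProduct_sum, star_actAt_dotProduct]

/-- Contraction of the positions `x` and `y` of a coefficient family with the bilinear form `J`. The
result is still indexed by `ι → κ`, but does not depend on the letters at `x` and `y`. -/
def contract (J : Matrix κ κ R) (x y : ι) : Module.End R ((ι → κ) → R) where
  toFun c k := ∑ p, ∑ q, J p q * c (update (update k x p) y q)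
  map_add' c d := by ext k; simp [mul_add, sum_add_distrib]
  map_smul' a c := by ext k; simp [mul_sum, mul_left_comm]

lemma contract_apply (J : Matrix κ κ R) (x y : ι) (c : (ι → κ) → R) (k : ι → κ) :
    contract J x y c k = ∑ p, ∑ q, J p q * c (update (update k x p) y q) :=
  rfl

lemma contract_neg (J : Matrix κ κ R) (x y : ι) (c : (ι → κ) → R) :
    contract (-J) x y c = -contract J x y c := by
  ext k
  simp [contract_apply]

lemma contract_transpose (J : Matrix κ κ R) {x y : ι} (hxy : x ≠ y) (c : (ι → κ) → R) :
    contract Jᵀ x y c = contract J y x c := by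
  ext k
  simp only [contract_apply, transpose_apply, update_comm hxy]
  exact sum_comm

lemma contract_actAt_of_ne (J X : Matrix κ κ R) {x y z : ι} (hx : z ≠ x) (hy : z ≠ y)
    (c : (ι → κ) → R) : contract J x y (actAt z X c) = actAt z X (contract J x y c) := by
  ext k
  simp only [contract_apply, actAt_apply, update_of_ne hx, update_of_ne hy, mul_sum]
  rw [sum_comm_cycle]
  refine sum_congr rfl fun r _ ↦ sum_congr rfl fun p _ ↦ sum_congr rfl fun q _ ↦ ?_
  rw [update_comm hy.symm, update_comm hx.symm]
  ring

lemma contract_actAt_right (J X : Matrix κ κ R) (x y : ι) (c : (ι → κ) → R) :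
    contract J x y (actAt y X c) = contract (J * X) x y c := by
  ext k
  simp only [contract_apply, actAt_apply, update_self, update_idem, mul_sum, Matrix.mul_apply,
    sum_mul, mul_assoc]
  exact sum_congr rfl fun p _ ↦ sum_comm

lemma contract_actAt_left (J X : Matrix κ κ R) {x y : ι} (hxy : x ≠ y) (c : (ι → κ) → R) :
    contract J x y (actAt x X c) = contract (Xᵀ * J) x y c := by
  rw [← contract_transpose J hxy.symm, contract_actAt_right, ← contract_transpose _ hxy.symm,
    transpose_mul, transpose_transpose]

end PositionOperators

section Contractions

open Finset Function

variable {ι κ R : Type*} [DecidableEq ι] [Fintype κ] [CommRing R]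

lemma derivAct_contract {J X : Matrix κ κ R} (hX : J.IsSkewAdjoint X) {S : Finset ι} {x y : ι}
    (hxy : x ≠ y) (hS : {x, y} ⊆ S) (c : (ι → κ) → R) :
    derivAct (S \ {x, y}) X (contract J x y c) = contract J x y (derivAct S X c) := by
  have hX' : Xᵀ * J = -(J * X) := by rw [hX, mul_neg]
  have hcancel : contract J x y (actAt x X c) + contract J x y (actAt y X c) = 0 := by
    rw [contract_actAt_left _ _ hxy, contract_actAt_right, hX', contract_neg, neg_add_cancel]
  rw [derivAct_apply, derivAct_apply, ← sum_sdiff hS, sum_pair hxy, map_add, map_add, hcancel,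
    add_zero, map_sum]
  refine sum_congr rfl fun z hz ↦ ?_
  obtain ⟨hzx, hzy⟩ : z ≠ x ∧ z ≠ y := by simpa using (mem_sdiff.1 hz).2
  exact (contract_actAt_of_ne J X hzx hzy c).symm

lemma dependsOn_contract (J : Matrix κ κ R) (x y : ι) {S : Finset ι} {c : (ι → κ) → R}
    (hc : DependsOn c S) : DependsOn (contract J x y c) ↑(S \ {x, y}) := by
  intro k m hkm
  refine sum_congr rfl fun p _ ↦ sum_congr rfl fun q _ ↦ congrArg (J p q * ·) (hc fun z hz ↦ ?_)
  by_cases hzy : z = y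
  · simp [hzy]
  by_cases hzx : z = x
  · simp [hzx, update_of_ne (hzx ▸ hzy)]
  simpa [update_of_ne, hzx, hzy] using hkm z (by simpa [hzx, hzy] using hz)

lemma sum_single_mul_mul_single [DecidableEq κ] (A : Matrix κ κ R) :
    ∑ a, ∑ b, single b a 1 * A * single b a 1 = Aᵀ := by
  ext i j
  simp [Matrix.sum_apply, single_apply, ite_and]

lemma sum_actAt_single_actAt_of_ne [DecidableEq κ] (J : Matrix κ κ R) {x y : ι} (hxy : x ≠ y)
    (c : (ι → κ) → R) (k : ι → κ) :
    (∑ a, ∑ b, actAt x (single b a 1) (actAt y (J * single b a 1 * J) c)) k =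
      J (k y) (k x) * contract J x y c k := by
  simp [actAt_apply, contract_apply, single_apply, Matrix.mul_apply, ite_and, mul_sum,
    update_of_ne hxy.symm, mul_assoc]

lemma sum_derivAct_single_derivAct [DecidableEq κ] {J : Matrix κ κ R} (hJ : Jᵀ * J = 1)
    {S : Finset ι} {c : (ι → κ) → R}
    (hc : ∀ x ∈ S, ∀ y ∈ S, x ≠ y → contract J x y c = 0) :
    ∑ a, ∑ b, derivAct S (single b a 1) (derivAct S (J * single b a 1 * J) c) = #S • c := by
  have hself (x : ι) :
      ∑ a, ∑ b, actAt x (single b a 1) (actAt x (J * single b a 1 * J) c) = c := by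
    simp only [actAt_actAt, ← LinearMap.sum_apply, ← map_sum, ← mul_assoc, ← sum_mul,
      sum_single_mul_mul_single, hJ, actAt_one]
  have hother (x) (hx : x ∈ S) (y) (hy : y ∈ S) (hxy : x ≠ y) :
      ∑ a, ∑ b, actAt x (single b a 1) (actAt y (J * single b a 1 * J) c) = 0 := by
    ext k
    rw [sum_actAt_single_actAt_of_ne J hxy, hc x hx y hy hxy, Pi.zero_apply, mul_zero]
  simp only [derivAct_apply, map_sum, sum_comm (s := univ) (t := S)]
  rw [← sum_const]
  refine sum_congr rfl fun y hy ↦ ?_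
  rw [sum_eq_single_of_mem y hy fun x hx hxy ↦ hother x hx y hy hxy, hself]

lemma isSkewAdjoint_single_add [DecidableEq κ] {J : Matrix κ κ R} (hT : Jᵀ = -J)
    (hJ : J * J = -1) (a b : κ) : J.IsSkewAdjoint (single a b 1 + J * single b a 1 * J) := by
  have hleft (A : Matrix κ κ R) : J * (J * A) = -A := by rw [← mul_assoc, hJ, neg_one_mul]
  simp [Matrix.IsSkewAdjoint, Matrix.IsAdjointPair, hT, mul_assoc, add_mul, mul_add, hleft, hJ]

end Contractions

section Positivity

open Finset

open scoped ComplexOrder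

variable {ι κ 𝕜 : Type*} [Finite ι] [DecidableEq ι] [Fintype κ] [DecidableEq κ] [RCLike 𝕜]

/-- A symplectic invariant satisfies `D(E_ab) c = -D(J E_ba J) c`. Once its contractions vanish, the
positive semidefinite operator `∑ D(E_ab)ᴴ D(E_ab)` therefore acts on it as `-#S`. -/
lemma eq_zero_of_forall_contract_eq_zero {J : Matrix κ κ 𝕜} (hT : Jᵀ = -J) (hJ : J * J = -1)
    {S : Finset ι} (hS : S.Nonempty) {c : (ι → κ) → 𝕜}
    (hX : ∀ X : Matrix κ κ 𝕜, J.IsSkewAdjoint X → derivAct S X c = 0)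
    (hc : ∀ x ∈ S, ∀ y ∈ S, x ≠ y → contract J x y c = 0) : c = 0 := by
  cases nonempty_fintype ι
  have hneg (a b : κ) :
      derivAct S (J * single b a 1 * J) c = -derivAct S (single a b (1 : 𝕜)) c := by
    rw [eq_neg_iff_add_eq_zero, ← LinearMap.add_apply, ← map_add, add_comm]
    exact hX _ (isSkewAdjoint_single_add hT hJ a b)
  have hcasimir : ∑ a, ∑ b, star (derivAct S (single a b 1) c) ⬝ᵥ derivAct S (single a b 1) c =
      -(#S • (star c ⬝ᵥ c)) := by
    rw [← dotProduct_smul, ← sum_derivAct_single_derivAct (by rw [hT, neg_mul, hJ, neg_neg]) hc]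
    simp [hneg, dotProduct_sum, star_derivAct_dotProduct]
  have hsum : 0 ≤ -(#S • (star c ⬝ᵥ c)) := by
    rw [← hcasimir]
    exact sum_nonneg fun a _ ↦ sum_nonneg fun b _ ↦ dotProduct_star_self_nonneg _
  have hzero : #S • (star c ⬝ᵥ c) = 0 :=
    le_antisymm (neg_nonneg.1 hsum) (nsmul_nonneg (dotProduct_star_self_nonneg c) _)
  exact dotProduct_star_self_eq_zero.1 ((smul_eq_zero_iff_right hS.card_ne_zero).1 hzero)

end Positivity

section MatchTensor

open Finset Function Equiv

variable {ι κ R : Type*} [Fintype ι] [LinearOrder ι] [CommRing R]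

/-- The coefficients `∏_{j < τ(j)} J_{i(j), i(τ(j))}` of the tensor attached to the matching of
positions whose arcs are the orbits `{j, τ j}` of an involution `τ`; fixed points of `τ` are
unmatched. -/
def matchTensor (J : Matrix κ κ R) (τ : Perm ι) (i : ι → κ) : R :=
  ∏ j with j < τ j, J (i j) (i (τ j))

lemma matchTensor_eq_prod_arcs (J : Matrix κ κ R) (τ : Perm ι) (i : ι → κ) :
    matchTensor J τ i = ∏ a : {x // x < τ x}, J (i a) (i (τ a)) :=
  prod_subtype _ (by simp) fun x ↦ J (i x) (i (τ x))

lemma matchTensor_one (J : Matrix κ κ R) : matchTensor J (1 : Perm ι) = 1 := by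
  ext i
  simp [matchTensor]

lemma matchTensor_update (J : Matrix κ κ R) {σ : Perm ι} {x : ι} (hx : σ x = x) (i : ι → κ)
    (p : κ) : matchTensor J σ (update i x p) = matchTensor J σ i := by
  refine prod_congr rfl fun z hz ↦ ?_
  have hzx : z ≠ x := by rintro rfl; simp [hx] at hz
  rw [update_of_ne hzx, update_of_ne fun h ↦ hzx (σ.injective (h.trans hx.symm))]

lemma matchTensor_mul_swap (J : Matrix κ κ R) {σ : Perm ι} {x y : ι} (hxy : x < y) (hx : σ x = x)
    (hy : σ y = y) (i : ι → κ) :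
    matchTensor J (σ * swap x y) i = J (i x) (i y) * matchTensor J σ i := by
  simp only [matchTensor, prod_filter]
  rw [← mul_prod_erase _ _ (mem_univ x), ← mul_prod_erase _ _ (mem_univ x)]
  have hrest : ∀ z ∈ univ.erase x,
      (if z < (σ * swap x y) z then J (i z) (i ((σ * swap x y) z)) else 1) =
        if z < σ z then J (i z) (i (σ z)) else 1 := by
    intro z hz
    obtain rfl | hzy := eq_or_ne z y
    · simp [hx, hy, hxy.le]
    · rw [Perm.mul_apply, swap_apply_of_ne_of_ne (ne_of_mem_erase hz) hzy]
  rw [prod_congr rfl hrest]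
  simp [hx, hy, hxy]

variable [Fintype κ]

lemma matchTensor_dotProduct_contract (J : Matrix κ κ R) {σ : Perm ι} {x y : ι} (hxy : x < y)
    (hx : σ x = x) (hy : σ y = y) (c : (ι → κ) → R) :
    matchTensor J σ ⬝ᵥ contract J x y c =
      Fintype.card κ ^ 2 • (matchTensor J (σ * swap x y) ⬝ᵥ c) := by
  let F (m : ι → κ) : R := matchTensor J (σ * swap x y) m * c m
  have hF (k : ι → κ) : matchTensor J σ k * contract J x y c k =
      ∑ p, ∑ q, F (update (update k x p) y q) := by
    simp only [F, contract_apply, mul_sum]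
    refine sum_congr rfl fun p _ ↦ sum_congr rfl fun q _ ↦ ?_
    rw [matchTensor_mul_swap J hxy hx hy, matchTensor_update J hy, matchTensor_update J hx,
      update_self, update_of_ne hxy.ne, update_self]
    ring
  simp only [dotProduct, hF]
  rw [sum_update (fun k ↦ ∑ q, F (update k y q)), sum_update F, sq, mul_smul]

variable {𝕜 : Type*} [RCLike 𝕜]

lemma eq_zero_of_dependsOn_empty {c : (ι → κ) → 𝕜} (hc : DependsOn c ∅)
    (hsum : (1 : (ι → κ) → 𝕜) ⬝ᵥ c = 0) : c = 0 := by
  classical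
  ext k
  have hconst (m : ι → κ) : c m = c k := hc.empty m k
  have : Nonempty (ι → κ) := ⟨k⟩
  simp only [one_dotProduct, hconst, sum_const] at hsum
  exact (smul_eq_zero_iff_right univ_nonempty.card_ne_zero).1 hsum

/-- Induction on the set of positions: the contractions of a symplectic invariant are symplectic
invariants with two positions less. -/
lemma eq_zero_of_forall_matchTensor_dotProduct_eq_zero [DecidableEq κ] {J : Matrix κ κ 𝕜}
    (hT : Jᵀ = -J) (hJ : J * J = -1) (S : Finset ι) (c : (ι → κ) → 𝕜)
    (hX : ∀ X : Matrix κ κ 𝕜, J.IsSkewAdjoint X → derivAct S X c = 0) (hS : DependsOn c S)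
    (hc : ∀ τ : Perm ι, Involutive τ → τ.support = S → matchTensor J τ ⬝ᵥ c = 0) : c = 0 := by
  induction S using Finset.strongInduction generalizing c with
  | _ S ih =>
  obtain rfl | hne := S.eq_empty_or_nonempty
  · refine eq_zero_of_dependsOn_empty (by simpa using hS) ?_
    rw [← matchTensor_one J]
    exact hc 1 (fun _ ↦ rfl) Perm.support_one
  have hlt {x y : ι} (hxy : x < y) (hxyS : {x, y} ⊆ S) : contract J x y c = 0 := by
    have hsub : S \ {x, y} ⊂ S := sdiff_ssubset hxyS (insert_nonempty x {y})
    refine ih _ hsub _ (fun X h ↦ ?_) (dependsOn_contract J x y hS) fun σ hσ hσS ↦ ?_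
    · rw [derivAct_contract h hxy.ne hxyS, hX X h, map_zero]
    have hdisj : σ.Disjoint (swap x y) := by
      rw [Perm.disjoint_iff_disjoint_support, Perm.support_swap hxy.ne, hσS]
      exact sdiff_disjoint
    have hfix (z : ι) (hz : z ∈ ({x, y} : Finset ι)) : σ z = z := by
      rw [← Perm.notMem_support, hσS]
      exact fun h ↦ (mem_sdiff.1 h).2 hz
    rw [matchTensor_dotProduct_contract J hxy (hfix x (by simp)) (hfix y (by simp)),
      hc, smul_zero]
    · intro z
      have hcomm := DFunLike.congr_fun hdisj.commute.eq
      simp only [Perm.mul_apply] at hcomm ⊢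
      rw [← hcomm, hσ, swap_apply_self]
    · rw [hdisj.support_mul, hσS, Perm.support_swap hxy.ne, sdiff_union_of_subset hxyS]
  refine eq_zero_of_forall_contract_eq_zero hT hJ hne hX fun x hx y hy hxy ↦ ?_
  obtain h | h := hxy.lt_or_gt
  · exact hlt h (by simp [insert_subset_iff, hx, hy])
  · rw [← contract_transpose J hxy.symm, hT, contract_neg,
      hlt h (by simp [insert_subset_iff, hx, hy]), neg_zero]

end MatchTensor

/-! ### The unitary trick -/

section KroneckerPow

open Finset Function

variable {ι κ R : Type*} [Fintype ι] [CommRing R]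

/-- The matrix of `M ⊗ ⋯ ⊗ M` in the standard basis of the tensor power, with one tensor factor for
each position in `ι`. -/
def kroneckerPow (ι : Type*) [Fintype ι] (M : Matrix κ κ R) : Matrix (ι → κ) (ι → κ) R :=
  Matrix.of fun k i ↦ ∏ x, M (k x) (i x)

lemma kroneckerPow_mulVec_apply [DecidableEq ι] [Fintype κ] (M : Matrix κ κ R) (c : (ι → κ) → R)
    (k : ι → κ) : (kroneckerPow ι M *ᵥ c) k = ∑ i, (∏ x, M (k x) (i x)) * c i :=
  rfl

variable [DecidableEq ι] [Fintype κ] [DecidableEq κ]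

lemma sum_prod_erase_one_mul (X : Matrix κ κ R) (c : (ι → κ) → R) (x : ι) (k : ι → κ) :
    ∑ i, ((∏ m ∈ univ.erase x, (1 : Matrix κ κ R) (k m) (i m)) * X (k x) (i x)) * c i =
      actAt x X c k := by
  symm
  refine sum_of_injOn (update k x) (update_injective k x).injOn (by simp) (fun i _ hi ↦ ?_)
    fun p _ ↦ ?_
  · obtain ⟨m, hm, hkm⟩ : ∃ m ∈ univ.erase x, k m ≠ i m := by
      by_contra! h
      exact hi ⟨i x, by simp, update_eq_iff.2 ⟨rfl, fun m hm ↦ h m (by simp [hm])⟩⟩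
    rw [prod_eq_zero (f := fun m ↦ (1 : Matrix κ κ R) (k m) (i m)) hm (Matrix.one_apply_ne hkm),
      zero_mul, zero_mul]
  · rw [prod_eq_one, one_mul, update_self]
    intro m hm
    rw [update_of_ne (ne_of_mem_erase hm), Matrix.one_apply_eq]

lemma hasDerivAt_kroneckerPow_mulVec {𝕜 𝔸 : Type*} [NontriviallyNormedField 𝕜] [NormedCommRing 𝔸]
    [NormedAlgebra 𝕜 𝔸] {A : 𝕜 → Matrix κ κ 𝔸} {X : Matrix κ κ 𝔸} {t₀ : 𝕜} (hA₀ : A t₀ = 1)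
    (hA : ∀ p q, HasDerivAt (fun t ↦ A t p q) (X p q) t₀) (c : (ι → κ) → 𝔸) (k : ι → κ) :
    HasDerivAt (fun t ↦ (kroneckerPow ι (A t) *ᵥ c) k) (derivAct univ X c k) t₀ := by
  have hsum : HasDerivAt (fun t ↦ (kroneckerPow ι (A t) *ᵥ c) k)
      (∑ i, (∑ x, (∏ m ∈ univ.erase x, A t₀ (k m) (i m)) • X (k x) (i x)) * c i) t₀ :=
    HasDerivAt.fun_sum fun i _ ↦
      (HasDerivAt.fun_finsetProd fun x _ ↦ hA (k x) (i x)).mul_const (c i)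
  convert hsum using 1
  simp only [hA₀, smul_eq_mul, sum_mul, derivAct_apply, Finset.sum_apply]
  rw [sum_comm]
  exact sum_congr rfl fun x _ ↦ (sum_prod_erase_one_mul X c x k).symm

end KroneckerPow

section UnitaryTrick

open Finset

variable {ι κ : Type*} [Fintype ι] [Fintype κ] [DecidableEq κ]

/-- The coefficient families fixed by `U ⊗ ⋯ ⊗ U` for every `U` in the compact symplectic group
`{U ∈ U(κ) : Uᵀ J U = J}` of the bilinear form `J`. -/
def symplecticInvariants (ι : Type*) [Fintype ι] [DecidableEq ι] (J : Matrix κ κ ℂ) :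
    Submodule ℂ ((ι → κ) → ℂ) where
  carrier := {c | ∀ U ∈ Matrix.unitaryGroup κ ℂ, Uᵀ * J * U = J → kroneckerPow ι U *ᵥ c = c}
  add_mem' hc hd U hU hUJ := by rw [mulVec_add, hc U hU hUJ, hd U hU hUJ]
  zero_mem' _ _ _ := mulVec_zero _
  smul_mem' a c hc U hU hUJ := by rw [mulVec_smul, hc U hU hUJ]

lemma isSkewAdjoint_iff_transpose_eq {R : Type*} [CommRing R] {J X : Matrix κ κ R}
    (hJ : J * J = -1) : J.IsSkewAdjoint X ↔ Xᵀ = J * X * J := by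
  refine ⟨fun h ↦ ?_, fun h ↦ ?_⟩
  · have h' : Xᵀ * J = -(J * X) := by rw [h, mul_neg]
    rw [← neg_eq_iff_eq_neg.2 h', neg_mul, mul_assoc, hJ, mul_neg_one, neg_neg]
  · rw [Matrix.IsSkewAdjoint, Matrix.IsAdjointPair, h, mul_assoc, hJ, mul_neg_one, mul_neg]

lemma isSkewAdjoint_conjTranspose {J X : Matrix κ κ ℂ} (hJ : J * J = -1) (hstar : Jᴴ = -J)
    (hX : J.IsSkewAdjoint X) : J.IsSkewAdjoint Xᴴ := by
  rw [isSkewAdjoint_iff_transpose_eq hJ] at hX ⊢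
  change (Xᵀ)ᴴ = J * Xᴴ * J
  simp [hX, conjTranspose_mul, hstar, mul_assoc]

open scoped Norms.Operator in
lemma hasDerivAt_exp_smul_apply (X : Matrix κ κ ℂ) (p q : κ) :
    HasDerivAt (fun t : ℝ ↦ NormedSpace.exp (t • X) p q) (X p q) 0 := by
  have hexp := hasDerivAt_exp_smul_const (𝕂 := ℝ) X (0 : ℝ)
  rw [zero_smul, NormedSpace.exp_zero, one_mul] at hexp
  exact (Matrix.entryLinearMap ℝ ℂ p q).toContinuousLinearMap.hasFDerivAt.comp_hasDerivAt 0 hexp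

lemma exp_mem_unitaryGroup {X : Matrix κ κ ℂ} (hX : X ∈ skewAdjoint (Matrix κ κ ℂ)) :
    NormedSpace.exp X ∈ Matrix.unitaryGroup κ ℂ := by
  rw [Matrix.mem_unitaryGroup_iff', star_eq_conjTranspose, ← Matrix.exp_conjTranspose,
    ← star_eq_conjTranspose, skewAdjoint.mem_iff.1 hX, Matrix.exp_neg]
  exact Matrix.nonsing_inv_mul _ ((Matrix.isUnit_iff_isUnit_det _).1 (Matrix.isUnit_exp X))

open scoped Norms.Operator in
lemma transpose_exp_mul_mul_exp {J X : Matrix κ κ ℂ} (hX : J.IsSkewAdjoint X) :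
    (NormedSpace.exp X)ᵀ * J * NormedSpace.exp X = J := by
  have hsemi : SemiconjBy J X (-Xᵀ) := by
    rw [SemiconjBy, neg_mul, hX, mul_neg, neg_neg]
  rw [← Matrix.exp_transpose, ← neg_neg Xᵀ]
  exact hsemi.exp_neg_mul_mul_exp_eq_self

variable [DecidableEq ι]

lemma derivAct_eq_zero_of_mem_skewAdjoint {J Y : Matrix κ κ ℂ} {c : (ι → κ) → ℂ}
    (hc : c ∈ symplecticInvariants ι J) (hY : Y ∈ skewAdjoint (Matrix κ κ ℂ))
    (hYJ : J.IsSkewAdjoint Y) : derivAct univ Y c = 0 := by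
  ext k
  have hderiv := hasDerivAt_kroneckerPow_mulVec (A := fun t : ℝ ↦ NormedSpace.exp (t • Y))
    (by simp) (hasDerivAt_exp_smul_apply Y) c k
  have hconst (t : ℝ) : kroneckerPow ι (NormedSpace.exp (t • Y)) *ᵥ c = c := by
    refine hc _ (exp_mem_unitaryGroup (skewAdjoint.smul_mem t hY)) (transpose_exp_mul_mul_exp ?_)
    exact (mem_skewAdjointMatricesSubmodule _ _).1 (Submodule.smul_of_tower_mem
      (skewAdjointMatricesSubmodule J) t ((mem_skewAdjointMatricesSubmodule _ _).2 hYJ))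
  simp only [hconst] at hderiv
  exact hderiv.unique (hasDerivAt_const _ _)

/-- Weyl's unitary trick: the symplectic Lie algebra is the complexification of its skew-Hermitian
part. -/
lemma derivAct_eq_zero_of_isSkewAdjoint {J : Matrix κ κ ℂ} (hJ : J * J = -1) (hstar : Jᴴ = -J)
    {c : (ι → κ) → ℂ} (hc : c ∈ symplecticInvariants ι J) {X : Matrix κ κ ℂ}
    (hX : J.IsSkewAdjoint X) : derivAct univ X c = 0 := by
  have hX' := isSkewAdjoint_conjTranspose hJ hstar hX
  rw [← mem_skewAdjointMatricesSubmodule] at hX hX'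
  have hsub : derivAct univ (X - Xᴴ) c = 0 :=
    derivAct_eq_zero_of_mem_skewAdjoint hc
      (by simp [skewAdjoint.mem_iff, star_eq_conjTranspose])
      ((mem_skewAdjointMatricesSubmodule _ _).1 (sub_mem hX hX'))
  have hadd : derivAct univ (Complex.I • (X + Xᴴ)) c = 0 :=
    derivAct_eq_zero_of_mem_skewAdjoint hc
      (by simp [skewAdjoint.mem_iff, star_eq_conjTranspose, add_comm])
      ((mem_skewAdjointMatricesSubmodule _ _).1 (Submodule.smul_mem _ _ (add_mem hX hX')))
  have htwo : (2 : ℂ) • X = (X - Xᴴ) - Complex.I • Complex.I • (X + Xᴴ) := by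
    rw [smul_smul, Complex.I_mul_I, neg_one_smul, two_smul]
    abel
  have hzero : (2 : ℂ) • derivAct univ X c = 0 := by
    rw [← LinearMap.smul_apply, ← map_smul, htwo, map_sub, map_smul, LinearMap.sub_apply,
      LinearMap.smul_apply, hsub, hadd, smul_zero, sub_zero]
  exact (smul_eq_zero_iff_right two_ne_zero).1 hzero

end UnitaryTrick

/-! ### Perfect matchings and the first fundamental theorem -/

section PerfectMatching

open Finset Function Equiv

variable {ι : Type*}

/-- A perfect matching of the positions `ι`, encoded as the fixed-point-free involution exchanging
the two ends of every arc. -/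
structure IsPerfectMatching (τ : Perm ι) : Prop where
  involutive : Involutive τ
  apply_ne : ∀ x, τ x ≠ x

namespace IsPerfectMatching

variable {τ : Perm ι}

lemma mul_mul_inv (hτ : IsPerfectMatching τ) (σ : Perm ι) : IsPerfectMatching (σ * τ * σ⁻¹) where
  involutive x := by simp [Perm.mul_apply, hτ.involutive _]
  apply_ne x h := hτ.apply_ne (σ⁻¹ x) (by simpa [← Perm.eq_inv_iff_eq] using h)

variable [LinearOrder ι]

/-- The positions of a perfect matching are the two ends of its arcs, where an arc is represented by
its left end. -/
def arcEquiv (hτ : IsPerfectMatching τ) : {x // x < τ x} × Bool ≃ ι :=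
  Equiv.ofBijective (fun a ↦ bif a.2 then τ a.1 else a.1) <| by
    refine ⟨?_, fun x ↦ ?_⟩
    · rintro ⟨⟨x, hx⟩, _ | _⟩ ⟨⟨y, hy⟩, _ | _⟩ h <;> simp only [cond_true, cond_false] at h
      · simp [h]
      · rw [h, hτ.involutive] at hx
        exact absurd hx hy.not_gt
      · rw [← h, hτ.involutive] at hy
        exact absurd hy hx.not_gt
      · simp [τ.injective h]
    · obtain h | h := (hτ.apply_ne x).lt_or_gt
      · exact ⟨(⟨τ x, by rwa [hτ.involutive]⟩, true), hτ.involutive x⟩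
      · exact ⟨(⟨x, h⟩, false), rfl⟩

variable [Fintype ι] {κ R : Type*} [CommRing R]

lemma prod_eq_prod_arcs (hτ : IsPerfectMatching τ) (F : ι → R) :
    ∏ x, F x = ∏ a : {x // x < τ x}, F a * F (τ a) := by
  rw [← hτ.arcEquiv.prod_comp, Fintype.prod_prod_type]
  exact prod_congr rfl fun a _ ↦ (Fintype.prod_bool _).trans (mul_comm _ _)

variable [Fintype κ]

lemma sum_prod_arcs (hτ : IsPerfectMatching τ) (F : {x // x < τ x} → κ → κ → R) :
    ∑ i : ι → κ, ∏ a, F a (i a) (i (τ a)) = ∏ a, ∑ p, ∑ q, F a p q := by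
  have hbool (a : {x // x < τ x}) :
      ∑ p, ∑ q, F a p q = ∑ r : Bool → κ, F a (r false) (r true) := by
    rw [← Fintype.sum_prod_type', ← (Equiv.boolArrowEquivProd κ).sum_comp]
    rfl
  simp only [hbool, prod_univ_sum, Fintype.piFinset_univ]
  exact Fintype.sum_equiv ((hτ.arcEquiv.arrowCongr (.refl κ)).symm.trans (.curry _ _ _)) _ _
    fun _ ↦ rfl

lemma kroneckerPow_mulVec_matchTensor (hτ : IsPerfectMatching τ) (J U : Matrix κ κ R) :
    kroneckerPow ι U *ᵥ matchTensor J τ = matchTensor (U * J * Uᵀ) τ := by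
  ext k
  simp only [kroneckerPow_mulVec_apply, hτ.prod_eq_prod_arcs, matchTensor_eq_prod_arcs,
    ← prod_mul_distrib]
  rw [hτ.sum_prod_arcs fun a p q ↦ U (k a) p * U (k (τ a)) q * J p q]
  refine prod_congr rfl fun a _ ↦ ?_
  simp only [Matrix.mul_apply, transpose_apply, sum_mul]
  rw [sum_comm]
  exact sum_congr rfl fun p _ ↦ sum_congr rfl fun q _ ↦ by ring

end IsPerfectMatching

end PerfectMatching

section FirstFundamentalTheorem

open Finset Function Equiv

lemma mul_mul_transpose_eq_of_transpose_mul_mul_eq {κ R : Type*} [Fintype κ] [DecidableEq κ]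
    [CommRing R] {J U : Matrix κ κ R} (hJ : J * J = -1) (hU : Uᵀ * J * U = J) : U * J * Uᵀ = J := by
  have hinv : U * (-J * Uᵀ * J) = 1 := by
    rw [mul_eq_one_comm, mul_assoc, mul_assoc, ← mul_assoc Uᵀ, hU, neg_mul, hJ, neg_neg]
  calc U * J * Uᵀ = U * (-J * Uᵀ * J) * J := by simp [mul_assoc, hJ]
    _ = J := by rw [hinv, one_mul]

lemma le_of_forall_dotProduct_eq_zero {α 𝕜 : Type*} [Fintype α] [RCLike 𝕜]
    {W V : Submodule 𝕜 (α → 𝕜)} (hWV : W ≤ V)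
    (h : ∀ u ∈ V, (∀ w ∈ W, star w ⬝ᵥ u = 0) → u = 0) : V ≤ W := by
  intro c hc
  let e := (WithLp.linearEquiv 2 𝕜 (α → 𝕜)).symm
  obtain ⟨_, ⟨w, hw, rfl⟩, z, hz, hsum⟩ := (W.map e.toLinearMap).exists_add_mem_mem_orthogonal (e c)
  obtain ⟨u, rfl⟩ := e.surjective z
  have hcu : c = w + u := e.injective (hsum.trans (map_add e w u).symm)
  have hu : u = 0 := by
    refine h u (by simpa [hcu] using sub_mem hc (hWV hw)) fun v hv ↦ ?_
    rw [dotProduct_comm, ← EuclideanSpace.inner_toLp_toLp]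
    exact (Submodule.mem_orthogonal _ _).1 hz _ (Submodule.mem_map_of_mem hv)
  rwa [hcu, hu, add_zero]

variable {ι κ : Type*} [Fintype ι] [LinearOrder ι]

lemma star_matchTensor {R : Type*} [CommRing R] [StarRing R] (J : Matrix κ κ R) (τ : Perm ι) :
    star (matchTensor J τ) = matchTensor (J.map star) τ := by
  ext i
  simp [matchTensor]

/-- The **first fundamental theorem** of invariant theory for the compact symplectic group. -/
theorem span_image_matchTensor_eq_symplecticInvariants [Fintype κ] [DecidableEq κ]
    {J : Matrix κ κ ℂ} (hT : Jᵀ = -J) (hJ : J * J = -1) (hstar : Jᴴ = -J) :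
    Submodule.span ℂ (matchTensor J '' {τ : Perm ι | IsPerfectMatching τ}) =
      symplecticInvariants ι J := by
  have hle : Submodule.span ℂ (matchTensor J '' {τ : Perm ι | IsPerfectMatching τ}) ≤
      symplecticInvariants ι J := by
    rw [Submodule.span_le]
    rintro _ ⟨τ, hτ, rfl⟩ U - hU
    rw [IsPerfectMatching.kroneckerPow_mulVec_matchTensor hτ,
      mul_mul_transpose_eq_of_transpose_mul_mul_eq hJ hU]
  have hreal : J.map star = J := by
    calc J.map star = Jᴴᵀ := rfl
      _ = J := by rw [hstar, transpose_neg, hT, neg_neg]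
  refine hle.antisymm (le_of_forall_dotProduct_eq_zero hle fun u hu horth ↦ ?_)
  refine eq_zero_of_forall_matchTensor_dotProduct_eq_zero hT hJ univ u
    (fun X hX ↦ derivAct_eq_zero_of_isSkewAdjoint hJ hstar hu hX)
    (by simpa using dependsOn_univ u) fun τ hinv hsupp ↦ ?_
  have hτ : IsPerfectMatching τ := ⟨hinv, fun x ↦ Perm.mem_support.1 (hsupp ▸ mem_univ x)⟩
  rw [← horth _ (Submodule.subset_span ⟨τ, hτ, rfl⟩), star_matchTensor, hreal]

end FirstFundamentalTheorem

/-! ### Straightening -/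

section Straightening

open Finset Function Equiv

lemma exists_perm_of_forall_apply_not {α : Type*} [Finite α] {σ : Perm (α × Bool)}
    (hσ : ∀ a b, σ (a, !b) = ((σ (a, b)).1, !(σ (a, b)).2)) :
    ∃ (π : Perm α) (s : α → Bool), ∀ a b, σ (a, b) = (π a, b ^^ s a) := by
  have hσ' (a : α) (b : Bool) : σ (a, b) = ((σ (a, false)).1, b ^^ (σ (a, false)).2) := by
    cases b
    · simp
    · simpa using hσ a false
  have hsurj : Surjective fun a ↦ (σ (a, false)).1 := fun a ↦ by
    obtain ⟨⟨a', b⟩, h⟩ := σ.surjective (a, false)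
    exact ⟨a', congrArg Prod.fst ((hσ' a' b).symm.trans h)⟩
  exact ⟨.ofBijective _ (Finite.surjective_iff_bijective.1 hsurj), _, hσ'⟩

lemma sign_eq_prod_of_forall_apply {α : Type*} [Fintype α] [DecidableEq α] {σ : Perm (α × Bool)}
    {π : Perm α} {s : α → Bool} (hσ : ∀ a b, σ (a, b) = (π a, b ^^ s a)) :
    Perm.sign σ = ∏ a, if s a then -1 else 1 := by
  have hdec : σ = prodCongrLeft (fun _ : Bool ↦ π) *
      prodCongrRight fun a ↦ if s a then swap true false else 1 := by
    ext1 ⟨a, b⟩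
    rw [Perm.mul_apply, prodCongrRight_apply, prodCongrLeft_apply, hσ]
    cases b <;> cases h : s a <;> simp
  rw [hdec, Perm.sign_mul, Perm.sign_prodCongrLeft, Perm.sign_prodCongrRight, Fintype.prod_bool,
    Int.units_mul_self, one_mul]
  refine prod_congr rfl fun a _ ↦ ?_
  split_ifs <;> simp

lemma sum_sign_mul_comp_eq_zero {ι κ R : Type*} [Fintype ι] [DecidableEq ι] [Fintype κ]
    [CommRing R] {P : Finset ι} (hP : Fintype.card κ < #P) (F : (ι → κ) → R) (i : ι → κ) :
    ∑ σ : Perm ι with ∀ x ∉ P, σ x = x, ((Perm.sign σ : ℤ) : R) * F (i ∘ σ) = 0 := by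
  obtain ⟨x, hx, y, hy, hxy, hi⟩ := exists_ne_map_eq_of_card_lt_of_maps_to
    (t := (univ : Finset κ)) (by simpa using hP) (f := i) (fun _ _ ↦ mem_coe.2 (mem_univ _))
  have hcomp (σ : Perm ι) : i ∘ (swap x y * σ : Perm ι) = i ∘ σ := by
    rw [Perm.coe_mul, ← comp_assoc, comp_swap_eq_update, hi, update_eq_self, ← hi, update_eq_self]
  refine sum_involution (fun σ _ ↦ swap x y * σ) ?_ ?_ ?_ ?_
  · intro σ _
    rw [hcomp, Perm.sign_mul, Perm.sign_swap hxy]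
    simp
  · intro σ _ _ h
    exact hxy (swap_eq_one_iff.1 (mul_eq_right.1 h))
  · simp only [mem_filter, mem_univ, true_and]
    intro σ hσ z hz
    rw [Perm.mul_apply, hσ z hz, swap_apply_of_ne_of_ne]
    · rintro rfl; exact hz hx
    · rintro rfl; exact hz hy
  · simp

lemma exists_lt_and_apply_eq {ι : Type*} [LinearOrder ι] [WellFoundedLT ι] {τ τ' : Perm ι}
    (h : τ ≠ τ') : ∃ x y, x < y ∧ τ y = τ' x ∧ ∀ z < x, τ z = τ' z := by
  obtain ⟨x, hx, hmin⟩ := wellFounded_lt.has_min {x | τ x ≠ τ' x} (DFunLike.ne_iff.1 h)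
  have heq : ∀ z < x, τ z = τ' z := fun z hz ↦ not_not.1 fun hne ↦ hmin z hne hz
  obtain ⟨y, hy⟩ := τ.surjective (τ' x)
  refine ⟨x, y, lt_of_le_of_ne (not_lt.1 fun hyx ↦ ?_) ?_, hy, heq⟩
  · exact hyx.ne (τ'.injective ((heq y hyx).symm.trans hy))
  · rintro rfl
    exact hx hy

lemma toLex_lt_of_strictAntiOn {ι : Type*} [LinearOrder ι] [WellFoundedLT ι] {τ τ' : Perm ι}
    {P : Set ι} (hanti : StrictAntiOn τ P) (hP : ∀ x ∉ P, τ' x = τ x) (hne : τ' ≠ τ) :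
    toLex ⇑τ' < toLex ⇑τ := by
  obtain ⟨x, y, hxy, hy, heq⟩ := exists_lt_and_apply_eq hne.symm
  have hxP : x ∈ P := by
    by_contra h
    exact hxy.ne' (τ.injective (hy.trans (hP x h)))
  have hyP : y ∈ P := by
    by_contra h
    exact hxy.ne' (τ'.injective ((hP y h).trans hy))
  exact ⟨x, fun z hz ↦ (heq z hz).symm, hy.symm.trans_lt (hanti hxP hyP hxy)⟩

variable {ι : Type*} [LinearOrder ι]

section Nest

variable {τ : Perm ι} {B : Finset ι}

lemma lt_apply_of_strictAntiOn (hB : ∀ x ∈ B, x < τ x) (hanti : StrictAntiOn τ B) {x y : ι}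
    (hx : x ∈ B) (hy : y ∈ B) : x < τ y := by
  obtain h | h := le_or_gt x y
  · exact h.trans_lt (hB y hy)
  · exact (hB x hx).trans (hanti hy hx h)

lemma card_union_image_of_strictAntiOn (hB : ∀ x ∈ B, x < τ x) (hanti : StrictAntiOn τ B) :
    #(B ∪ B.image τ) = 2 * #B := by
  rw [card_union_of_disjoint, card_image_of_injective _ τ.injective, two_mul]
  refine disjoint_left.2 fun x hx hx' ↦ ?_
  obtain ⟨y, hy, rfl⟩ := mem_image.1 hx'
  exact (lt_apply_of_strictAntiOn hB hanti hx hy).false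

lemma strictAntiOn_image (hτ : Involutive τ) {s : Set ι} (hanti : StrictAntiOn τ s) :
    StrictAntiOn τ (τ '' s) := by
  rintro _ ⟨x, hx, rfl⟩ _ ⟨y, hy, rfl⟩ hxy
  rw [hτ, hτ]
  exact (hanti.lt_iff_gt hx hy).1 hxy

lemma strictAntiOn_union_image (hτ : Involutive τ) (hB : ∀ x ∈ B, x < τ x)
    (hanti : StrictAntiOn τ B) : StrictAntiOn τ ↑(B ∪ B.image τ) := by
  rw [coe_union, coe_image]
  rintro x (hx | hx) y (hy | hy) hxy
  · exact hanti hx hy hxy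
  · obtain ⟨z, hz, rfl⟩ := hy
    rw [hτ]
    exact lt_apply_of_strictAntiOn hB hanti hz hx
  · obtain ⟨z, hz, rfl⟩ := hx
    exact absurd (lt_apply_of_strictAntiOn hB hanti hy hz) hxy.not_gt
  · exact strictAntiOn_image hτ hanti hx hy hxy

lemma exists_stable_strictAntiOn (hτ : IsPerfectMatching τ) {A : Finset ι}
    (hanti : StrictAntiOn τ A) {l : ℕ} (hl : 2 * l < #A) :
    ∃ P : Finset ι, 2 * l < #P ∧ (∀ x ∈ P, τ x ∈ P) ∧ StrictAntiOn τ P := by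
  suffices h : ∃ B : Finset ι, l < #B ∧ (∀ x ∈ B, x < τ x) ∧ StrictAntiOn τ B by
    obtain ⟨B, hlB, hB, hBanti⟩ := h
    refine ⟨B ∪ B.image τ, ?_, fun x hx ↦ ?_, strictAntiOn_union_image hτ.involutive hB hBanti⟩
    · rw [card_union_image_of_strictAntiOn hB hBanti]
      lia
    · simp only [mem_union, mem_image] at hx ⊢
      obtain hx | ⟨y, hy, rfl⟩ := hx
      · exact .inr ⟨x, hx, rfl⟩
      · exact .inl (by rwa [hτ.involutive])
  obtain h | h := lt_or_ge l #{x ∈ A | x < τ x}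
  · exact ⟨_, h, fun x hx ↦ (mem_filter.1 hx).2, hanti.mono (coe_subset.2 (filter_subset _ _))⟩
  · refine ⟨{x ∈ A | ¬x < τ x}.image τ, ?_, fun x hx ↦ ?_, ?_⟩
    · have hcard := card_filter_add_card_filter_not (s := A) fun x ↦ x < τ x
      rw [card_image_of_injective _ τ.injective]
      lia
    · obtain ⟨y, hy, rfl⟩ := mem_image.1 hx
      rw [hτ.involutive]
      exact lt_of_le_of_ne (not_lt.1 (mem_filter.1 hy).2) (hτ.apply_ne y)
    · rw [coe_image]
      exact strictAntiOn_image hτ.involutive (hanti.mono (coe_subset.2 (filter_subset _ _)))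

end Nest

variable [Fintype ι]

/-- The sign with which the permutation `σ` of the positions reorients the arcs of `τ`: the number
of arcs whose ends are exchanged by `σ`, modulo two. -/
def arcSign (τ σ : Perm ι) : ℤˣ :=
  ∏ a : {x // x < τ x}, if σ (τ a) < σ a then -1 else 1

lemma arcSign_eq_sign_of_commute {τ σ : Perm ι} (hτ : IsPerfectMatching τ) (h : Commute σ τ) :
    arcSign τ σ = Perm.sign σ := by
  set e := hτ.arcEquiv
  have he (u : {x // x < τ x} × Bool) : e (u.1, !u.2) = τ (e u) := by
    obtain ⟨a, _ | _⟩ := u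
    exacts [rfl, (hτ.involutive _).symm]
  obtain ⟨π, s, hs⟩ := exists_perm_of_forall_apply_not (σ := e.symm.permCongr σ) fun a b ↦ by
    have hστ : σ (e (a, !b)) = e ((e.symm (σ (e (a, b)))).1, !(e.symm (σ (e (a, b)))).2) := by
      rw [he (a, b), he, e.apply_symm_apply]
      exact DFunLike.congr_fun h.eq _
    simp [hστ]
  rw [← Perm.sign_permCongr e.symm, sign_eq_prod_of_forall_apply hs]
  refine prod_congr rfl fun a _ ↦ ?_
  have hσe (b : Bool) : σ (e (a, b)) = e (π a, b ^^ s a) := by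
    rw [← hs, permCongr_apply, e.apply_symm_apply]
    simp
  have h0 : σ a = e (π a, s a) := (hσe false).trans (by simp)
  have h1 : σ (τ a) = e (π a, !s a) := (hσe true).trans (by simp)
  rw [h0, h1]
  cases s a
  · exact if_neg (π a).2.not_gt
  · exact if_pos (π a).2

variable {κ : Type*}

lemma matchTensor_comp {R : Type*} [CommRing R] {J : Matrix κ κ R} (hT : Jᵀ = -J) {τ : Perm ι}
    (hτ : IsPerfectMatching τ) (σ : Perm ι) (i : ι → κ) :
    matchTensor J τ (i ∘ σ) = ((arcSign τ σ : ℤ) : R) * matchTensor J (σ * τ * σ⁻¹) i := by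
  have hswap (p q : κ) : J p q = -J q p := congrFun₂ hT q p
  have hconj : matchTensor J (σ * τ * σ⁻¹) i =
      ∏ x, if σ x < σ (τ x) then J (i (σ x)) (i (σ (τ x))) else 1 := by
    rw [matchTensor, prod_filter, ← Equiv.prod_comp σ]
    simp
  rw [hconj, hτ.prod_eq_prod_arcs, matchTensor_eq_prod_arcs, arcSign]
  push_cast
  rw [← prod_mul_distrib]
  refine prod_congr rfl fun a _ ↦ ?_
  obtain h | h := (σ.injective.ne (hτ.apply_ne a)).lt_or_gt
  · simp [hτ.involutive _, h, h.not_gt, hswap (i (σ a))]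
  · simp [hτ.involutive _, h, h.not_gt]

/-- The perfect matchings without `l + 1` pairwise nested arcs. A nest of arcs is half of a
decreasing sequence of `τ`, whence the bound `2 * l`. -/
def nonnestingMatchings (ι : Type*) [LinearOrder ι] (l : ℕ) : Set (Perm ι) :=
  {τ | IsPerfectMatching τ ∧ ∀ A : Finset ι, StrictAntiOn τ A → #A ≤ 2 * l}

variable [Fintype κ] {K : Type*} [Field K] [CharZero K] {J : Matrix κ κ K}

/-- Antisymmetrising `matchTensor J τ` over the positions in `P` gives zero; the permutations
commuting with `τ` contribute positive multiples of `matchTensor J τ`, and all others contribute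
matchings which are lexicographically smaller, as `τ` is decreasing on `P`. -/
lemma matchTensor_mem_span_toLex_lt (hT : Jᵀ = -J) {τ : Perm ι} (hτ : IsPerfectMatching τ)
    {P : Finset ι} (hcard : Fintype.card κ < #P) (hstab : ∀ x ∈ P, τ x ∈ P)
    (hanti : StrictAntiOn τ P) :
    matchTensor J τ ∈ Submodule.span K (matchTensor J ''
      {τ' | IsPerfectMatching τ' ∧ toLex ⇑τ' < toLex ⇑τ}) := by
  classical
  set W := Submodule.span K (matchTensor J '' {τ' | IsPerfectMatching τ' ∧ toLex ⇑τ' < toLex ⇑τ})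
  set G : Finset (Perm ι) := {σ | ∀ x ∉ P, σ x = x} with hG
  have hsum : ∑ σ ∈ G with Commute σ τ, matchTensor J τ +
      ∑ σ ∈ G with ¬Commute σ τ, (((Perm.sign σ : ℤ) : K) * ((arcSign τ σ : ℤ) : K)) •
        matchTensor J (σ * τ * σ⁻¹) = 0 := by
    ext i
    rw [Pi.zero_apply, ← sum_sign_mul_comp_eq_zero hcard (matchTensor J τ) i, ← hG,
      ← sum_filter_add_sum_filter_not G (Commute · τ) fun σ ↦ _ * _, Pi.add_apply,
      Finset.sum_apply, Finset.sum_apply]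
    refine congrArg₂ _ (sum_congr rfl fun σ hσ ↦ ?_) (sum_congr rfl fun σ _ ↦ ?_)
    · have hcomm := (mem_filter.1 hσ).2
      rw [matchTensor_comp hT hτ, arcSign_eq_sign_of_commute hτ hcomm, hcomm.eq,
        mul_inv_cancel_right, ← mul_assoc, ← Int.cast_mul, Int.units_coe_mul_self, Int.cast_one,
        one_mul]
    · rw [matchTensor_comp hT hτ, Pi.smul_apply, smul_eq_mul, mul_assoc]
  have hne : (#{σ ∈ G | Commute σ τ} : K) ≠ 0 :=
    Nat.cast_ne_zero.2 (card_ne_zero.2 ⟨1, by simp [hG]⟩)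
  rw [sum_const, add_eq_zero_iff_eq_neg] at hsum
  rw [← Submodule.smul_mem_iff W hne, Nat.cast_smul_eq_nsmul, hsum]
  refine W.neg_mem (W.sum_mem fun σ hσ ↦ W.smul_mem _
    (Submodule.subset_span ⟨_, ⟨hτ.mul_mul_inv σ, ?_⟩, rfl⟩))
  obtain ⟨hσG, hcomm⟩ := mem_filter.1 hσ
  have hoff : ∀ x ∉ P, σ x = x := (mem_filter.1 hσG).2
  refine toLex_lt_of_strictAntiOn hanti (fun x hx ↦ ?_) fun h ↦ hcomm (mul_inv_eq_iff_eq_mul.1 h)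
  have hτx : τ x ∉ P := fun h ↦ hx (hτ.involutive x ▸ hstab _ h)
  rw [Perm.mul_apply, Perm.mul_apply, Perm.inv_eq_iff_eq.2 (hoff x hx).symm, hoff _ hτx]

theorem span_image_matchTensor_nonnestingMatchings {l : ℕ} (hκ : Fintype.card κ ≤ 2 * l)
    (hT : Jᵀ = -J) :
    Submodule.span K (matchTensor J '' nonnestingMatchings ι l) =
      Submodule.span K (matchTensor J '' {τ : Perm ι | IsPerfectMatching τ}) := by
  refine (Submodule.span_mono (Set.image_mono fun τ hτ ↦ hτ.1)).antisymm (Submodule.span_le.2 ?_)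
  rintro _ ⟨τ, hτ, rfl⟩
  induction h : toLex ⇑τ using WellFoundedLT.induction generalizing τ with
  | _ a ih =>
  subst h
  by_cases hnest : ∀ A : Finset ι, StrictAntiOn τ A → #A ≤ 2 * l
  · exact Submodule.subset_span ⟨τ, ⟨hτ, hnest⟩, rfl⟩
  push Not at hnest
  obtain ⟨A, hA, hlA⟩ := hnest
  obtain ⟨P, hlP, hstab, hP⟩ := exists_stable_strictAntiOn hτ hA hlA
  refine Submodule.span_le.2 ?_ (matchTensor_mem_span_toLex_lt hT hτ (hκ.trans_lt hlP) hstab hP)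
  rintro _ ⟨τ', ⟨hτ', hlt⟩, rfl⟩
  exact ih _ hlt τ' hτ' rfl

end Straightening

/-! ### Linear independence -/

section LinearIndependence

open Finset Function Equiv

lemma linearIndepOn_of_forall_lt {α β γ R : Type*} [Ring R] [LinearOrder γ] {v : α → β → R}
    {s : Set α} (ord : α → γ)
    (h : ∀ a ∈ s, ∃ x, IsUnit (v a x) ∧ ∀ b ∈ s, b ≠ a → v b x ≠ 0 → ord a < ord b) :
    LinearIndepOn R v s := by
  refine linearIndepOn_iff.2 fun f hf h0 ↦ by_contra fun hne ↦ ?_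
  obtain ⟨a, ha, hmax⟩ := f.support.exists_max_image ord (Finsupp.support_nonempty_iff.2 hne)
  obtain ⟨x, hunit, hlt⟩ := h a (hf ha)
  have hsum : ∑ b ∈ f.support, f b * v b x = 0 := by
    simpa [Finsupp.linearCombination_apply, Finsupp.sum] using congrFun h0 x
  rw [sum_eq_single_of_mem a ha] at hsum
  · exact Finsupp.mem_support_iff.1 ha (hunit.mul_left_eq_zero.1 hsum)
  · intro b hb hba
    by_contra hne0
    exact (hmax b hb).not_gt (hlt b (hf hb) hba (right_ne_zero_of_mul hne0))

section SymplecticForm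

variable {α R : Type*} [DecidableEq α] [CommRing R]

lemma isUnit_J_apply_swap (p : α ⊕ α) : IsUnit (Matrix.J α R p p.swap) := by
  cases p <;> simp [Matrix.J]

lemma eq_swap_of_J_apply_ne_zero {p q : α ⊕ α} (h : Matrix.J α R p q ≠ 0) : q = p.swap := by
  contrapose! h
  obtain a | a := p <;> obtain b | b := q <;> simp_all [Matrix.J, eq_comm]

variable {ι : Type*} [Fintype ι] [LinearOrder ι] {τ : Perm ι} {w : ι → α ⊕ α}

lemma isUnit_matchTensor_J_apply (hw : ∀ x, w (τ x) = (w x).swap) :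
    IsUnit (matchTensor (Matrix.J α R) τ w) := by
  refine (IsUnit.prod_iff).2 fun x _ ↦ ?_
  rw [hw]
  exact isUnit_J_apply_swap (w x)

lemma apply_eq_swap_of_matchTensor_J_apply_ne_zero (hτ : IsPerfectMatching τ)
    (h : matchTensor (Matrix.J α R) τ w ≠ 0) (x : ι) : w (τ x) = (w x).swap := by
  have harc {y : ι} (hy : y < τ y) : w (τ y) = (w y).swap :=
    eq_swap_of_J_apply_ne_zero (R := R) fun h0 ↦ h (prod_eq_zero (by simpa using hy) h0)
  obtain hx | hx := (hτ.apply_ne x).lt_or_gt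
  · have hτx := harc (y := τ x) (by rwa [hτ.involutive])
    rw [hτ.involutive] at hτx
    rw [hτx, Sum.swap_swap]
  · exact harc hx

end SymplecticForm

variable {ι : Type*} [LinearOrder ι] {τ τ' : Perm ι}

lemma toLex_lt_of_forall_lt [WellFoundedLT ι] {β : Type*} {w : ι → β} {f : β → β}
    (hf : Injective f) (hw : ∀ x, w (τ x) = f (w x)) (hw' : ∀ x, w (τ' x) = f (w x))
    (hmono : ∀ x y, x < y → w x = w y → τ x < τ y) (hne : τ' ≠ τ) : toLex ⇑τ < toLex ⇑τ' := by
  obtain ⟨x, y, hxy, hy, heq⟩ := exists_lt_and_apply_eq hne.symm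
  have hwxy : w x = w y := hf (by rw [← hw', ← hy, hw])
  exact ⟨x, heq, (hmono x y hxy hwxy).trans_eq hy⟩

lemma exists_word_of_coloring (hτ : IsPerfectMatching τ) {α : Type*} {c : {x // x < τ x} → α}
    (hc : ∀ a b, a < b → c a = c b → τ a < τ b) :
    ∃ w : ι → α ⊕ α, (∀ x, w (τ x) = (w x).swap) ∧ ∀ x y, x < y → w x = w y → τ x < τ y := by
  let e := hτ.arcEquiv
  let w (x : ι) : α ⊕ α := bif (e.symm x).2 then .inr (c (e.symm x).1) else .inl (c (e.symm x).1)
  have hleft (a : {x // x < τ x}) : w a = .inl (c a) := by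
    have ha : e.symm a = (a, false) := e.symm_apply_eq.2 rfl
    simp [w, ha]
  have hright (a : {x // x < τ x}) : w (τ a) = .inr (c a) := by
    have ha : e.symm (τ a) = (a, true) := e.symm_apply_eq.2 rfl
    simp [w, ha]
  have hcases (x : ι) : ∃ a : {x // x < τ x}, x = a ∨ x = τ a := by
    obtain ⟨⟨a, _ | _⟩, rfl⟩ := e.surjective x
    exacts [⟨a, .inl rfl⟩, ⟨a, .inr rfl⟩]
  refine ⟨w, fun x ↦ ?_, fun x y hxy h ↦ ?_⟩
  · obtain ⟨a, rfl | rfl⟩ := hcases x <;> simp [hleft, hright, hτ.involutive _]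
  · obtain ⟨a, rfl | rfl⟩ := hcases x <;> obtain ⟨b, rfl | rfl⟩ := hcases y <;>
      simp only [hleft, hright, Sum.inl.injEq, Sum.inr.injEq, reduceCtorEq] at h
    · exact hc a b hxy h
    · rw [hτ.involutive, hτ.involutive]
      refine lt_of_not_ge fun hba ↦ hxy.not_ge ?_
      obtain hab | hlt := hba.eq_or_lt
      · rw [hab]
      · exact (hc b a hlt h.symm).le

variable [Fintype ι]

open Classical in
/-- The length of a longest decreasing sequence of `f` ending at the position `x`. -/
def decLength (f : ι → ι) (x : ι) : ℕ :=
  ({s | StrictAntiOn f s ∧ IsGreatest s x} : Finset (Finset ι)).sup card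

lemma card_le_decLength {f : ι → ι} {s : Finset ι} {x : ι} (hs : StrictAntiOn f s)
    (hx : IsGreatest (s : Set ι) x) : #s ≤ decLength f x :=
  le_sup (f := card) (by simp [hs, hx])

lemma exists_card_eq_decLength (f : ι → ι) (x : ι) :
    ∃ s : Finset ι, StrictAntiOn f s ∧ IsGreatest (s : Set ι) x ∧ #s = decLength f x := by
  classical
  obtain ⟨s, hs, hcard⟩ := exists_mem_eq_sup
    ({s | StrictAntiOn f s ∧ IsGreatest s x} : Finset (Finset ι)) ⟨{x}, by simp⟩ card
  simp only [mem_filter, mem_univ, true_and] at hs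
  exact ⟨s, hs.1, hs.2, by rw [decLength, ← hcard]⟩

lemma decLength_lt_decLength {f : ι → ι} {x y : ι} (hxy : x < y) (hf : f y < f x) :
    decLength f x < decLength f y := by
  obtain ⟨s, hs, hx, hcard⟩ := exists_card_eq_decLength f x
  have hlt : ∀ z ∈ s, z < y := fun z hz ↦ (hx.2 hz).trans_lt hxy
  have hflt : ∀ z ∈ s, f y < f z := fun z hz ↦ hf.trans_le (hs.antitoneOn hz hx.1 (hx.2 hz))
  have hys : y ∉ s := fun h ↦ (hlt y h).false
  rw [← hcard, ← Nat.succ_le_iff, Nat.succ_eq_add_one, ← card_insert_of_notMem hys]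
  refine card_le_decLength ?_ ⟨by simp, ?_⟩
  · rw [coe_insert]
    rintro a (rfl | ha) b (rfl | hb) hab
    · exact (hab.false).elim
    · exact (hab.not_gt (hlt b hb)).elim
    · exact hflt a ha
    · exact hs ha hb hab
  · rw [coe_insert]
    rintro z (rfl | hz)
    exacts [le_rfl, (hlt z hz).le]

lemma one_le_decLength (f : ι → ι) (x : ι) : 1 ≤ decLength f x := by
  simpa using card_le_decLength (f := f) (s := {x}) (by simp) (by simp)

lemma decLength_le {l : ℕ} (hτ : τ ∈ nonnestingMatchings ι l) {x : ι} (hx : x < τ x) :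
    decLength τ x ≤ l := by
  obtain ⟨s, hs, hsx, hcard⟩ := exists_card_eq_decLength τ x
  have hlt : ∀ y ∈ s, y < τ y := fun y hy ↦
    ((hsx.2 hy).trans_lt hx).trans_le (hs.antitoneOn hy hsx.1 (hsx.2 hy))
  have hle := hτ.2 _ (strictAntiOn_union_image hτ.1.involutive hlt hs)
  rw [card_union_image_of_strictAntiOn hlt hs] at hle
  lia

lemma exists_coloring {ι : Type*} [Finite ι] [LinearOrder ι] {τ : Perm ι} {l : ℕ}
    (hτ : τ ∈ nonnestingMatchings ι l) :
    ∃ c : {x // x < τ x} → Fin l, ∀ a b, a < b → c a = c b → τ a < τ b := by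
  cases nonempty_fintype ι
  have hl (a : {x // x < τ x}) : decLength τ a - 1 < l := by
    have := one_le_decLength τ a
    have := decLength_le hτ a.2
    lia
  refine ⟨fun a ↦ ⟨decLength τ a - 1, hl a⟩, fun a b hab h ↦ lt_of_not_ge fun hba ↦ ?_⟩
  have hτba : τ b < τ a := hba.lt_of_ne (τ.injective.ne (Subtype.coe_injective.ne hab.ne'))
  have hlt := decLength_lt_decLength (f := τ) (x := a) (y := b) hab hτba
  have := one_le_decLength τ a
  have := Fin.mk.inj_iff.1 h
  lia

theorem linearIndepOn_matchTensor_nonnestingMatchings {R : Type*} [CommRing R] (l : ℕ) :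
    LinearIndepOn R (matchTensor (Matrix.J (Fin l) R)) (nonnestingMatchings ι l) := by
  refine linearIndepOn_of_forall_lt (fun τ ↦ toLex ⇑τ) fun τ hτ ↦ ?_
  obtain ⟨c, hc⟩ := exists_coloring hτ
  obtain ⟨w, hw, hmono⟩ := exists_word_of_coloring hτ.1 hc
  refine ⟨w, isUnit_matchTensor_J_apply hw, fun τ' hτ' hne h ↦ ?_⟩
  exact toLex_lt_of_forall_lt Sum.swap_leftInverse.injective hw
    (apply_eq_swap_of_matchTensor_J_apply_ne_zero hτ'.1 h) hmono hne

end LinearIndependence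

/-! ### Coordinates in the standard basis -/

section StandardForm

open Finset Function Equiv

lemma exists_Jmat_eq_submatrix (l : ℕ) :
    ∃ e : Fin (2 * l) ≃ Fin l ⊕ Fin l, Jmat l = (Matrix.J (Fin l) ℂ).submatrix e e := by
  let e := (finCongr (two_mul l)).trans finSumFinEquiv.symm
  refine ⟨e, ?_⟩
  ext i j
  obtain ⟨p, rfl⟩ := e.symm.surjective i
  obtain ⟨q, rfl⟩ := e.symm.surjective j
  rw [submatrix_apply, e.apply_symm_apply, e.apply_symm_apply]
  obtain a | a := p <;> obtain b | b := q <;>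
    simp only [Jmat, e, Matrix.J, Matrix.of_apply, fromBlocks_apply₁₁, fromBlocks_apply₁₂,
      fromBlocks_apply₂₁, fromBlocks_apply₂₂, Matrix.neg_apply, Matrix.zero_apply,
      Matrix.one_apply, Fin.ext_iff, symm_trans_apply, symm_symm, finCongr_symm, finCongr_apply,
      Fin.val_cast, finSumFinEquiv_apply_left, finSumFinEquiv_apply_right, Fin.val_castAdd,
      Fin.val_natAdd] <;> grind

lemma Jmat_transpose (l : ℕ) : (Jmat l)ᵀ = -Jmat l := by
  obtain ⟨e, he⟩ := exists_Jmat_eq_submatrix l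
  rw [he, transpose_submatrix, Matrix.J_transpose, submatrix_neg]
  rfl

lemma Jmat_mul_self (l : ℕ) : Jmat l * Jmat l = -1 := by
  obtain ⟨e, he⟩ := exists_Jmat_eq_submatrix l
  rw [he, submatrix_mul_equiv, Matrix.J_squared, submatrix_neg, Pi.neg_apply, Pi.neg_apply,
    submatrix_one_equiv]

lemma Jmat_conjTranspose (l : ℕ) : (Jmat l)ᴴ = -Jmat l := by
  obtain ⟨e, he⟩ := exists_Jmat_eq_submatrix l
  have hreal : (Jmat l).map star = Jmat l := by
    rw [he, ← submatrix_map]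
    exact congrArg (submatrix · e e) (Matrix.map_J _ (starRingEnd ℂ))
  rw [conjTranspose, transpose_map, hreal, Jmat_transpose]

lemma linearIndepOn_matchTensor_submatrix {ι κ κ' R : Type*} [Fintype ι] [LinearOrder ι]
    [CommRing R] {J : Matrix κ κ R} (e : κ' ≃ κ) {s : Set (Perm ι)}
    (h : LinearIndepOn R (matchTensor J) s) :
    LinearIndepOn R (matchTensor (J.submatrix e e)) s :=
  h.map_injOn (LinearMap.funLeft R R fun i : ι → κ' ↦ e ∘ i)
    (LinearMap.funLeft_injective_of_surjective _ _ _ e.surjective.comp_left).injOn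

lemma decLE_iff {N : ℕ} {π : Perm (Fin N)} {m : ℕ} :
    decLE π m ↔ ∀ A : Finset (Fin N), StrictAntiOn π A → #A ≤ m := by
  refine ⟨fun h A hA ↦ h #A _ (A.orderEmbOfFin rfl).strictMono fun i j hij ↦ ?_,
    fun h k f hf hanti ↦ ?_⟩
  · exact hA (A.orderEmbOfFin_mem rfl i) (A.orderEmbOfFin_mem rfl j)
      ((A.orderEmbOfFin rfl).strictMono hij)
  · have hmap : StrictAntiOn π ↑(univ.map ⟨f, hf.injective⟩) := by
      rw [coe_map, coe_univ, Set.image_univ]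
      rintro _ ⟨i, rfl⟩ _ ⟨j, rfl⟩ hij
      exact hanti (hf.lt_iff_lt.1 hij)
    simpa using h _ hmap

lemma setOf_decLE_eq_nonnestingMatchings (N l : ℕ) :
    {τ : Perm (Fin N) | τ * τ = 1 ∧ (∀ x, τ x ≠ x) ∧ decLE τ (2 * l)} =
      nonnestingMatchings (Fin N) l := by
  ext τ
  rw [Set.mem_ofPred_eq, ← and_assoc, decLE_iff]
  exact and_congr_left' ⟨fun h ↦ ⟨DFunLike.congr_fun h.1, h.2⟩,
    fun h ↦ ⟨Equiv.ext h.involutive, h.apply_ne⟩⟩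

end StandardForm

section Coordinates

open Finset Equiv

/-- The coefficient function of a tensor in the standard basis. -/
def tensorCoeff (N d : ℕ) : (⨂[ℂ] _ : Fin N, (Fin d → ℂ)) ≃ₗ[ℂ] ((Fin N → Fin d) → ℂ) :=
  (Basis.piTensorProduct fun _ ↦ Pi.basisFun ℂ (Fin d)).equivFun

lemma tensorCoeff_tprod {N d : ℕ} (u : Fin N → Fin d → ℂ) (k : Fin N → Fin d) :
    tensorCoeff N d (PiTensorProduct.tprod ℂ u) k = ∏ x, u x (k x) := by
  simp [tensorCoeff]

lemma tensorCoeff_symm_apply {N d : ℕ} (c : (Fin N → Fin d) → ℂ) :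
    (tensorCoeff N d).symm c =
      ∑ i, c i • PiTensorProduct.tprod ℂ fun x ↦ Pi.single (i x) (1 : ℂ) := by
  simp [tensorCoeff, Module.Basis.equivFun_symm_apply]

lemma tensorCoeff_comp_wTau (n l : ℕ) :
    tensorCoeff (2 * n) (2 * l) ∘ wTau n l = matchTensor (Jmat l) :=
  funext fun _ ↦ (LinearEquiv.eq_symm_apply _).1 (tensorCoeff_symm_apply _).symm

lemma tensorCoeff_tpow {N d : ℕ} (M : Matrix (Fin d) (Fin d) ℂ) (v : ⨂[ℂ] _ : Fin N, (Fin d → ℂ)) :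
    tensorCoeff N d (tpow N d M v) = kroneckerPow (Fin N) M *ᵥ tensorCoeff N d v := by
  suffices h : (tensorCoeff N d).toLinearMap ∘ₗ tpow N d M =
      (kroneckerPow (Fin N) M).mulVecLin ∘ₗ (tensorCoeff N d).toLinearMap from
    LinearMap.congr_fun h v
  refine PiTensorProduct.ext (MultilinearMap.ext fun u ↦ funext fun k ↦ ?_)
  simp only [LinearMap.compMultilinearMap_apply, LinearMap.comp_apply, LinearEquiv.coe_coe, tpow,
    PiTensorProduct.map_tprod, mulVecLin_apply, kroneckerPow_mulVec_apply, tensorCoeff_tprod,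
    toLin'_apply]
  simp only [mulVec_apply_eq_sum, ← prod_mul_distrib, prod_univ_sum, Fintype.piFinset_univ]

lemma linearIndepOn_wTau (n l : ℕ) :
    LinearIndepOn ℂ (wTau n l) (nonnestingMatchings (Fin (2 * n)) l) := by
  refine LinearIndependent.of_comp (tensorCoeff (2 * n) (2 * l)).toLinearMap ?_
  obtain ⟨e, he⟩ := exists_Jmat_eq_submatrix l
  have h := linearIndepOn_matchTensor_submatrix e
    (linearIndepOn_matchTensor_nonnestingMatchings (ι := Fin (2 * n)) (R := ℂ) l)
  rw [← he, ← tensorCoeff_comp_wTau] at h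
  exact h

lemma mem_span_wTau_iff {n l : ℕ} {v : ⨂[ℂ] _ : Fin (2 * n), (Fin (2 * l) → ℂ)} :
    v ∈ Submodule.span ℂ (wTau n l '' nonnestingMatchings (Fin (2 * n)) l) ↔
      tensorCoeff (2 * n) (2 * l) v ∈ symplecticInvariants (Fin (2 * n)) (Jmat l) := by
  rw [← span_image_matchTensor_eq_symplecticInvariants (Jmat_transpose l) (Jmat_mul_self l)
    (Jmat_conjTranspose l), ← span_image_matchTensor_nonnestingMatchings (Fintype.card_fin _).le
    (Jmat_transpose l), ← tensorCoeff_comp_wTau, Set.image_comp]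
  exact (Submodule.apply_mem_span_image_iff_mem_span (tensorCoeff _ _).injective).symm

lemma tensorCoeff_mem_symplecticInvariants_iff {N d : ℕ} {J : Matrix (Fin d) (Fin d) ℂ}
    {v : ⨂[ℂ] _ : Fin N, (Fin d → ℂ)} :
    tensorCoeff N d v ∈ symplecticInvariants (Fin N) J ↔
      ∀ U : unitaryGroup (Fin d) ℂ, (U : Matrix (Fin d) (Fin d) ℂ)ᵀ * J * U = J →
        tpow N d U v = v := by
  simp only [← (tensorCoeff N d).injective.eq_iff, tensorCoeff_tpow]
  exact ⟨fun h U ↦ h U U.2, fun h U hU ↦ h ⟨U, hU⟩⟩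

end Coordinates

/-- The family `{w_τ : τ fixed-point-free involution of {1,…,2n}, L⁻(τ) ≤ 2l}` is a basis
of the space `F_{2n}(Sp(2l))` of tensors fixed by `U^{⊗2n}` for every `U` in the compact
symplectic group `Sp(2l) = {U ∈ U(2l) : Uᵀ J U = J}`. -/
theorem wTau_basis_of_symplectic_invariants (n l : ℕ) :
    LinearIndependent ℂ
      (fun τ : {τ : Equiv.Perm (Fin (2 * n)) //
          τ * τ = 1 ∧ (∀ x, τ x ≠ x) ∧ decLE τ (2 * l)} => wTau n l τ.1) ∧
    (Submodule.span ℂ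
        (Set.range (fun τ : {τ : Equiv.Perm (Fin (2 * n)) //
          τ * τ = 1 ∧ (∀ x, τ x ≠ x) ∧ decLE τ (2 * l)} => wTau n l τ.1)) :
      Set (⨂[ℂ] _ : Fin (2 * n), (Fin (2 * l) → ℂ))) =
      {v | ∀ U : Matrix.unitaryGroup (Fin (2 * l)) ℂ,
        (U : Matrix (Fin (2 * l)) (Fin (2 * l)) ℂ)ᵀ * Jmat l *
            (U : Matrix (Fin (2 * l)) (Fin (2 * l)) ℂ) = Jmat l →
          tpow (2 * n) (2 * l) (U : Matrix (Fin (2 * l)) (Fin (2 * l)) ℂ) v = v} := by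
  have hindex := setOf_decLE_eq_nonnestingMatchings (2 * n) l
  refine ⟨?_, Set.ext fun v ↦ ?_⟩
  · have h := linearIndepOn_wTau n l
    rwa [← hindex] at h
  · have h := mem_span_wTau_iff (v := v)
    rw [← hindex, Set.image_eq_range] at h
    exact h.trans tensorCoeff_mem_symplecticInvariants_iff
end
end

section
/- Let l be a nonnegative integer and let a, b : {1,2,3,…} → ℕ be finitely supported functions with Σ_j j·(a_j + b_j) ≤ 2l. Then E_{U∈U(l)} ∏_j ( Tr(U^j) )^{a_j} · ( conj(Tr(U^j)) )^{b_j} = ∏_j j^{a_j} · a_j! if a = b, and = 0 otherwise; i.e., up to total weighted degree 2l the joint moments of the power-sum traces of a Haar-random unitary matrix coincide with those of independent complex Gaussians of variance j. -/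
open MeasureTheory Matrix

noncomputable section

instance (l : ℕ) : MeasurableSpace (Matrix.unitaryGroup (Fin l) ℂ) := borel _
instance (l : ℕ) : BorelSpace (Matrix.unitaryGroup (Fin l) ℂ) := ⟨rfl⟩

/-! The trace products are the traces `Tr(U^{⊗n} P_π)` of permutation operators `P_π` against the
tensor powers of `U`, with `π` of prescribed cycle type. By invariance of the measure, the matrices
of mixed moments of the entries of `U^{⊗n}` commute with every `V^{⊗n}`, hence, unitary matrices
being Zariski dense, with the tensor power of a generic matrix. Comparing coefficients, they are
combinations of permutation operators, with coefficients that can be read off when `n` is at most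
the dimension. The moment of the traces for `π` and `σ` is thus the number of `τ` with
`τ π τ⁻¹ = σ`: the order of a centralizer, `∏ j^{a_j} a_j!`, if `π` and `σ` are conjugate, and zero
otherwise. When the two degrees differ, multiplying `U` by a scalar shows that the moment vanishes;
when they agree, each is at most half the total degree. -/

section TensorPower

variable {ι α R : Type*} [Fintype α]

/-- The matrix of the tensor power `X ⊗ ⋯ ⊗ X`, with tensor factors indexed by `α`. -/
def tensorPow {m n : Type*} (α : Type*) [Fintype α] [CommSemiring R] (X : Matrix m n R) :
    Matrix (α → m) (α → n) R :=
  Matrix.of fun i j => ∏ t, X (i t) (j t)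

lemma tensorPow_apply {m n : Type*} [CommSemiring R] (X : Matrix m n R) (i : α → m) (j : α → n) :
    tensorPow α X i j = ∏ t, X (i t) (j t) :=
  rfl

lemma tensorPow_mul {m n o : Type*} [Fintype n] [DecidableEq α] [CommSemiring R]
    (X : Matrix m n R) (Y : Matrix n o R) :
    tensorPow α (X * Y) = tensorPow α X * tensorPow α Y := by
  ext i j
  simp only [tensorPow_apply, Matrix.mul_apply, Finset.prod_univ_sum, Fintype.piFinset_univ,
    Finset.prod_mul_distrib]

lemma tensorPow_one [DecidableEq ι] [CommSemiring R] : tensorPow α (1 : Matrix ι ι R) = 1 := by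
  ext i j
  simp only [tensorPow_apply, Matrix.one_apply, Finset.prod_ite_zero, Finset.prod_const_one,
    Finset.mem_univ, true_implies, funext_iff]

lemma tensorPow_conjTranspose {m n : Type*} [CommSemiring R] [StarRing R] (X : Matrix m n R) :
    tensorPow α Xᴴ = (tensorPow α X)ᴴ := by
  ext i j
  simp [tensorPow_apply, Matrix.conjTranspose_apply]

lemma tensorPow_comp_perm {m n : Type*} [CommSemiring R] (X : Matrix m n R) (τ : Equiv.Perm α)
    (i : α → m) (j : α → n) : tensorPow α X (i ∘ τ) (j ∘ τ) = tensorPow α X i j :=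
  Equiv.prod_comp τ fun t => X (i t) (j t)

variable [Fintype ι] [DecidableEq ι] [DecidableEq α] [CommRing R] [StarRing R]

lemma tensorPow_mem_unitaryGroup {U : Matrix ι ι R} (hU : U ∈ unitaryGroup ι R) :
    tensorPow α U ∈ unitaryGroup (α → ι) R := by
  rw [mem_unitaryGroup_iff, star_eq_conjTranspose, ← tensorPow_conjTranspose, ← tensorPow_mul,
    ← star_eq_conjTranspose, mem_unitaryGroup_iff.1 hU, tensorPow_one]

/-- The tensor power representation of the unitary group. -/
def tensorPowUnitary (α : Type*) [Fintype α] [DecidableEq α] :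
    unitaryGroup ι R →* unitaryGroup (α → ι) R where
  toFun U := ⟨tensorPow α U, tensorPow_mem_unitaryGroup U.2⟩
  map_one' := Subtype.ext tensorPow_one
  map_mul' _ _ := Subtype.ext (tensorPow_mul _ _)

lemma coe_tensorPowUnitary (U : Matrix.unitaryGroup ι R) :
    (tensorPowUnitary α U : Matrix (α → ι) (α → ι) R) = tensorPow α (U : Matrix ι ι R) :=
  rfl

lemma sum_tensorPow_mul_star_tensorPow {U : Matrix ι ι R} (hU : U ∈ Matrix.unitaryGroup ι R)
    (π σ : Equiv.Perm α) (i i' : α → ι) :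
    ∑ j : α → ι, tensorPow α U i (j ∘ π) * star (tensorPow α U i' (j ∘ σ)) =
      if i ∘ π.symm = i' ∘ σ.symm then 1 else 0 := by
  have moved (ρ : Equiv.Perm α) (k j : α → ι) :
      tensorPow α U k (j ∘ ρ) = tensorPow α U (k ∘ ρ.symm) j := by
    rw [← tensorPow_comp_perm U ρ.symm]
    simp [Function.comp_assoc]
  have orthonormal : tensorPow α U * (tensorPow α U)ᴴ = 1 :=
    mem_unitaryGroup_iff.1 (tensorPow_mem_unitaryGroup hU)
  simp only [moved, ← conjTranspose_apply, ← Matrix.mul_apply, orthonormal, Matrix.one_apply]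

end TensorPower

section ZariskiDensity

variable {ι : Type*} [Fintype ι] [DecidableEq ι]

lemma diagonal_mem_unitaryGroup_iff {R : Type*} [CommRing R] [StarRing R] {d : ι → R} :
    diagonal d ∈ unitaryGroup ι R ↔ ∀ k, d k ∈ unitary R := by
  simp only [mem_unitaryGroup_iff, star_eq_conjTranspose, diagonal_conjTranspose,
    diagonal_mul_diagonal, diagonal_eq_one, funext_iff, Unitary.mem_iff_self_mul_star,
    Pi.star_apply, Pi.one_apply]

lemma infinite_unitary_complex : (unitary ℂ : Set ℂ).Infinite := by
  have sphere_infinite : (Metric.sphere (0 : ℂ) 1).Infinite :=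
    (isPreconnected_sphere (by simp) 0 1).infinite_of_nontrivial
      ⟨1, by simp, -1, by simp, by norm_num⟩
  refine sphere_infinite.mono fun z hz => ?_
  simp_all [Unitary.mem_iff_self_mul_star, Complex.mul_conj']

lemma algHom_aeval_entries {R A m n : Type*} [CommSemiring R] [CommSemiring A] [Algebra R A]
    (φ : A →ₐ[R] R) (Q : Matrix m n A) (f : MvPolynomial (m × n) R) :
    φ (MvPolynomial.aeval (fun p => Q p.1 p.2) f) =
      MvPolynomial.eval (fun p => Q.map φ p.1 p.2) f := by
  rw [MvPolynomial.comp_aeval_apply, MvPolynomial.aeval_eq_eval]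
  rfl

lemma eval_entries_eq_zero_of_isHermitian {f : MvPolynomial (ι × ι) ℂ}
    (hf : ∀ U ∈ unitaryGroup ι ℂ, MvPolynomial.eval (fun p => U p.1 p.2) f = 0)
    {A : Matrix ι ι ℂ} (hA : A.IsHermitian) :
    MvPolynomial.eval (fun p => A p.1 p.2) f = 0 := by
  let V : Matrix ι ι ℂ := hA.eigenvectorUnitary
  let Q : Matrix ι ι (MvPolynomial ι ℂ) :=
    V.map MvPolynomial.C * diagonal MvPolynomial.X * (star V).map MvPolynomial.C
  let g : MvPolynomial ι ℂ := MvPolynomial.aeval (fun p => Q p.1 p.2) f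
  have eval_g (d : ι → ℂ) : MvPolynomial.eval d g =
      MvPolynomial.eval (fun p => (V * diagonal d * star V) p.1 p.2) f := by
    have hQ : Q.map (MvPolynomial.aeval d) = V * diagonal d * star V := by
      simp [Q, Matrix.map_mul, Matrix.map_map, Function.comp_def]
    rw [← hQ, ← algHom_aeval_entries, MvPolynomial.aeval_eq_eval]
  have g_eq_zero : g = 0 := by
    refine MvPolynomial.funext_set (fun _ => unitary ℂ) (fun _ => infinite_unitary_complex)
      fun d hd => ?_
    have hD : diagonal d ∈ unitaryGroup ι ℂ :=
      diagonal_mem_unitaryGroup_iff.2 fun k => hd k (Set.mem_univ k)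
    have hV := hA.eigenvectorUnitary.2
    rw [eval_g, map_zero, hf _ (mul_mem (mul_mem hV hD) (Unitary.star_mem hV))]
  have diagonalization : A = V * diagonal (RCLike.ofReal ∘ hA.eigenvalues) * star V :=
    hA.spectral_theorem
  rw [diagonalization, ← eval_g, g_eq_zero, map_zero]

lemma eq_zero_of_eval_unitaryGroup_eq_zero {f : MvPolynomial (ι × ι) ℂ}
    (hf : ∀ U ∈ unitaryGroup ι ℂ, MvPolynomial.eval (fun p => U p.1 p.2) f = 0) : f = 0 := by
  -- `f` vanishes on the line `A + t • B` for real `t`, where it is Hermitian, hence for `t = I`.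
  refine MvPolynomial.funext fun x => ?_
  let X : Matrix ι ι ℂ := Matrix.of fun i j => x (i, j)
  let A : Matrix ι ι ℂ := realPart X
  let B : Matrix ι ι ℂ := imaginaryPart X
  let Q : Matrix ι ι (Polynomial ℂ) :=
    A.map Polynomial.C + (Polynomial.X : Polynomial ℂ) • B.map Polynomial.C
  let g : Polynomial ℂ := MvPolynomial.aeval (fun p => Q p.1 p.2) f
  have eval_g (t : ℂ) : g.eval t = MvPolynomial.eval (fun p => (A + t • B) p.1 p.2) f := by
    have hQ : Q.map (Polynomial.aeval t) = A + t • B := by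
      ext i j
      simp [Q, mul_comm t]
    rw [← hQ, ← algHom_aeval_entries, Polynomial.coe_aeval_eq_eval]
  have g_eq_zero : g = 0 := by
    refine Polynomial.eq_zero_of_infinite_isRoot g
      ((Set.infinite_range_of_injective Complex.ofReal_injective).mono ?_)
    rintro _ ⟨t, rfl⟩
    have hA : A.IsHermitian := (realPart X).2
    have hB : B.IsHermitian := (imaginaryPart X).2
    have ht : IsSelfAdjoint (t : ℂ) := Complex.conj_ofReal t
    have hermitian : (A + (t : ℂ) • B).IsHermitian := hA.add (hB.smul ht)
    exact (eval_g t).trans (eval_entries_eq_zero_of_isHermitian hf hermitian)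
  have eval_I := eval_g Complex.I
  rw [show A + Complex.I • B = X from realPart_add_I_smul_imaginaryPart X, g_eq_zero] at eval_I
  simpa [X] using eval_I.symm

end ZariskiDensity

section Commutant

variable {ι α β : Type*} [Fintype α]

lemma sum_single_one_eq_iff_exists_perm {f g : α → β} :
    ∑ t, Finsupp.single (f t) (1 : ℕ) = ∑ t, Finsupp.single (g t) 1 ↔
      ∃ σ : Equiv.Perm α, f = g ∘ σ := by
  classical
  constructor
  · intro h
    have card_fiber (c : β) : Fintype.card {t // f t = c} = Fintype.card {t // g t = c} := by
      simpa [Finsupp.single_apply, Fintype.card_subtype] using DFunLike.congr_fun h c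
    let fiberEquiv (c : β) : {t // f t = c} ≃ {t // g t = c} :=
      Fintype.equivOfCardEq (card_fiber c)
    exact ⟨Equiv.ofFiberEquiv fiberEquiv,
      funext fun t => (Equiv.ofFiberEquiv_map fiberEquiv t).symm⟩
  · rintro ⟨σ, rfl⟩
    exact Equiv.sum_comp σ fun t => Finsupp.single (g t) 1

open Classical in
lemma coeff_sum_single_one_prod_X {R : Type*} [CommSemiring R] (f g : α → β) :
    MvPolynomial.coeff (∑ t, Finsupp.single (g t) 1) (∏ t, MvPolynomial.X (R := R) (f t)) =
      if ∃ σ : Equiv.Perm α, f = g ∘ σ then 1 else 0 := by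
  have monomial_eq : ∏ t, MvPolynomial.X (R := R) (f t) =
      MvPolynomial.monomial (∑ t, Finsupp.single (f t) 1) 1 :=
    (MvPolynomial.monomial_sum_one _ _).symm
  simp only [monomial_eq, MvPolynomial.coeff_monomial, sum_single_one_eq_iff_exists_perm]

variable [Fintype ι] [DecidableEq ι] [DecidableEq α] {A : Matrix (α → ι) (α → ι) ℂ}

lemma commute_map_C_tensorPow_mvPolynomialX
    (hA : ∀ U ∈ unitaryGroup ι ℂ, Commute A (tensorPow α U)) :
    Commute (A.map MvPolynomial.C) (tensorPow α (mvPolynomialX ι ι ℂ)) := by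
  ext1 i j
  refine sub_eq_zero.1 (eq_zero_of_eval_unitaryGroup_eq_zero fun U hU => ?_)
  have eval_generic (i j : α → ι) : MvPolynomial.eval (fun p => U p.1 p.2)
      (tensorPow α (mvPolynomialX ι ι ℂ) i j) = tensorPow α U i j := by
    simp [tensorPow_apply]
  have commute_apply := congrFun₂ (hA U hU).eq i j
  simp only [Matrix.mul_apply] at commute_apply
  simp [Matrix.mul_apply, eval_generic, commute_apply]

lemma apply_eq_sum_perm_of_commute_tensorPow
    (hA : ∀ U ∈ unitaryGroup ι ℂ, Commute A (tensorPow α U))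
    {e : α → ι} (he : Function.Injective e) (i j : α → ι) :
    A i j = ∑ τ : Equiv.Perm α, if i = j ∘ τ then A (e ∘ τ) e else 0 := by
  classical
  have pair_eq_iff (k l : α → ι) (τ : Equiv.Perm α) :
      (fun t => (k t, l t)) = (fun t => (j t, e t)) ∘ τ ↔ k = j ∘ τ ∧ l = e ∘ τ := by
    simp [funext_iff, forall_and]
  have perm_injective : Function.Injective fun τ : Equiv.Perm α => e ∘ τ :=
    he.comp_left.comp DFunLike.coe_injective
  have row_match (k : α → ι) : (∃ τ : Equiv.Perm α, k = j ∘ τ ∧ e = e ∘ τ) ↔ k = j := by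
    refine ⟨?_, fun h => ⟨1, h, rfl⟩⟩
    rintro ⟨τ, rfl, h⟩
    rw [← perm_injective (a₁ := 1) h, Equiv.Perm.coe_one, Function.comp_id]
  -- Since `e` is injective, only the term `A i j` of `(A * X^{⊗α}) i e` contains `∏ X (j t, e t)`.
  have coeff_eq := congrArg (MvPolynomial.coeff (∑ t, Finsupp.single (j t, e t) 1))
    (congrFun₂ (commute_map_C_tensorPow_mvPolynomialX hA).eq i e)
  simp only [Matrix.mul_apply, Matrix.map_apply, tensorPow_apply, mvPolynomialX_apply,
    MvPolynomial.coeff_sum, MvPolynomial.coeff_C_mul,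
    mul_comm _ (MvPolynomial.C _), coeff_sum_single_one_prod_X, pair_eq_iff, row_match, mul_ite,
    mul_one, mul_zero, Finset.sum_ite_eq', Finset.mem_univ, if_true] at coeff_eq
  rw [coeff_eq, ← Finset.sum_filter, ← Finset.sum_filter,
    ← Finset.sum_image (f := fun k => A k e) perm_injective.injOn]
  refine Finset.sum_congr ?_ fun _ _ => rfl
  ext k
  simp [eq_comm]

end Commutant

section CoefficientMoments

variable {G m : Type*} [Fintype m] [DecidableEq m] [MeasurableSpace G]

/-- The matrix of the mixed moments `∫ ρ(g)_{i i'} conj(ρ(g)_{j j'})` of the coefficients of a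
unitary matrix-valued function `ρ`, as a function of the row indices `i` and `j`. -/
def coeffMoment (μ : Measure G) (ρ : G → unitaryGroup m ℂ) (i' j' : m) : Matrix m m ℂ :=
  Matrix.of fun i j => ∫ g, (ρ g : Matrix m m ℂ) i i' * star ((ρ g : Matrix m m ℂ) j j') ∂μ

lemma integrable_coeff_mul_star [TopologicalSpace G] [OpensMeasurableSpace G] (μ : Measure G)
    [IsFiniteMeasure μ] {ρ : G → unitaryGroup m ℂ} (hρ : Continuous ρ) (i i' j j' : m) :
    Integrable (fun g => (ρ g : Matrix m m ℂ) i i' * star ((ρ g : Matrix m m ℂ) j j')) μ := by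
  have continuous_coeff (i j : m) : Continuous fun g => (ρ g : Matrix m m ℂ) i j :=
    (continuous_subtype_val.comp hρ).matrix_elem i j
  refine .of_bound ((continuous_coeff i i').mul (continuous_coeff j j').star).aestronglyMeasurable
    1 (.of_forall fun g => ?_)
  rw [norm_mul, norm_star]
  exact mul_le_one₀ (entry_norm_bound_of_unitary (ρ g).2 _ _) (norm_nonneg _)
    (entry_norm_bound_of_unitary (ρ g).2 _ _)

lemma commute_coeffMoment [Group G] [TopologicalSpace G] [ContinuousMul G] [BorelSpace G]
    (μ : Measure G) [μ.IsMulLeftInvariant] [IsFiniteMeasure μ] {ρ : G →* unitaryGroup m ℂ}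
    (hρ : Continuous ρ) (i' j' : m) (h : G) :
    Commute (coeffMoment μ ρ i' j') (ρ h : Matrix m m ℂ) := by
  ext1 i k
  let F : G → ℂ := fun g =>
    (ρ g : Matrix m m ℂ) i i' * star ((ρ (h⁻¹ * g) : Matrix m m ℂ) k j')
  have integral_F : (coeffMoment μ ρ i' j' * (ρ h : Matrix m m ℂ)) i k = ∫ g, F g ∂μ := by
    simp only [Matrix.mul_apply, coeffMoment, Matrix.of_apply, ← integral_mul_const]
    rw [← integral_finsetSum _ fun k _ => (integrable_coeff_mul_star μ hρ _ _ _ _).mul_const _]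
    congr with g
    simp [F, Matrix.mul_apply, Matrix.star_apply, Finset.mul_sum, mul_comm, mul_left_comm]
  have integral_F_mul :
      ((ρ h : Matrix m m ℂ) * coeffMoment μ ρ i' j') i k = ∫ g, F (h * g) ∂μ := by
    simp only [Matrix.mul_apply, coeffMoment, Matrix.of_apply, ← integral_const_mul]
    rw [← integral_finsetSum _ fun k _ => (integrable_coeff_mul_star μ hρ _ _ _ _).const_mul _]
    congr with g
    simp only [F, map_mul]
    simp [Matrix.mul_apply, Finset.sum_mul, mul_assoc]
  rw [integral_F, integral_F_mul, integral_mul_left_eq_self]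

end CoefficientMoments

section PermTrace

variable {ι α β R : Type*} [Fintype ι] [Fintype α] [DecidableEq α]

/-- The trace of the tensor power `X ⊗ ⋯ ⊗ X` composed with the operator permuting the tensor
factors by `π`. -/
def permTrace [CommSemiring R] (X : Matrix ι ι R) (π : Equiv.Perm α) : R :=
  ∑ i : α → ι, ∏ t, X (i t) (i (π t))

variable [DecidableEq ι]

lemma continuous_tensorPowUnitary :
    Continuous (tensorPowUnitary α : unitaryGroup ι ℂ → unitaryGroup (α → ι) ℂ) := by
  refine Continuous.subtype_mk (continuous_matrix fun i j => ?_) _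
  exact continuous_finsetProd _ fun t _ => continuous_subtype_val.matrix_elem _ _

variable [MeasurableSpace (unitaryGroup ι ℂ)] [BorelSpace (unitaryGroup ι ℂ)]
  (μ : Measure (unitaryGroup ι ℂ)) [IsProbabilityMeasure μ]

lemma integral_permTrace_mul_star_eq_sum_coeffMoment (π σ : Equiv.Perm α) :
    ∫ U, permTrace (U : Matrix ι ι ℂ) π * star (permTrace (U : Matrix ι ι ℂ) σ) ∂μ =
      ∑ i, ∑ j, coeffMoment μ (tensorPowUnitary α) (i ∘ π) (j ∘ σ) i j := by
  have integrable (i i' j j' : α → ι) :=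
    integrable_coeff_mul_star μ continuous_tensorPowUnitary i i' j j'
  simp only [coeffMoment, Matrix.of_apply]
  simp only [← integral_finsetSum _ fun _ _ => integrable _ _ _ _]
  rw [← integral_finsetSum _ fun _ _ => integrable_finsetSum _ fun _ _ => integrable _ _ _ _]
  congr with U
  simp only [permTrace, star_sum, Finset.sum_mul_sum]
  rfl

lemma sum_coeffMoment_comp_perm (π σ : Equiv.Perm α) (i i' : α → ι) :
    ∑ j, coeffMoment μ (tensorPowUnitary α) (j ∘ π) (j ∘ σ) i i' =
      if i ∘ π.symm = i' ∘ σ.symm then 1 else 0 := by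
  simp only [coeffMoment, Matrix.of_apply]
  rw [← integral_finsetSum _ fun _ _ =>
    integrable_coeff_mul_star μ continuous_tensorPowUnitary _ _ _ _]
  simp only [coe_tensorPowUnitary]
  simp only [sum_tensorPow_mul_star_tensorPow (Subtype.prop _)]
  simp

lemma integral_permTrace_mul_star [μ.IsMulLeftInvariant] (π σ : Equiv.Perm α)
    (hcard : Fintype.card α ≤ Fintype.card ι) :
    ∫ U, permTrace (U : Matrix ι ι ℂ) π * star (permTrace (U : Matrix ι ι ℂ) σ) ∂μ =
      Finset.card {τ : Equiv.Perm α | τ * π * τ⁻¹ = σ} := by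
  obtain ⟨e⟩ := Function.Embedding.nonempty_of_card_le hcard
  let M (i' j' : α → ι) := coeffMoment μ (tensorPowUnitary α) i' j'
  have M_apply (i' j' i j : α → ι) :
      M i' j' i j = ∑ τ : Equiv.Perm α, if i = j ∘ τ then M i' j' (e ∘ τ) e else 0 :=
    apply_eq_sum_perm_of_commute_tensorPow
      (fun U hU => commute_coeffMoment μ continuous_tensorPowUnitary i' j' ⟨U, hU⟩) e.injective i j
  have conj_iff (τ : Equiv.Perm α) :
      (e ∘ τ) ∘ (τ * π).symm = e ∘ σ.symm ↔ τ * π * τ⁻¹ = σ := by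
    calc
      _ ↔ e ∘ (τ * (τ * π)⁻¹ : Equiv.Perm α) = e ∘ (σ⁻¹ : Equiv.Perm α) := Iff.rfl
      _ ↔ τ * (τ * π)⁻¹ = σ⁻¹ := by rw [e.injective.comp_left.eq_iff, DFunLike.coe_fn_eq]
      _ ↔ τ * π * τ⁻¹ = σ := by rw [← _root_.inv_inj, inv_inv, _root_.mul_inv_rev, inv_inv]
  calc
    _ = ∑ i, ∑ j, M (i ∘ π) (j ∘ σ) i j := integral_permTrace_mul_star_eq_sum_coeffMoment μ π σ
    _ = ∑ i, ∑ j, ∑ τ : Equiv.Perm α,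
          if i = j ∘ τ then M (i ∘ π) (j ∘ σ) (e ∘ τ) e else 0 := by
      simp only [← M_apply]
    _ = ∑ τ : Equiv.Perm α, ∑ j, ∑ i,
          if i = j ∘ τ then M (i ∘ π) (j ∘ σ) (e ∘ τ) e else 0 := by
      rw [Finset.sum_comm]
      simp only [Finset.sum_comm (γ := Equiv.Perm α)]
    _ = ∑ τ : Equiv.Perm α, ∑ j, M (j ∘ (τ * π : Equiv.Perm α)) (j ∘ σ) (e ∘ τ) e := by
      simp [Function.comp_assoc]
    _ = ∑ τ : Equiv.Perm α, if τ * π * τ⁻¹ = σ then 1 else 0 := by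
      simp only [M, sum_coeffMoment_comp_perm, conj_iff]
    _ = _ := by rw [Finset.sum_boole]

end PermTrace

section CycleType

variable {ι α β R : Type*}

lemma sumCongr_one_eq_extendDomain [DecidablePred (· ∈ Set.range (Sum.inl : α → α ⊕ β))]
    (σ : Equiv.Perm α) :
    Equiv.Perm.sumCongr σ (1 : Equiv.Perm β) =
      σ.extendDomain (Equiv.ofInjective Sum.inl Sum.inl_injective) := by
  ext (x | x)
  · exact (σ.extendDomain_apply_image (Equiv.ofInjective Sum.inl Sum.inl_injective) x).symm
  · simp [Equiv.Perm.extendDomain_apply_not_subtype]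

lemma one_sumCongr_eq_extendDomain [DecidablePred (· ∈ Set.range (Sum.inr : β → α ⊕ β))]
    (τ : Equiv.Perm β) :
    Equiv.Perm.sumCongr (1 : Equiv.Perm α) τ =
      τ.extendDomain (Equiv.ofInjective Sum.inr Sum.inr_injective) := by
  ext (x | x)
  · simp [Equiv.Perm.extendDomain_apply_not_subtype]
  · exact (τ.extendDomain_apply_image (Equiv.ofInjective Sum.inr Sum.inr_injective) x).symm

variable [Fintype ι] [CommSemiring R] [Fintype α] [DecidableEq α] [Fintype β] [DecidableEq β]

lemma permTrace_sumCongr (X : Matrix ι ι R) (σ : Equiv.Perm α) (τ : Equiv.Perm β) :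
    permTrace X (Equiv.Perm.sumCongr σ τ) = permTrace X σ * permTrace X τ := by
  simp only [permTrace, Finset.sum_mul_sum, ← Finset.sum_product',
    Finset.univ_product_univ]
  refine Fintype.sum_equiv (Equiv.sumArrowEquivProdArrow α β ι) _ _ fun i => ?_
  simp [Fintype.prod_sum_type, Equiv.sumArrowEquivProdArrow]

lemma permTrace_permCongr (X : Matrix ι ι R) (f : α ≃ β) (π : Equiv.Perm α) :
    permTrace X (f.permCongr π) = permTrace X π := by
  refine Fintype.sum_equiv (f.symm.arrowCongr (Equiv.refl ι)) _ _ fun i => ?_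
  refine Fintype.prod_equiv f.symm _ _ fun t => ?_
  simp [Equiv.arrowCongr]

lemma pow_succ_apply_eq_sum_prod [DecidableEq ι] (X : Matrix ι ι R) (n : ℕ) (i j : ι) :
    (X ^ (n + 1)) i j = ∑ v : Fin n → ι, ∏ t : Fin (n + 1),
      X (Fin.cons (α := fun _ => ι) i v t) (Fin.snoc (α := fun _ => ι) v j t) := by
  induction n generalizing i with
  | zero => simp [Fin.snoc]
  | succ n ih =>
    rw [pow_succ', Matrix.mul_apply,
      ← (Fin.consEquiv fun _ : Fin (n + 1) => ι).sum_comp, Fintype.sum_prod_type]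
    refine Finset.sum_congr rfl fun k _ => ?_
    rw [ih, Finset.mul_sum]
    refine Finset.sum_congr rfl fun v _ => ?_
    simp [Fin.prod_univ_succ (n := n + 1), Fin.consEquiv, ← Fin.cons_snoc_eq_snoc_cons]

lemma permTrace_finRotate [DecidableEq ι] (X : Matrix ι ι R) (n : ℕ) :
    permTrace X (finRotate (n + 1)) = Matrix.trace (X ^ (n + 1)) := by
  rw [permTrace, ← (Fin.consEquiv fun _ : Fin (n + 1) => ι).sum_comp, Fintype.sum_prod_type]
  simp [Matrix.trace, pow_succ_apply_eq_sum_prod, Fin.consEquiv, Fin.snoc_eq_cons_rotate]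

lemma cycleType_permCongr (f : α ≃ β) (π : Equiv.Perm α) :
    (f.permCongr π).cycleType = π.cycleType := by
  rw [← Equiv.Perm.cycleType_extendDomain
    (f.trans (Equiv.subtypeUnivEquiv (p := fun _ : β => True) fun _ => trivial).symm)]
  congr 1

lemma cycleType_sumCongr (σ : Equiv.Perm α) (τ : Equiv.Perm β) :
    (Equiv.Perm.sumCongr σ τ).cycleType = σ.cycleType + τ.cycleType := by
  have disjoint : Equiv.Perm.Disjoint (Equiv.Perm.sumCongr σ (1 : Equiv.Perm β))
      (Equiv.Perm.sumCongr (1 : Equiv.Perm α) τ) := by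
    rintro (x | x) <;> simp
  calc
    _ = (Equiv.Perm.sumCongr σ 1 * Equiv.Perm.sumCongr 1 τ).cycleType := by
      rw [Equiv.Perm.sumCongr_mul, mul_one, one_mul]
    _ = σ.cycleType + τ.cycleType := by
      rw [disjoint.cycleType_mul, sumCongr_one_eq_extendDomain, one_sumCongr_eq_extendDomain,
        Equiv.Perm.cycleType_extendDomain, Equiv.Perm.cycleType_extendDomain]

lemma parts_partition_eq_cycleType_add_replicate (π : Equiv.Perm α) :
    π.partition.parts =
      π.cycleType + Multiset.replicate (Fintype.card α - π.cycleType.sum) 1 := by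
  rw [Equiv.Perm.parts_partition, Equiv.Perm.sum_cycleType]

lemma parts_partition_permCongr (f : α ≃ β) (π : Equiv.Perm α) :
    (f.permCongr π).partition.parts = π.partition.parts := by
  simp only [parts_partition_eq_cycleType_add_replicate, cycleType_permCongr, Fintype.card_congr f]

lemma parts_partition_sumCongr (σ : Equiv.Perm α) (τ : Equiv.Perm β) :
    (Equiv.Perm.sumCongr σ τ).partition.parts = σ.partition.parts + τ.partition.parts := by
  have hσ : σ.cycleType.sum ≤ Fintype.card α := σ.sum_cycleType ▸ Finset.card_le_univ _
  have hτ : τ.cycleType.sum ≤ Fintype.card β := τ.sum_cycleType ▸ Finset.card_le_univ _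
  have card_fixed : Fintype.card (α ⊕ β) - (σ.cycleType + τ.cycleType).sum =
      (Fintype.card α - σ.cycleType.sum) + (Fintype.card β - τ.cycleType.sum) := by
    rw [Fintype.card_sum, Multiset.sum_add]
    omega
  simp only [parts_partition_eq_cycleType_add_replicate, cycleType_sumCongr, card_fixed,
    Multiset.replicate_add, add_add_add_comm]

lemma parts_partition_finRotate (n : ℕ) : (finRotate (n + 1)).partition.parts = {n + 1} := by
  rw [parts_partition_eq_cycleType_add_replicate]
  cases n with
  | zero => simp [Subsingleton.elim (finRotate 1) 1]
  | succ n => simp [cycleType_finRotate]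

end CycleType

section Centralizer

variable {α : Type*} [DecidableEq α]

lemma prod_count_factorial_add_of_disjoint {s t : Multiset α} (h : Disjoint s t) :
    ∏ x ∈ (s + t).toFinset, ((s + t).count x).factorial =
      (∏ x ∈ s.toFinset, (s.count x).factorial) * ∏ x ∈ t.toFinset, (t.count x).factorial := by
  rw [Multiset.toFinset_add, Finset.prod_union (Multiset.disjoint_toFinset.2 h)]
  congr 1 <;> refine Finset.prod_congr rfl fun x hx => ?_
  · rw [Multiset.count_add, Multiset.count_eq_zero.2
      (Multiset.disjoint_left.1 h (Multiset.mem_toFinset.1 hx)), add_zero]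
  · rw [Multiset.count_add, Multiset.count_eq_zero.2
      (Multiset.disjoint_right.1 h (Multiset.mem_toFinset.1 hx)), zero_add]

variable [Fintype α]

lemma nat_card_centralizer_eq_prod_parts (π : Equiv.Perm α) :
    Nat.card (Subgroup.centralizer {π}) = π.partition.parts.prod *
      ∏ j ∈ π.partition.parts.toFinset, (π.partition.parts.count j).factorial := by
  set r := Fintype.card α - π.cycleType.sum with hr
  have disjoint : Disjoint π.cycleType (Multiset.replicate r 1) := by
    refine Multiset.disjoint_left.2 fun {j} hj hj' => ?_
    exact (Equiv.Perm.one_lt_of_mem_cycleType hj).ne' (Multiset.eq_of_mem_replicate hj')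
  have fixed_factorial :
      ∏ j ∈ (Multiset.replicate r 1).toFinset, ((Multiset.replicate r 1).count j).factorial =
        r.factorial := by
    rcases eq_or_ne r 0 with h | h <;> simp [h, Multiset.toFinset_replicate]
  rw [Equiv.Perm.nat_card_centralizer, parts_partition_eq_cycleType_add_replicate, ← hr,
    prod_count_factorial_add_of_disjoint disjoint, fixed_factorial, Multiset.prod_add,
    Multiset.prod_replicate, one_pow]
  ring

lemma nat_card_conj_eq_of_isConj {G : Type*} [Group G] {g h : G} (hgh : IsConj g h) :
    Nat.card {x : G // x * g * x⁻¹ = h} = Nat.card (Subgroup.centralizer {g}) := by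
  obtain ⟨c, rfl⟩ := isConj_iff.1 hgh
  refine Nat.card_congr (Equiv.subtypeEquiv (Equiv.mulLeft c⁻¹) fun x => ?_)
  rw [Subgroup.mem_centralizer_singleton_iff, Equiv.coe_mulLeft, mul_inv_eq_iff_eq_mul,
    ← mul_right_inj c⁻¹]
  simp only [mul_assoc, inv_mul_cancel_left]

lemma isConj_iff_parts_partition_eq {π σ : Equiv.Perm α} :
    IsConj π σ ↔ π.partition.parts = σ.partition.parts :=
  Equiv.Perm.partition_eq_of_isConj.trans Nat.Partition.ext_iff

lemma card_conj_eq_ite_parts (π σ : Equiv.Perm α) :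
    Finset.card {τ : Equiv.Perm α | τ * π * τ⁻¹ = σ} =
      if π.partition.parts = σ.partition.parts then
        π.partition.parts.prod *
          ∏ j ∈ π.partition.parts.toFinset, (π.partition.parts.count j).factorial
      else 0 := by
  split_ifs with h
  · rw [← nat_card_centralizer_eq_prod_parts,
      ← nat_card_conj_eq_of_isConj (isConj_iff_parts_partition_eq.2 h), Nat.card_eq_fintype_card,
      Fintype.card_subtype]
  · rw [Finset.card_eq_zero, Finset.filter_eq_empty_iff]
    exact fun τ _ hτ => h (isConj_iff_parts_partition_eq.1 (isConj_iff.2 ⟨τ, hτ⟩))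

end Centralizer

section TracePowProd

variable {ι R : Type*} [Fintype ι] [DecidableEq ι]

/-- The power sum `p_m` of the eigenvalues of `X`, namely `∏ Tr(X^j)` over the parts `j` of `m`. -/
def tracePowProd [CommSemiring R] (X : Matrix ι ι R) (m : Multiset ℕ) : R :=
  (m.map fun j => Matrix.trace (X ^ j)).prod

lemma tracePowProd_smul [CommSemiring R] (c : R) (X : Matrix ι ι R) (m : Multiset ℕ) :
    tracePowProd (c • X) m = c ^ m.sum * tracePowProd X m := by
  have prod_pow : (m.map fun j => c ^ j).prod = c ^ m.sum := by
    induction m using Multiset.induction with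
    | empty => simp
    | cons j m ih => simp [ih, pow_add]
  simp [tracePowProd, smul_pow, Matrix.trace_smul, prod_pow]

lemma tracePowProd_toMultiset [CommSemiring R] (X : Matrix ι ι R) (a : ℕ →₀ ℕ) {s : Finset ℕ}
    (hs : a.support ⊆ s) :
    tracePowProd X (Finsupp.toMultiset a) = ∏ j ∈ s, Matrix.trace (X ^ j) ^ a j := by
  rw [tracePowProd, Finsupp.toMultiset_map, Finsupp.prod_toMultiset,
    Finsupp.prod_mapDomain_index (by simp) (by simp [pow_add])]
  exact Finsupp.prod_of_support_subset a hs _ (by simp)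

lemma sum_toMultiset_eq_sum_mul (a : ℕ →₀ ℕ) {s : Finset ℕ} (hs : a.support ⊆ s) :
    (Finsupp.toMultiset a).sum = ∑ j ∈ s, j * a j := by
  rw [Finsupp.sum_toMultiset, Finsupp.sum_of_support_subset a hs _ (by simp)]
  simp [mul_comm]

lemma sum_union_support_mul_add (a b : ℕ →₀ ℕ) :
    ∑ j ∈ a.support ∪ b.support, j * (a j + b j) =
      ∑ j ∈ a.support, j * a j + ∑ j ∈ b.support, j * b j := by
  simp only [mul_add, Finset.sum_add_distrib]
  rw [← sum_toMultiset_eq_sum_mul a Finset.subset_union_left,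
    ← sum_toMultiset_eq_sum_mul b Finset.subset_union_right,
    sum_toMultiset_eq_sum_mul a subset_rfl, sum_toMultiset_eq_sum_mul b subset_rfl]

lemma exists_perm_permTrace_eq_tracePowProd (R ι : Type*) [CommSemiring R] [Fintype ι]
    [DecidableEq ι] {m : Multiset ℕ} (hm : 0 ∉ m) :
    ∃ π : Equiv.Perm (Fin m.sum), π.partition.parts = m ∧
      ∀ X : Matrix ι ι R, permTrace X π = tracePowProd X m := by
  induction m using Multiset.induction with
  | empty =>
    refine ⟨(finCongr Multiset.sum_zero.symm).permCongr 1, ?_, fun X => ?_⟩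
    · rw [parts_partition_permCongr, parts_partition_eq_cycleType_add_replicate]
      simp
    · rw [permTrace_permCongr]
      simp [permTrace, tracePowProd]
  | cons c m ih =>
    obtain ⟨π, hπ, hX⟩ := ih fun h => hm (Multiset.mem_cons_of_mem h)
    obtain ⟨n, rfl⟩ := Nat.exists_eq_succ_of_ne_zero
      (fun h : c = 0 => hm (h ▸ Multiset.mem_cons_self _ _))
    let f : Fin (n + 1) ⊕ Fin m.sum ≃ Fin ((n + 1) ::ₘ m).sum :=
      finSumFinEquiv.trans (finCongr (Multiset.sum_cons _ _).symm)
    refine ⟨f.permCongr (Equiv.Perm.sumCongr (finRotate (n + 1)) π), ?_, fun X => ?_⟩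
    · rw [parts_partition_permCongr, parts_partition_sumCongr, parts_partition_finRotate, hπ,
        Multiset.singleton_add]
    · rw [permTrace_permCongr, permTrace_sumCongr, permTrace_finRotate, hX, tracePowProd,
        tracePowProd, Multiset.map_cons, Multiset.prod_cons]

end TracePowProd

section Moments

lemma exists_mem_unitary_pow_mul_star_pow_eq_neg_one {p q : ℕ} (hpq : p ≠ q) :
    ∃ z ∈ unitary ℂ, z ^ p * star z ^ q = -1 := by
  have hne : (p : ℂ) - q ≠ 0 := sub_ne_zero.2 (Nat.cast_injective.ne hpq)
  let θ : ℝ := Real.pi / ((p : ℝ) - q)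
  have star_exp : star (Complex.exp (θ * Complex.I)) = Complex.exp (-(θ * Complex.I)) := by
    simp [← Complex.exp_conj]
  refine ⟨Complex.exp (θ * Complex.I), ?_, ?_⟩
  · rw [Unitary.mem_iff_self_mul_star, star_exp, ← Complex.exp_add, add_neg_cancel,
      Complex.exp_zero]
  · rw [star_exp, ← Complex.exp_nat_mul, ← Complex.exp_nat_mul, ← Complex.exp_add,
      ← Complex.exp_pi_mul_I]
    congr 1
    push_cast [θ]
    field_simp
    ring

variable {ι : Type*} [Fintype ι] [DecidableEq ι] [MeasurableSpace (unitaryGroup ι ℂ)]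
  [BorelSpace (unitaryGroup ι ℂ)] (μ : Measure (unitaryGroup ι ℂ)) [μ.IsMulLeftInvariant]

lemma integral_tracePowProd_mul_star_of_sum_ne {m n : Multiset ℕ} (h : m.sum ≠ n.sum) :
    ∫ U, tracePowProd (U : Matrix ι ι ℂ) m * star (tracePowProd (U : Matrix ι ι ℂ) n) ∂μ = 0 := by
  obtain ⟨z, hz, hpow⟩ := exists_mem_unitary_pow_mul_star_pow_eq_neg_one h
  refine integral_eq_zero_of_mul_left_eq_neg (g := (⟨z, hz⟩ : unitary ℂ) • 1) fun U => ?_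
  have coe_mul : (((⟨z, hz⟩ : unitary ℂ) • 1 * U : unitaryGroup ι ℂ) : Matrix ι ι ℂ) =
      z • (U : Matrix ι ι ℂ) := by
    change (z • (1 : Matrix ι ι ℂ)) * (U : Matrix ι ι ℂ) = _
    rw [Matrix.smul_mul, Matrix.one_mul]
  rw [coe_mul, tracePowProd_smul, tracePowProd_smul, star_mul', star_pow, mul_mul_mul_comm, hpow,
    neg_one_mul]

lemma integral_tracePowProd_mul_star_of_sum_eq [IsProbabilityMeasure μ] {m n : Multiset ℕ}
    (hm : 0 ∉ m) (hn : 0 ∉ n) (hsum : m.sum = n.sum) (hcard : m.sum ≤ Fintype.card ι) :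
    ∫ U, tracePowProd (U : Matrix ι ι ℂ) m * star (tracePowProd (U : Matrix ι ι ℂ) n) ∂μ =
      if m = n then ((m.prod * ∏ j ∈ m.toFinset, (m.count j).factorial : ℕ) : ℂ) else 0 := by
  obtain ⟨π, hπ, permTrace_π⟩ := exists_perm_permTrace_eq_tracePowProd ℂ ι hm
  obtain ⟨σ, hσ, permTrace_σ⟩ : ∃ σ : Equiv.Perm (Fin m.sum), σ.partition.parts = n ∧
      ∀ X : Matrix ι ι ℂ, permTrace X σ = tracePowProd X n :=
    hsum ▸ exists_perm_permTrace_eq_tracePowProd ℂ ι hn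
  simp only [← permTrace_π, ← permTrace_σ]
  rw [integral_permTrace_mul_star μ π σ (by rwa [Fintype.card_fin]), card_conj_eq_ite_parts, hπ,
    hσ, Nat.cast_ite, Nat.cast_zero]

theorem unitary_trace_power_moments_general {a b : ℕ →₀ ℕ} (ha : a 0 = 0) (hb : b 0 = 0)
    (hdeg : min (∑ j ∈ a.support, j * a j) (∑ j ∈ b.support, j * b j) ≤ Fintype.card ι)
    [IsProbabilityMeasure μ] :
    ∫ U, ∏ j ∈ a.support ∪ b.support,
        (Matrix.trace ((U : Matrix ι ι ℂ) ^ j)) ^ (a j) *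
          ((starRingEnd ℂ) (Matrix.trace ((U : Matrix ι ι ℂ) ^ j))) ^ (b j) ∂μ =
      if a = b then ∏ j ∈ a.support, (j : ℂ) ^ (a j) * (Nat.factorial (a j) : ℂ) else 0 := by
  have integrand_eq (U : unitaryGroup ι ℂ) :
      ∏ j ∈ a.support ∪ b.support, (Matrix.trace ((U : Matrix ι ι ℂ) ^ j)) ^ (a j) *
          ((starRingEnd ℂ) (Matrix.trace ((U : Matrix ι ι ℂ) ^ j))) ^ (b j) =
        tracePowProd (U : Matrix ι ι ℂ) (Finsupp.toMultiset a) *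
          star (tracePowProd (U : Matrix ι ι ℂ) (Finsupp.toMultiset b)) := by
    rw [tracePowProd_toMultiset _ a (s := a.support ∪ b.support) Finset.subset_union_left,
      tracePowProd_toMultiset _ b (s := a.support ∪ b.support) Finset.subset_union_right]
    simp [Finset.prod_mul_distrib]
  simp only [integrand_eq]
  rw [← sum_toMultiset_eq_sum_mul a subset_rfl, ← sum_toMultiset_eq_sum_mul b subset_rfl] at hdeg
  by_cases hsum : (Finsupp.toMultiset a).sum = (Finsupp.toMultiset b).sum
  · rw [← hsum, min_self] at hdeg
    rw [integral_tracePowProd_mul_star_of_sum_eq μ (by simp [Finsupp.mem_toMultiset, ha])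
      (by simp [Finsupp.mem_toMultiset, hb]) hsum hdeg]
    simp [Finsupp.toMultiset_eq_iff, Finset.prod_multiset_count, Finset.prod_mul_distrib]
  · rw [integral_tracePowProd_mul_star_of_sum_ne μ hsum, if_neg fun h => hsum (by rw [h])]

end Moments

/-- For finitely supported `a, b : {1,2,3,…} → ℕ` with `Σ_j j·(a_j + b_j) ≤ 2l`:
`E_{U∈U(l)} ∏_j Tr(U^j)^{a_j} · conj(Tr(U^j))^{b_j}` equals `∏_j j^{a_j}·a_j!` if `a = b`,
and `0` otherwise. -/
theorem unitary_trace_power_moments (l : ℕ) (a b : ℕ →₀ ℕ)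
    (ha : a 0 = 0) (hb : b 0 = 0)
    (hdeg : ∑ j ∈ a.support ∪ b.support, j * (a j + b j) ≤ 2 * l)
    (μ : Measure (Matrix.unitaryGroup (Fin l) ℂ))
    [μ.IsHaarMeasure] [IsProbabilityMeasure μ] :
    ∫ U, ∏ j ∈ a.support ∪ b.support,
        (Matrix.trace ((U : Matrix (Fin l) (Fin l) ℂ) ^ j)) ^ (a j) *
          ((starRingEnd ℂ) (Matrix.trace ((U : Matrix (Fin l) (Fin l) ℂ) ^ j))) ^ (b j)
        ∂μ =
      if a = b then ∏ j ∈ a.support, (j : ℂ) ^ (a j) * (Nat.factorial (a j) : ℂ)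
      else 0 := by
  rw [sum_union_support_mul_add] at hdeg
  exact unitary_trace_power_moments_general μ ha hb (by rw [Fintype.card_fin]; omega)
end
end
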